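/- arXiv:2112.04458 — 7 statements merged into one kernel-verified Lean document; each statement's English description precedes it below -/
import Mathlib

section
/- Let G be a group, let H ≤ G be a subgroup that is 2-boundedly acyclic, and let ω be a bounded homogeneous 2-cocycle on G. Then ω vanishes identically on H: ω(g, h) = 0 for all g, h ∈ H. -/
/-- A bounded 2-cocycle on `G` with trivial real coefficients. -/
def IsBounded2Cocycle {G : Type*} [Group G] (ω : G → G → ℝ) : Prop :=
  (∃ C : ℝ, ∀ g h : G, |ω g h| ≤ C) ∧
    ∀ g₁ g₂ g₃ : G, ω g₂ g₃ - ω (g₁ * g₂) g₃ + ω g₁ (g₂ * g₃) - ω g₁ g₂ = 0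

/-- `ω` is the coboundary of a bounded real-valued function. -/
def IsCoboundaryOfBounded {G : Type*} [Group G] (ω : G → G → ℝ) : Prop :=
  ∃ φ : G → ℝ, (∃ C : ℝ, ∀ g : G, |φ g| ≤ C) ∧
    ∀ g h : G, ω g h = φ h - φ (g * h) + φ g

/-- A group is 2-boundedly acyclic if `H²_b(G; ℝ) = 0`, i.e. every bounded 2-cocycle is
the coboundary of a bounded function. -/
def Is2BoundedlyAcyclic (G : Type*) [Group G] : Prop :=
  ∀ ω : G → G → ℝ, IsBounded2Cocycle ω → IsCoboundaryOfBounded ω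

/-- A 2-cocycle is homogeneous if it vanishes on powers of a single element. -/
def IsHomogeneous {G : Type*} [Group G] (ω : G → G → ℝ) : Prop :=
  ∀ (g : G) (i j : ℤ), ω (g ^ i) (g ^ j) = 0

/-!
If `ω` restricted to `H` is the coboundary of a bounded function `φ`, then homogeneity says that
`φ` is additive on every cyclic subgroup of `H`. A bounded homomorphism to `ℝ` is zero, so `φ`
vanishes, and with it `ω` on `H`.
-/

theorem addMonoidHom_eq_zero_of_abs_le {A R : Type*} [AddMonoid A] [AddCommGroup R]
    [LinearOrder R] [IsOrderedAddMonoid R] [Archimedean R] {f : A →+ R} {C : R}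
    (hf : ∀ a, |f a| ≤ C) : f = 0 := by
  ext a
  by_contra ha
  obtain ⟨n, hn⟩ := exists_lt_nsmul (abs_pos.mpr ha) C
  have hle : n • |f a| ≤ C := by
    rw [← abs_nsmul, ← map_nsmul]
    exact hf (n • a)
  exact hn.not_ge hle

section Comap

variable {G K : Type*} [Group G] [Group K] {ω : G → G → ℝ}

theorem IsBounded2Cocycle.comap (hω : IsBounded2Cocycle ω) (f : K →* G) :
    IsBounded2Cocycle fun x y => ω (f x) (f y) := by
  obtain ⟨⟨C, hC⟩, hcocycle⟩ := hω
  refine ⟨⟨C, fun x y => hC (f x) (f y)⟩, fun x y z => ?_⟩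
  simpa only [map_mul] using hcocycle (f x) (f y) (f z)

theorem IsHomogeneous.comap (hω : IsHomogeneous ω) (f : K →* G) :
    IsHomogeneous fun x y => ω (f x) (f y) := fun x i j => by
  simpa only [map_zpow] using hω (f x) i j

end Comap

section Coboundary

variable {G : Type*} [Group G]

theorem IsHomogeneous.primitive_eq_zero_of_abs_le {φ : G → ℝ} {C : ℝ}
    (hhom : IsHomogeneous fun g h => φ h - φ (g * h) + φ g) (hφ : ∀ g, |φ g| ≤ C) :
    φ = 0 := by
  funext g
  have map_add (i j : ℤ) : φ (g ^ (i + j)) = φ (g ^ i) + φ (g ^ j) := by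
    rw [zpow_add]
    linarith [hhom g i j]
  let φOnPowers : ℤ →+ ℝ := AddMonoidHom.mk' (fun n => φ (g ^ n)) map_add
  have hzero : φOnPowers = 0 := addMonoidHom_eq_zero_of_abs_le fun n => hφ (g ^ n)
  simpa [φOnPowers] using DFunLike.congr_fun hzero 1

theorem IsHomogeneous.eq_zero_of_isCoboundaryOfBounded {ω : G → G → ℝ} (hhom : IsHomogeneous ω)
    (hω : IsCoboundaryOfBounded ω) : ω = 0 := by
  obtain ⟨φ, ⟨C, hC⟩, hφ⟩ := hω
  obtain rfl : ω = fun g h => φ h - φ (g * h) + φ g := funext₂ hφ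
  have hzero : φ = 0 := hhom.primitive_eq_zero_of_abs_le hC
  funext g h
  simp [hzero]

end Coboundary

/-- A bounded homogeneous 2-cocycle on `G` vanishes identically on any
2-boundedly acyclic subgroup. -/
theorem homogeneous_cocycle_vanishes_on_acyclic_subgroup {G : Type*} [Group G]
    (H : Subgroup G) (hH : Is2BoundedlyAcyclic ↥H) (ω : G → G → ℝ)
    (hb : IsBounded2Cocycle ω) (hh : IsHomogeneous ω) :
    ∀ g h : G, g ∈ H → h ∈ H → ω g h = 0 := by
  intro g h hgH hhH
  have hcob : IsCoboundaryOfBounded fun x y : H => ω x y := hH _ (hb.comap H.subtype)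
  have hzero : (fun x y : H => ω x y) = 0 :=
    (hh.comap H.subtype).eq_zero_of_isCoboundaryOfBounded hcob
  exact congr_fun₂ hzero ⟨g, hgH⟩ ⟨h, hhH⟩
end

section
/- Let G be a group and suppose that for all f, g ∈ G the subgroup ⟨f, g⟩ generated by f and g is 2-boundedly acyclic. Then G is 2-boundedly acyclic. -/
/-!
If `φ` is bounded and `|2 φ(x) - φ(x²)| ≤ C` for all `x`, then `S = sup |φ|` satisfies
`2 S ≤ C + S`, so `S ≤ C`. Hence a bounded primitive of a cocycle `ω` on any group is bounded by
the same constant as `ω`, and (taking `C = 0`) it is unique. By uniqueness, the bounded primitives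
of `ω` on the various acyclic subgroups agree on intersections and glue to a function on `G`. The
constant does not depend on the subgroup, so this function is bounded, and it is a primitive because
the coboundary equation at `(f, g)` can be checked in one subgroup containing `f` and `g`.
-/

theorem norm_le_of_norm_two_smul_sub_comp_le {X E : Type*} [SeminormedAddCommGroup E]
    [NormedSpace ℝ E] {φ : X → E} {s : X → X} {C : ℝ} (hφ : ∃ B, ∀ x, ‖φ x‖ ≤ B)
    (hC : ∀ x, ‖(2 : ℝ) • φ x - φ (s x)‖ ≤ C) (x : X) : ‖φ x‖ ≤ C := by
  obtain ⟨B, hB⟩ := hφ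
  have : Nonempty X := ⟨x⟩
  have le_sup (y : X) : ‖φ y‖ ≤ ⨆ z, ‖φ z‖ :=
    le_ciSup ⟨B, Set.forall_mem_range.2 hB⟩ y
  have two_mul_le (y : X) : 2 * ‖φ y‖ ≤ C + ⨆ z, ‖φ z‖ := calc
    2 * ‖φ y‖ = ‖(2 : ℝ) • φ y‖ := by simp [norm_smul]
    _ ≤ ‖(2 : ℝ) • φ y - φ (s y)‖ + ‖φ (s y)‖ := norm_le_norm_sub_add _ _
    _ ≤ C + ⨆ z, ‖φ z‖ := add_le_add (hC y) (le_sup (s y))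
  have sup_le : ⨆ z, ‖φ z‖ ≤ (C + ⨆ z, ‖φ z‖) / 2 :=
    ciSup_le fun y => by linarith [two_mul_le y]
  linarith [le_sup x]

/-- `φ` is a bounded primitive of `ω`: a bounded function with `ω = δφ`. The existential
`∃ φ, IsBoundedPrimitive ω φ` unfolds to `IsCoboundaryOfBounded ω`; naming the witness allows
primitives on different subgroups to be compared. -/
def IsBoundedPrimitive {G : Type*} [Group G] (ω : G → G → ℝ) (φ : G → ℝ) : Prop :=
  (∃ C : ℝ, ∀ g : G, |φ g| ≤ C) ∧ ∀ g h : G, ω g h = φ h - φ (g * h) + φ g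

section

variable {G H : Type*} [Group G] [Group H] {ω ω' : G → G → ℝ} {φ φ' : G → ℝ}

theorem IsBounded2Cocycle.comp_hom (hω : IsBounded2Cocycle ω) (f : H →* G) :
    IsBounded2Cocycle fun a b => ω (f a) (f b) := by
  obtain ⟨⟨C, hC⟩, hcocycle⟩ := hω
  refine ⟨⟨C, fun _ _ => hC _ _⟩, fun a b c => ?_⟩
  simpa only [map_mul] using hcocycle (f a) (f b) (f c)

namespace IsBoundedPrimitive

theorem comp_hom (hφ : IsBoundedPrimitive ω φ) (f : H →* G) :
    IsBoundedPrimitive (fun a b => ω (f a) (f b)) (φ ∘ f) := by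
  obtain ⟨⟨C, hC⟩, hδ⟩ := hφ
  refine ⟨⟨C, fun _ => hC _⟩, fun a b => ?_⟩
  simpa only [Function.comp_apply, map_mul] using hδ (f a) (f b)

theorem sub (hφ : IsBoundedPrimitive ω φ) (hφ' : IsBoundedPrimitive ω' φ') :
    IsBoundedPrimitive (ω - ω') (φ - φ') := by
  obtain ⟨⟨C, hC⟩, hδ⟩ := hφ
  obtain ⟨⟨C', hC'⟩, hδ'⟩ := hφ'
  refine ⟨⟨C + C', fun g => (abs_sub _ _).trans (add_le_add (hC g) (hC' g))⟩, fun g h => ?_⟩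
  simp only [Pi.sub_apply, hδ, hδ']
  ring

theorem abs_le (hφ : IsBoundedPrimitive ω φ) {C : ℝ} (hC : ∀ g, |ω g g| ≤ C) (g : G) :
    |φ g| ≤ C := by
  refine norm_le_of_norm_two_smul_sub_comp_le (φ := φ) (s := fun x => x * x) hφ.1 (fun x => ?_) g
  have h_diag : (2 : ℝ) • φ x - φ (x * x) = ω x x := by
    rw [hφ.2, smul_eq_mul]
    ring
  rw [h_diag]
  exact hC x

theorem unique (hφ : IsBoundedPrimitive ω φ) (hφ' : IsBoundedPrimitive ω φ') : φ = φ' := by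
  ext g
  have h_abs : |(φ - φ') g| ≤ 0 := (hφ.sub hφ').abs_le (by simp) g
  exact sub_eq_zero.1 (abs_nonpos_iff.1 h_abs)

theorem apply_eq_of_mem {K L : Subgroup G} {χ : K → ℝ} {ψ : L → ℝ}
    (hχ : IsBoundedPrimitive (fun a b : K => ω a b) χ)
    (hψ : IsBoundedPrimitive (fun a b : L => ω a b) ψ) {x : G} (hK : x ∈ K) (hL : x ∈ L) :
    χ ⟨x, hK⟩ = ψ ⟨x, hL⟩ := by
  have h_inf : χ ∘ Subgroup.inclusion inf_le_left = ψ ∘ Subgroup.inclusion inf_le_right :=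
    (hχ.comp_hom (Subgroup.inclusion (inf_le_left : K ⊓ L ≤ K))).unique
      (hψ.comp_hom (Subgroup.inclusion (inf_le_right : K ⊓ L ≤ L)))
  exact congrFun h_inf ⟨x, hK, hL⟩

end IsBoundedPrimitive

end

theorem two_generated_acyclic_implies_acyclic_general {G : Type*} [Group G]
    (h : ∀ f g : G, ∃ K : Subgroup G, f ∈ K ∧ g ∈ K ∧ Is2BoundedlyAcyclic K) :
    Is2BoundedlyAcyclic G := by
  intro ω hω
  choose K left_mem right_mem acyclic using h
  have exists_primitive (f g : G) :
      ∃ φ : K f g → ℝ, IsBoundedPrimitive (fun a b : K f g => ω a b) φ :=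
    acyclic f g _ (hω.comp_hom (K f g).subtype)
  choose φ hφ using exists_primitive
  let ψ (x : G) : ℝ := φ x x ⟨x, left_mem x x⟩
  have ψ_eq (f g : G) (x : K f g) : ψ x = φ f g x :=
    (hφ x x).apply_eq_of_mem (hφ f g) (left_mem x x) x.2
  obtain ⟨C, hC⟩ := hω.1
  refine ⟨ψ, ⟨C, fun x => (hφ x x).abs_le (fun _ => hC _ _) _⟩, fun f g => ?_⟩
  have h_local := (hφ f g).2 ⟨f, left_mem f g⟩ ⟨g, right_mem f g⟩
  simpa only [← ψ_eq, Subgroup.coe_mul] using h_local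

/-- If every 2-generated subgroup of `G` is 2-boundedly acyclic, then
so is `G`. -/
theorem two_generated_acyclic_implies_acyclic {G : Type*} [Group G]
    (h : ∀ f g : G, Is2BoundedlyAcyclic ↥(Subgroup.closure {f, g})) :
    Is2BoundedlyAcyclic G := by
  exact two_generated_acyclic_implies_acyclic_general fun f g =>
    ⟨_, Subgroup.subset_closure (by simp), Subgroup.subset_closure (by simp), h f g⟩
end

section
/- Let G be a group that is the union of a directed family of subgroups {G_i} (directed: any two members of the family are both contained in a third member), each of which is 2-boundedly acyclic. Then G is 2-boundedly acyclic. -/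
/-!
A bounded primitive `φ` of a cocycle `ω` satisfies `2 φ(g) - φ(g²) = ω(g, g)`, so `sup |φ|` is at
most `sup |ω|`; in particular bounded primitives are unique. Hence the bounded primitives of `ω` on
two subgroups agree on the intersection, and the primitives on all the subgroups glue to a function
on `G` with the same uniform bound. The coboundary equation only involves two elements at a time, so
it can be checked inside one member of the family.
-/

/-- `φ` is a bounded 1-cochain whose coboundary is `ω`: a witness of `IsCoboundaryOfBounded ω`, with
coefficients in an arbitrary seminormed group. -/
structure IsBoundedPrimitive_s8 {M E : Type*} [Mul M] [SeminormedAddCommGroup E]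
    (φ : M → E) (ω : M → M → E) : Prop where
  bounded : ∃ C : ℝ, ∀ g, ‖φ g‖ ≤ C
  eq_coboundary : ∀ g h, ω g h = φ h - φ (g * h) + φ g

namespace IsBoundedPrimitive_s8

section Seminormed

variable {M N E : Type*} [Mul M] [Mul N] [SeminormedAddCommGroup E]
  {φ ψ : M → E} {ω η : M → M → E}

theorem sub_s8 (hφ : IsBoundedPrimitive_s8 φ ω) (hψ : IsBoundedPrimitive_s8 ψ η) :
    IsBoundedPrimitive_s8 (φ - ψ) (ω - η) where
  bounded := by
    obtain ⟨A, hA⟩ := hφ.bounded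
    obtain ⟨B, hB⟩ := hψ.bounded
    exact ⟨A + B, fun g => norm_sub_le_of_le (hA g) (hB g)⟩
  eq_coboundary g h := by
    simp only [Pi.sub_apply, hφ.eq_coboundary, hψ.eq_coboundary]
    abel

theorem comp_mulHom {F : Type*} [FunLike F N M] [MulHomClass F N M]
    (hφ : IsBoundedPrimitive_s8 φ ω) (f : F) :
    IsBoundedPrimitive_s8 (φ ∘ f) fun g h => ω (f g) (f h) where
  bounded := hφ.bounded.imp fun _ hC g => hC (f g)
  eq_coboundary g h := by
    simp only [Function.comp_apply, map_mul, hφ.eq_coboundary]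

theorem norm_le [NormedSpace ℝ E] (hφ : IsBoundedPrimitive_s8 φ ω) {C : ℝ}
    (hC : ∀ g, ‖ω g g‖ ≤ C) (g : M) : ‖φ g‖ ≤ C := by
  obtain ⟨B, hB⟩ := hφ.bounded
  have hbdd : BddAbove (Set.range fun x => ‖φ x‖) := ⟨B, Set.forall_mem_range.2 hB⟩
  have hle_sup (x : M) : ‖φ x‖ ≤ ⨆ y, ‖φ y‖ := le_ciSup hbdd x
  have htwice (x : M) : 2 * ‖φ x‖ ≤ C + ⨆ y, ‖φ y‖ :=
    calc
      2 * ‖φ x‖ = ‖(2 : ℝ) • φ x‖ := by rw [norm_smul, Real.norm_two]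
      _ = ‖ω x x + φ (x * x)‖ := by rw [hφ.eq_coboundary, two_smul]; congr 1; abel
      _ ≤ C + ⨆ y, ‖φ y‖ := norm_add_le_of_le (hC x) (hle_sup (x * x))
  have : Nonempty M := ⟨g⟩
  have hsup : ⨆ x, ‖φ x‖ ≤ (C + ⨆ y, ‖φ y‖) / 2 :=
    ciSup_le fun x => by linarith [htwice x]
  linarith [hle_sup g]

end Seminormed

section Normed

variable {E : Type*} [NormedAddCommGroup E] [NormedSpace ℝ E]

theorem unique_s8 {M : Type*} [Mul M] {φ ψ : M → E} {ω : M → M → E}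
    (hφ : IsBoundedPrimitive_s8 φ ω) (hψ : IsBoundedPrimitive_s8 ψ ω) : φ = ψ := by
  funext g
  have hnorm : ‖(φ - ψ) g‖ ≤ 0 := (hφ.sub_s8 hψ).norm_le (fun x => by simp) g
  exact sub_eq_zero.1 (norm_le_zero_iff.1 hnorm)

variable {G : Type*} [Group G] {ω : G → G → E}

theorem eq_of_mem_of_mem {H K : Subgroup G} {φ : H → E} {ψ : K → E}
    (hφ : IsBoundedPrimitive_s8 φ fun g h => ω g h) (hψ : IsBoundedPrimitive_s8 ψ fun g h => ω g h)
    {g : G} (hgH : g ∈ H) (hgK : g ∈ K) : φ ⟨g, hgH⟩ = ψ ⟨g, hgK⟩ := by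
  have hφ' := hφ.comp_mulHom (Subgroup.inclusion (inf_le_left : H ⊓ K ≤ H))
  have hψ' := hψ.comp_mulHom (Subgroup.inclusion (inf_le_right : H ⊓ K ≤ K))
  exact congrFun (hφ'.unique_s8 hψ') ⟨g, hgH, hgK⟩

theorem exists_of_forall_subgroup {ι : Type*} {S : ι → Subgroup G}
    (hpair : ∀ g h, ∃ i, g ∈ S i ∧ h ∈ S i) (hω : ∃ C : ℝ, ∀ g, ‖ω g g‖ ≤ C)
    (hprim : ∀ i, ∃ φ : S i → E, IsBoundedPrimitive_s8 φ fun g h => ω g h) :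
    ∃ φ : G → E, IsBoundedPrimitive_s8 φ ω := by
  choose φ hφ using hprim
  have hcover : ⋃ i, (S i : Set G) = Set.univ :=
    Set.iUnion_eq_univ_iff.2 fun g => (hpair g g).imp fun _ hi => hi.1
  let Φ : G → E := Set.liftCover (fun i => (S i : Set G)) φ
    (fun i j _ hi hj => (hφ i).eq_of_mem_of_mem (hφ j) hi hj) hcover
  have hΦ {i : ι} {g : G} (hg : g ∈ S i) : Φ g = φ i ⟨g, hg⟩ :=
    Set.liftCover_of_mem (S := fun i => (S i : Set G)) hg
  refine ⟨Φ, ?bounded, fun g h => ?eq_coboundary⟩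
  case bounded =>
    obtain ⟨C, hC⟩ := hω
    refine ⟨C, fun g => ?_⟩
    obtain ⟨i, hg, -⟩ := hpair g g
    rw [hΦ hg]
    exact (hφ i).norm_le (fun x => hC x) _
  case eq_coboundary =>
    obtain ⟨i, hg, hh⟩ := hpair g h
    rw [hΦ hg, hΦ hh, hΦ (mul_mem hg hh)]
    exact (hφ i).eq_coboundary ⟨g, hg⟩ ⟨h, hh⟩

end Normed

end IsBoundedPrimitive_s8

theorem isCoboundaryOfBounded_iff {G : Type*} [Group G] {ω : G → G → ℝ} :
    IsCoboundaryOfBounded ω ↔ ∃ φ, IsBoundedPrimitive_s8 φ ω :=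
  ⟨fun ⟨φ, hb, h⟩ => ⟨φ, hb, h⟩, fun ⟨φ, hφ⟩ => ⟨φ, hφ.bounded, hφ.eq_coboundary⟩⟩

theorem IsBounded2Cocycle.comp_monoidHom {G H : Type*} [Group G] [Group H] {ω : G → G → ℝ}
    (hω : IsBounded2Cocycle ω) (f : H →* G) :
    IsBounded2Cocycle fun g h => ω (f g) (f h) :=
  ⟨hω.1.imp fun _ hC g h => hC (f g) (f h), fun g₁ g₂ g₃ => by
    simpa only [map_mul] using hω.2 (f g₁) (f g₂) (f g₃)⟩

theorem directed_union_of_acyclic_is_acyclic_general {G : Type*} [Group G]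
    {ι : Type*} (Gi : ι → Subgroup G)
    (hpair : ∀ g h : G, ∃ i : ι, g ∈ Gi i ∧ h ∈ Gi i)
    (hac : ∀ i : ι, Is2BoundedlyAcyclic ↥(Gi i)) :
    Is2BoundedlyAcyclic G := by
  intro ω hω
  have hprim (i : ι) : ∃ φ : Gi i → ℝ, IsBoundedPrimitive_s8 φ fun g h => ω g h :=
    isCoboundaryOfBounded_iff.1 (hac i _ (hω.comp_monoidHom (Gi i).subtype))
  have hdiag : ∃ C : ℝ, ∀ g, ‖ω g g‖ ≤ C := hω.1.imp fun _ hC g => hC g g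
  exact isCoboundaryOfBounded_iff.2
    (IsBoundedPrimitive_s8.exists_of_forall_subgroup hpair hdiag hprim)

/-- A directed union of 2-boundedly acyclic groups is 2-boundedly
acyclic. -/
theorem directed_union_of_acyclic_is_acyclic {G : Type*} [Group G]
    {ι : Type*} (Gi : ι → Subgroup G)
    (hdir : ∀ i j : ι, ∃ k : ι, Gi i ≤ Gi k ∧ Gi j ≤ Gi k)
    (hunion : ∀ g : G, ∃ i : ι, g ∈ Gi i)
    (hac : ∀ i : ι, Is2BoundedlyAcyclic ↥(Gi i)) :
    Is2BoundedlyAcyclic G := by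
  refine directed_union_of_acyclic_is_acyclic_general Gi (fun g h => ?_) hac
  obtain ⟨⟨i, hi⟩, ⟨j, hj⟩⟩ := hunion g, hunion h
  exact (hdir i j).imp fun _ hk => ⟨hk.1 hi, hk.2 hj⟩
end

section
/- Every second bounded cohomology class admits a unique homogeneous representative: for every group G and every bounded 2-cocycle ω on G, there exists a unique homogeneous bounded 2-cocycle ω' on G such that ω − ω' is the coboundary of a bounded function φ : G → ℝ. -/
/-! Removing the diagonal of `ω` by a coboundary `δφ` amounts to solving `2 φ(g) - φ(g²) = ω(g, g)`.
Since `2 > 1`, its unique bounded solution is `φ(g) = ∑ ω(g^(2^k), g^(2^k)) / 2^(k+1)`. So it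
suffices that a bounded cocycle with zero diagonal is homogeneous. In fact it vanishes on all
commuting pairs: replacing `(g, h)` by `(g², h²)` multiplies `ω(g, h) + ω(h, g)` by `2` and
`ω(g, h) - ω(h, g)` by `4`, while both stay bounded. -/

lemma map_iterate_eq_pow_smul {α β M : Type*} [Monoid M] [MulAction M β] {c : M} {T : α → α}
    {f : α → β} {s : Set α} (hT : Set.MapsTo T s s)
    (hfT : ∀ x ∈ s, f (T x) = c • f x) (n : ℕ) {x : α} (hx : x ∈ s) :
    f (T^[n] x) = c ^ n • f x := by
  induction n with
  | zero => simp
  | succ n ih =>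
    rw [Function.iterate_succ_apply', hfT _ (hT.iterate n hx), ih, smul_smul, pow_succ']

section BoundedSolutions

variable {α 𝕜 E : Type*} [NormedField 𝕜] [NormedAddCommGroup E] [NormedSpace 𝕜 E] {c : 𝕜}
  {T : α → α} {f : α → E}

lemma eq_zero_of_map_eq_smul_of_bounded {s : Set α} (hc : 1 < ‖c‖) (hT : Set.MapsTo T s s)
    (hfT : ∀ x ∈ s, f (T x) = c • f x) (hf : ∃ C : ℝ, ∀ x ∈ s, ‖f x‖ ≤ C) {x : α} (hx : x ∈ s) :
    f x = 0 := by
  obtain ⟨C, hC⟩ := hf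
  by_contra hfx
  obtain ⟨n, hn⟩ := pow_unbounded_of_one_lt (C / ‖f x‖) hc
  have horbit : ‖c‖ ^ n * ‖f x‖ ≤ C := by
    rw [← norm_pow, ← norm_smul, ← map_iterate_eq_pow_smul hT hfT n hx]
    exact hC _ (hT.iterate n hx)
  exact hn.not_ge ((le_div_iff₀ (norm_pos_iff.mpr hfx)).mpr horbit)

lemma exists_bounded_smul_sub_map_eq [CompleteSpace E] (hc : 1 < ‖c‖) (T : α → α)
    (hf : ∃ C : ℝ, ∀ x, ‖f x‖ ≤ C) :
    ∃ φ : α → E, (∃ C : ℝ, ∀ x, ‖φ x‖ ≤ C) ∧ ∀ x, c • φ x - φ (T x) = f x := by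
  obtain ⟨C, hC⟩ := hf
  have hc₀ : c ≠ 0 := norm_pos_iff.mp (one_pos.trans hc)
  let u (x : α) (k : ℕ) : E := c⁻¹ ^ k • f (T^[k] x)
  have hgeom : HasSum (fun k ↦ ‖c⁻¹‖ ^ k * C) ((1 - ‖c⁻¹‖)⁻¹ * C) := by
    have hc' : ‖c⁻¹‖ < 1 := norm_inv c ▸ inv_lt_one_of_one_lt₀ hc
    exact (hasSum_geometric_of_lt_one (norm_nonneg _) hc').mul_right C
  have hu (x : α) (k : ℕ) : ‖u x k‖ ≤ ‖c⁻¹‖ ^ k * C := by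
    rw [norm_smul, norm_pow]
    gcongr
    exact hC _
  have hshift (x : α) (k : ℕ) : u x (k + 1) = c⁻¹ • u (T x) k := by
    simp only [u, pow_succ', mul_smul, Function.iterate_succ_apply]
  refine ⟨fun x ↦ c⁻¹ • ∑' k, u x k, ⟨‖c⁻¹‖ * ((1 - ‖c⁻¹‖)⁻¹ * C), fun x ↦ ?_⟩, fun x ↦ ?_⟩
  · rw [norm_smul]
    gcongr
    exact tsum_of_norm_bounded hgeom (hu x)
  · have hsum (y : α) : Summable (u y) := .of_norm_bounded hgeom.summable (hu y)
    have hsplit : ∑' k, u x k = f x + c⁻¹ • ∑' k, u (T x) k := by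
      rw [(hsum x).tsum_eq_zero_add, ← (hsum (T x)).tsum_const_smul]
      simp only [hshift]
      simp [u]
    rw [smul_inv_smul₀ hc₀, hsplit, add_sub_cancel_right]

lemma existsUnique_bounded_smul_sub_map_eq [CompleteSpace E] (hc : 1 < ‖c‖) (T : α → α)
    (hf : ∃ C : ℝ, ∀ x, ‖f x‖ ≤ C) :
    ∃! φ : α → E, (∃ C : ℝ, ∀ x, ‖φ x‖ ≤ C) ∧ ∀ x, c • φ x - φ (T x) = f x := by
  refine existsUnique_of_exists_of_unique (exists_bounded_smul_sub_map_eq hc T hf) ?_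
  rintro φ ψ ⟨⟨C, hC⟩, hφ⟩ ⟨⟨D, hD⟩, hψ⟩
  have hmap (x : α) : (φ - ψ) (T x) = c • (φ - ψ) x := by
    rw [Pi.sub_apply, Pi.sub_apply, smul_sub, eq_sub_of_add_eq' (sub_eq_iff_eq_add.mp (hφ x)).symm,
      eq_sub_of_add_eq' (sub_eq_iff_eq_add.mp (hψ x)).symm, sub_sub_sub_cancel_right]
  have hbdd : ∃ B : ℝ, ∀ x ∈ Set.univ, ‖(φ - ψ) x‖ ≤ B :=
    ⟨C + D, fun x _ ↦ norm_sub_le_of_le (hC x) (hD x)⟩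
  funext x
  exact sub_eq_zero.mp <| eq_zero_of_map_eq_smul_of_bounded hc (Set.mapsTo_univ T _)
    (fun x _ ↦ hmap x) hbdd (Set.mem_univ x)

end BoundedSolutions

section Cocycles

variable {G A E : Type*} [AddCommGroup A] [NormedAddCommGroup E]

/-- The (inhomogeneous) 2-cocycle condition for trivial coefficients `A`. Boundedness is kept
separate, so that algebraic identities need no norm. -/
def IsTwoCocycle [Mul G] (ω : G → G → A) : Prop :=
  ∀ g₁ g₂ g₃ : G, ω g₂ g₃ - ω (g₁ * g₂) g₃ + ω g₁ (g₂ * g₃) - ω g₁ g₂ = 0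

/-- The coboundary `δφ` of a 1-cochain, with trivial coefficients `A`. -/
def coboundary [Mul G] (φ : G → A) (g h : G) : A :=
  φ h - φ (g * h) + φ g

lemma sub_coboundary_self_eq_zero_iff [Mul G] {ω : G → G → A} {φ : G → A} {g : G} :
    (ω - coboundary φ) g g = 0 ↔ 2 • φ g - φ (g * g) = ω g g := by
  have hself : coboundary φ g g = 2 • φ g - φ (g * g) := by
    rw [coboundary, two_nsmul]
    abel
  rw [Pi.sub_apply, Pi.sub_apply, hself, sub_eq_zero, eq_comm]

lemma isTwoCocycle_coboundary [Semigroup G] (φ : G → A) : IsTwoCocycle (coboundary φ) := by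
  intro g₁ g₂ g₃
  simp only [coboundary, mul_assoc]
  abel

lemma IsTwoCocycle.sub [Mul G] {ω η : G → G → A} (hω : IsTwoCocycle ω) (hη : IsTwoCocycle η) :
    IsTwoCocycle (ω - η) := by
  intro g₁ g₂ g₃
  simp only [Pi.sub_apply]
  linear_combination (norm := abel) hω g₁ g₂ g₃ - hη g₁ g₂ g₃

lemma exists_norm_sub_coboundary_le [Mul G] {ω : G → G → E} {φ : G → E}
    (hω : ∃ C : ℝ, ∀ g h, ‖ω g h‖ ≤ C) (hφ : ∃ C : ℝ, ∀ g, ‖φ g‖ ≤ C) :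
    ∃ C : ℝ, ∀ g h, ‖(ω - coboundary φ) g h‖ ≤ C := by
  obtain ⟨C, hC⟩ := hω
  obtain ⟨D, hD⟩ := hφ
  have hδ (g h : G) : ‖coboundary φ g h‖ ≤ D + D + D :=
    norm_add_le_of_le (norm_sub_le_of_le (hD h) (hD (g * h))) (hD g)
  exact ⟨C + (D + D + D), fun g h ↦ norm_sub_le_of_le (hC g h) (hδ g h)⟩

-- With a section `s` of the central extension defined by `ω`, this compares `s(g)² s(h)²` with
-- `(s(g) s(h))²`.
lemma IsTwoCocycle.apply_mul_self_mul_self [Semigroup G] {ω : G → G → A} (hω : IsTwoCocycle ω)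
    {g h : G} (hgh : Commute g h) :
    ω (g * g) (h * h) + ω g g + ω h h = 3 • ω g h - ω h g + ω (g * h) (g * h) := by
  have hggh := hω g g (h * h)
  have hghh := hω g h h
  have hghgh := hω g h (g * h)
  have hhgh := hω h g h
  have hcomm : h * (g * h) = g * (h * h) := by rw [← mul_assoc, ← hgh.eq, mul_assoc]
  rw [hcomm] at hghgh
  rw [← hgh.eq] at hhgh
  linear_combination (norm := abel) hghh - hggh + hghgh - hhgh

lemma IsTwoCocycle.eq_zero_of_commute_of_bounded [Semigroup G] [NormedSpace ℝ E] {ω : G → G → E}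
    (hω : IsTwoCocycle ω) (hbdd : ∃ C : ℝ, ∀ g h, ‖ω g h‖ ≤ C) (hdiag : ∀ g, ω g g = 0)
    {g h : G} (hgh : Commute g h) : ω g h = 0 := by
  obtain ⟨C, hC⟩ := hbdd
  let s : Set (G × G) := {p | Commute p.1 p.2}
  have hs : Set.MapsTo (fun p ↦ p * p) s s := fun p hp ↦
    (hp.mul_right hp).mul_left (hp.mul_right hp)
  have hdouble (a b : G) (hab : Commute a b) : ω (a * a) (b * b) = 3 • ω a b - ω b a := by
    simpa only [hdiag, add_zero] using hω.apply_mul_self_mul_self hab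
  have hsymm : ω g h + ω h g = 0 :=
    eq_zero_of_map_eq_smul_of_bounded (c := (2 : ℝ)) (f := fun p : G × G ↦ ω p.1 p.2 + ω p.2 p.1)
      (by norm_num) hs
      (fun p hp ↦ by
        simp only [Prod.fst_mul, Prod.snd_mul, hdouble _ _ hp, hdouble _ _ hp.symm]
        module)
      ⟨C + C, fun p _ ↦ norm_add_le_of_le (hC _ _) (hC _ _)⟩ (x := (g, h)) hgh
  have hanti : ω g h - ω h g = 0 :=
    eq_zero_of_map_eq_smul_of_bounded (c := (4 : ℝ)) (f := fun p : G × G ↦ ω p.1 p.2 - ω p.2 p.1)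
      (by norm_num) hs
      (fun p hp ↦ by
        simp only [Prod.fst_mul, Prod.snd_mul, hdouble _ _ hp, hdouble _ _ hp.symm]
        module)
      ⟨C + C, fun p _ ↦ norm_sub_le_of_le (hC _ _) (hC _ _)⟩ (x := (g, h)) hgh
  linear_combination (norm := module) (1 / 2 : ℝ) • hsymm + (1 / 2 : ℝ) • hanti

theorem unique_homogeneous_representative_general [Group G] [NormedSpace ℝ E] [CompleteSpace E]
    (ω : G → G → E) (hω : (∃ C : ℝ, ∀ g h, ‖ω g h‖ ≤ C) ∧ IsTwoCocycle ω) :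
    ∃! ω' : G → G → E, ((∃ C : ℝ, ∀ g h, ‖ω' g h‖ ≤ C) ∧ IsTwoCocycle ω') ∧
      (∀ (g : G) (i j : ℤ), ω' (g ^ i) (g ^ j) = 0) ∧
      ∃ φ : G → E, (∃ C : ℝ, ∀ g, ‖φ g‖ ≤ C) ∧ ∀ g h, ω g h - ω' g h = coboundary φ g h := by
  obtain ⟨hbdd, hcocycle⟩ := hω
  obtain ⟨φ, ⟨hφ, hφω⟩, hunique⟩ := existsUnique_bounded_smul_sub_map_eq (c := (2 : ℝ))
    (by norm_num) (fun g ↦ g * g) (hbdd.imp fun _ hC g ↦ hC g g)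
  simp only [ofNat_smul_eq_nsmul] at hφω hunique
  have hbdd' := exists_norm_sub_coboundary_le hbdd hφ
  have hcocycle' : IsTwoCocycle (ω - coboundary φ) := hcocycle.sub (isTwoCocycle_coboundary φ)
  have hdiag (g : G) : (ω - coboundary φ) g g = 0 := sub_coboundary_self_eq_zero_iff.mpr (hφω g)
  refine ⟨ω - coboundary φ, ⟨⟨hbdd', hcocycle'⟩, fun g i j ↦ ?_, φ, hφ, fun g h ↦ ?_⟩, ?_⟩
  · exact hcocycle'.eq_zero_of_commute_of_bounded hbdd' hdiag ((Commute.refl g).zpow_zpow i j)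
  · exact sub_sub_cancel _ _
  · rintro ω' ⟨-, hhom, ψ, hψ, hωω'⟩
    obtain rfl : ω' = ω - coboundary ψ := by
      funext g h
      rw [Pi.sub_apply, Pi.sub_apply, ← hωω', sub_sub_cancel]
    have hψω (g : G) : 2 • ψ g - ψ (g * g) = ω g g :=
      sub_coboundary_self_eq_zero_iff.mp (by simpa only [zpow_one] using hhom g 1 1)
    rw [hunique ψ ⟨hψ, hψω⟩]

end Cocycles

/-- **Bouarich.** Every second bounded cohomology class admits a unique
homogeneous representative. -/
theorem unique_homogeneous_representative {G : Type*} [Group G]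
    (ω : G → G → ℝ) (hb : IsBounded2Cocycle ω) :
    ∃! ω' : G → G → ℝ, IsBounded2Cocycle ω' ∧ IsHomogeneous ω' ∧
      ∃ φ : G → ℝ, (∃ C : ℝ, ∀ g : G, |φ g| ≤ C) ∧
        ∀ g h : G, ω g h - ω' g h = φ h - φ (g * h) + φ g :=
  unique_homogeneous_representative_general ω hb
end

section
/- Every subgroup G of PL⁺([0,1]), the group of orientation-preserving piecewise linear homeomorphisms of the interval [0,1], is 2-boundedly acyclic. -/
/-- Membership in `PL⁺([0,1])`, the group of orientation-preserving piecewise linear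
homeomorphisms of `[0,1]`, realised as order-automorphisms of `ℝ` that are the identity
outside `[0,1]` and affine on each piece of a finite partition of `[0,1]`. -/
def InPL01 (f : ℝ ≃o ℝ) : Prop :=
  (∀ x : ℝ, x ∉ Set.Icc (0 : ℝ) 1 → f x = x) ∧
    ∃ (m : ℕ) (x : Fin (m + 1) → ℝ), x 0 = 0 ∧ x (Fin.last m) = 1 ∧ StrictMono x ∧
      ∀ i : Fin m, ∃ c d : ℝ,
        ∀ t ∈ Set.Icc (x i.castSucc) (x i.succ), f t = c * t + d

/-!
A bounded 2-cocycle on `G` defines a central extension of `G` by `ℝ`, on which the fibre coordinate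
is a quasimorphism. The cocycle bounds as soon as the homogenization `φ` of this quasimorphism is a
homomorphism. Since additivity only involves two elements at a time, one may assume that the
extension is finitely generated; it acts on the line through `G`.

Germs of piecewise linear maps at a common fixed point commute, so elements of the commutator
subgroup are trivial near every global fixed point. One sweeps through the global fixed points `s`
from left to right and shows that `φ` is additive on the group of elements of the commutator
subgroup that are supported to the left of `s`. If `s < s'` are consecutive, finitely many
elements supported to the left of `s'` have no support in `(s, s')` outside a compact interval, and
some `t` in the group displaces this interval off itself. Hence `t ^ i * a * (t ^ i)⁻¹` and `b`
commute up to elements supported to the left of `s`, for all `i ≥ 1`. The product of `n` successive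
conjugates of `a` by powers of `t` is then multiplicative in `a`, while `φ` takes the value
`n • φ a` on it; as the defect of `φ` is bounded, `φ` is additive on such elements.

Once `φ` is additive on the whole commutator subgroup it vanishes on commutators, because
`φ ⁅u ^ n, v⁆ = n • φ ⁅u, v⁆` is bounded in `n`. It therefore descends to an abelian group, where
homogeneous quasimorphisms are homomorphisms.
-/

open Filter MulAction Set Topology
open scoped commutatorElement

/-! ### Homogeneous quasimorphisms -/

theorem eq_zero_of_forall_abs_nsmul_le {R : Type*} [AddCommGroup R] [LinearOrder R]
    [IsOrderedAddMonoid R] [Archimedean R] {r C : R} (h : ∀ n : ℕ, |n • r| ≤ C) : r = 0 := by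
  by_contra hr
  obtain ⟨n, hn⟩ := Archimedean.arch C (abs_pos.2 hr)
  have hlt : n • |r| < (n + 1) • |r| := nsmul_lt_nsmul_left (abs_pos.2 hr) n.lt_succ_self
  exact (hn.trans_lt hlt).not_ge (abs_nsmul (n + 1) r ▸ h (n + 1))

section Quasimorphism

variable {E F : Type*} [Group E] [Group F] {φ ψ q : E → ℝ} {C D : ℝ}

/-- A real-valued quasimorphism: a function with bounded defect. -/
def IsQuasimorphism (φ : E → ℝ) : Prop :=
  ∃ D : ℝ, ∀ x y, |φ (x * y) - φ x - φ y| ≤ D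

/-- A homogeneous quasimorphism. Only natural powers are required; `map_inv` supplies the
negative ones. -/
structure IsHomogeneousQuasimorphism (φ : E → ℝ) : Prop where
  isQuasimorphism : IsQuasimorphism φ
  map_pow : ∀ x (n : ℕ), φ (x ^ n) = n • φ x

/-- `φ` restricts to a homomorphism on the subgroup `M`. -/
def AdditiveOn (φ : E → ℝ) (M : Subgroup E) : Prop :=
  ∀ ⦃a⦄, a ∈ M → ∀ ⦃b⦄, b ∈ M → φ (a * b) = φ a + φ b

theorem AdditiveOn.mono {M N : Subgroup E} (hN : AdditiveOn φ N) (hMN : M ≤ N) :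
    AdditiveOn φ M :=
  fun _ ha _ hb ↦ hN (hMN ha) (hMN hb)

theorem IsQuasimorphism.of_abs_sub_le (hq : IsQuasimorphism q) (h : ∀ x, |φ x - q x| ≤ C) :
    IsQuasimorphism φ := by
  obtain ⟨D, hD⟩ := hq
  refine ⟨D + 3 * C, fun x y ↦ abs_le.2 ?_⟩
  have hx := abs_le.1 (h x)
  have hy := abs_le.1 (h y)
  have hxy := abs_le.1 (h (x * y))
  have hdefect := abs_le.1 (hD x y)
  constructor <;> linarith

theorem abs_map_pow_sub_nsmul_le (hq : ∀ x y, |q (x * y) - q x - q y| ≤ D) (x : E) (n : ℕ) :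
    |q (x ^ n) - n • q x| ≤ (n + 1) * D := by
  induction n with
  | zero => simpa using hq 1 1
  | succ n ih =>
    have hstep := abs_le.1 (pow_succ x n ▸ hq (x ^ n) x)
    rw [nsmul_eq_mul, abs_le] at ih ⊢
    push_cast
    constructor <;> linarith

theorem abs_map_pow_div_sub_le (hq : ∀ x y, |q (x * y) - q x - q y| ≤ D) (x : E) {n : ℕ}
    (hn : 1 ≤ n) : |q (x ^ n) / n - q x| ≤ 2 * D := by
  have hn' : (1 : ℝ) ≤ n := mod_cast hn
  have hD : 0 ≤ D := (abs_nonneg _).trans (hq 1 1)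
  have hdiv : q (x ^ n) / n - q x = (q (x ^ n) - n • q x) / n := by
    rw [nsmul_eq_mul]
    field_simp
  rw [hdiv, abs_div, Nat.abs_cast, div_le_iff₀ (by linarith)]
  exact (abs_map_pow_sub_nsmul_le hq x n).trans (by nlinarith)

-- Adding the defect bound to `q` makes `n ↦ q (x ^ n)` subadditive, so Fekete's lemma applies.
theorem exists_tendsto_map_pow_div (hq : ∀ x y, |q (x * y) - q x - q y| ≤ D) (x : E) :
    ∃ l, Tendsto (fun n : ℕ ↦ q (x ^ n) / n) atTop (𝓝 l) := by
  have hD : 0 ≤ D := (abs_nonneg _).trans (hq 1 1)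
  have hsub : Subadditive fun n : ℕ ↦ q (x ^ n) + D := fun m n ↦ by
    have hmn := abs_le.1 (pow_add x m n ▸ hq (x ^ m) (x ^ n))
    linarith
  have hbdd : BddBelow (range fun n : ℕ ↦ (q (x ^ n) + D) / n) := by
    refine ⟨min 0 (q x - 2 * D), ?_⟩
    rintro _ ⟨n, rfl⟩
    rcases Nat.eq_zero_or_pos n with rfl | hn
    · simp
    · have hclose := abs_le.1 (abs_map_pow_div_sub_le hq x hn)
      have hDn : 0 ≤ D / n := by positivity
      simp only [add_div]
      exact (min_le_right _ _).trans (by linarith)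
  refine ⟨_, ((hsub.tendsto_lim hbdd).sub
    (tendsto_const_div_atTop_nhds_zero_nat D)).congr fun n ↦ ?_⟩
  ring

theorem IsQuasimorphism.exists_isHomogeneousQuasimorphism (hq : IsQuasimorphism q) :
    ∃ φ, IsHomogeneousQuasimorphism φ ∧ ∃ C, ∀ x, |φ x - q x| ≤ C := by
  obtain ⟨D, hD⟩ := id hq
  choose φ hφ using exists_tendsto_map_pow_div hD
  have hclose (x : E) : |φ x - q x| ≤ 2 * D :=
    le_of_tendsto ((hφ x).sub_const _).abs <|
      (eventually_ge_atTop 1).mono fun n hn ↦ abs_map_pow_div_sub_le hD x hn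
  refine ⟨φ, ⟨hq.of_abs_sub_le hclose, fun x k ↦ ?_⟩, _, hclose⟩
  rcases Nat.eq_zero_or_pos k with rfl | hk
  · have hone := hφ 1
    simp only [one_pow] at hone
    simpa using tendsto_nhds_unique hone (tendsto_const_div_atTop_nhds_zero_nat (q 1))
  · have hsubseq := ((hφ x).comp (tendsto_id.const_mul_atTop' hk)).const_mul (k : ℝ)
    rw [nsmul_eq_mul]
    refine tendsto_nhds_unique (hφ (x ^ k)) (hsubseq.congr fun n ↦ ?_)
    have hk' : (k : ℝ) ≠ 0 := by positivity
    simp only [Function.comp_apply, id_eq, pow_mul, Nat.cast_mul]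
    field_simp

namespace IsHomogeneousQuasimorphism

theorem of_map_mul (h : ∀ x y, φ (x * y) = φ x + φ y) : IsHomogeneousQuasimorphism φ where
  isQuasimorphism := ⟨0, fun x y ↦ by simp [h]⟩
  map_pow x n := by
    induction n with
    | zero => simpa using h 1 1
    | succ n ih => rw [pow_succ, h, ih, succ_nsmul]

theorem comp (hφ : IsHomogeneousQuasimorphism φ) (f : F →* E) :
    IsHomogeneousQuasimorphism (φ ∘ f) where
  isQuasimorphism := by
    obtain ⟨D, hD⟩ := hφ.isQuasimorphism
    exact ⟨D, fun x y ↦ by simpa using hD (f x) (f y)⟩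
  map_pow x n := by simp [hφ.map_pow]

theorem eq_of_abs_sub_le (hφ : IsHomogeneousQuasimorphism φ) (hψ : IsHomogeneousQuasimorphism ψ)
    (h : ∀ x, |φ x - ψ x| ≤ C) : φ = ψ := by
  funext x
  refine sub_eq_zero.1 (eq_zero_of_forall_abs_nsmul_le (C := C) fun n ↦ ?_)
  rw [smul_sub, ← hφ.map_pow, ← hψ.map_pow]
  exact h _

theorem map_mul_of_commute (hφ : IsHomogeneousQuasimorphism φ) {x y : E} (hxy : Commute x y) :
    φ (x * y) = φ x + φ y := by
  obtain ⟨D, hD⟩ := hφ.isQuasimorphism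
  suffices φ (x * y) - φ x - φ y = 0 by linarith
  refine eq_zero_of_forall_abs_nsmul_le (C := D) fun n ↦ ?_
  rw [smul_sub, smul_sub, ← hφ.map_pow, ← hφ.map_pow, ← hφ.map_pow, hxy.mul_pow]
  exact hD _ _

theorem map_one (hφ : IsHomogeneousQuasimorphism φ) : φ 1 = 0 := by
  simpa using hφ.map_pow 1 0

theorem map_inv (hφ : IsHomogeneousQuasimorphism φ) (x : E) : φ x⁻¹ = -φ x := by
  have h := hφ.map_mul_of_commute (Commute.inv_right (Commute.refl x))
  rw [mul_inv_cancel, hφ.map_one] at h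
  linarith

theorem map_conj (hφ : IsHomogeneousQuasimorphism φ) (g x : E) : φ (g * x * g⁻¹) = φ x := by
  obtain ⟨D, hD⟩ := hφ.isQuasimorphism
  refine congrFun ((hφ.comp (MulAut.conj g).toMonoidHom).eq_of_abs_sub_le hφ (C := 2 * D)
    fun y ↦ ?_) x
  have hleft := abs_le.1 (hD g y)
  have hright := abs_le.1 (hD (g * y) g⁻¹)
  rw [hφ.map_inv] at hright
  simp only [Function.comp_apply, MulEquiv.toMonoidHom_eq_coe, MonoidHom.coe_coe,
    MulAut.conj_apply, abs_le]
  constructor <;> linarith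

theorem exists_abs_map_commutator_le (hφ : IsHomogeneousQuasimorphism φ) :
    ∃ D, ∀ x y : E, |φ ⁅x, y⁆| ≤ D := by
  obtain ⟨D, hD⟩ := hφ.isQuasimorphism
  refine ⟨D, fun x y ↦ ?_⟩
  have h := hD (x * y * x⁻¹) y⁻¹
  rwa [hφ.map_conj, hφ.map_inv, sub_neg_eq_add, sub_add_cancel] at h

-- By `⁅u ^ (n + 1), v⁆ = u * ⁅u ^ n, v⁆ * u⁻¹ * ⁅u, v⁆`, the value on `⁅u ^ n, v⁆` is
-- `n • φ ⁅u, v⁆`, while commutators have uniformly bounded values.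
theorem map_commutator_eq_zero (hφ : IsHomogeneousQuasimorphism φ) {M : Subgroup E} [hM : M.Normal]
    (hadd : AdditiveOn φ M) {u v : E} (huv : ⁅u, v⁆ ∈ M) : φ ⁅u, v⁆ = 0 := by
  obtain ⟨D, hD⟩ := hφ.exists_abs_map_commutator_le
  have hpow (n : ℕ) : ⁅u ^ n, v⁆ ∈ M ∧ φ ⁅u ^ n, v⁆ = n • φ ⁅u, v⁆ := by
    induction n with
    | zero => simp [hφ.map_one]
    | succ n ih =>
      have hsucc : ⁅u ^ (n + 1), v⁆ = u * ⁅u ^ n, v⁆ * u⁻¹ * ⁅u, v⁆ := by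
        simp only [commutatorElement_def, pow_succ']
        group
      have hconj := hM.conj_mem _ ih.1 u
      rw [hsucc, hadd hconj huv, hφ.map_conj, ih.2, succ_nsmul]
      exact ⟨M.mul_mem hconj huv, rfl⟩
  exact eq_zero_of_forall_abs_nsmul_le fun n ↦ (hpow n).2 ▸ hD _ _

theorem map_mul_of_mem_normal (hφ : IsHomogeneousQuasimorphism φ) {N : Subgroup E} [N.Normal]
    (hN : ∀ x ∈ N, φ x = 0) (g : E) {n : E} (hn : n ∈ N) : φ (g * n) = φ g := by
  obtain ⟨D, hD⟩ := hφ.isQuasimorphism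
  refine sub_eq_zero.1 (eq_zero_of_forall_abs_nsmul_le (C := D) fun k ↦ ?_)
  have hmem : (g ^ k)⁻¹ * (g * n) ^ k ∈ N := by
    rw [← QuotientGroup.eq, QuotientGroup.mk_pow, QuotientGroup.mk_pow,
      QuotientGroup.mk_mul_of_mem g hn]
  have hdefect := hD (g ^ k) ((g ^ k)⁻¹ * (g * n) ^ k)
  rwa [hN _ hmem, mul_inv_cancel_left, sub_zero, hφ.map_pow, hφ.map_pow, ← smul_sub] at hdefect

theorem exists_quotient (hφ : IsHomogeneousQuasimorphism φ) (N : Subgroup E) [N.Normal]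
    (hN : ∀ x ∈ N, φ x = 0) :
    ∃ ψ : E ⧸ N → ℝ, IsHomogeneousQuasimorphism ψ ∧ ∀ x : E, ψ x = φ x := by
  have hlift (a b : E) (hab : (QuotientGroup.leftRel N) a b) : φ a = φ b := by
    simpa using (hφ.map_mul_of_mem_normal hN a (QuotientGroup.leftRel_apply.1 hab)).symm
  refine ⟨Quotient.lift φ hlift, ⟨?_, ?_⟩, fun x ↦ rfl⟩
  · obtain ⟨D, hD⟩ := hφ.isQuasimorphism
    exact ⟨D, fun x y ↦ Quotient.inductionOn₂ x y hD⟩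
  · exact fun x n ↦ Quotient.inductionOn x (hφ.map_pow · n)

/-- The kernel of the restriction of `φ` to a subgroup `M` on which it is additive. -/
def kernelOn (hφ : IsHomogeneousQuasimorphism φ) {M : Subgroup E} (hadd : AdditiveOn φ M) :
    Subgroup E where
  carrier := {x | x ∈ M ∧ φ x = 0}
  one_mem' := ⟨M.one_mem, hφ.map_one⟩
  mul_mem' := fun ⟨ha, ha₀⟩ ⟨hb, hb₀⟩ ↦ ⟨M.mul_mem ha hb, by rw [hadd ha hb, ha₀, hb₀, add_zero]⟩
  inv_mem' := fun ⟨ha, ha₀⟩ ↦ ⟨M.inv_mem ha, by rw [hφ.map_inv, ha₀, neg_zero]⟩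

instance normal_kernelOn (hφ : IsHomogeneousQuasimorphism φ) {M : Subgroup E} [hM : M.Normal]
    (hadd : AdditiveOn φ M) : (hφ.kernelOn hadd).Normal :=
  ⟨fun x ⟨hx, hx₀⟩ g ↦ ⟨hM.conj_mem x hx g, by rw [hφ.map_conj, hx₀]⟩⟩

theorem commute_mk_kernelOn (hφ : IsHomogeneousQuasimorphism φ) {M : Subgroup E} [M.Normal]
    (hadd : AdditiveOn φ M) {u v : E} (huv : ⁅u, v⁆ ∈ M) :
    Commute (u : E ⧸ hφ.kernelOn hadd) v := by
  have hmem : ⁅u, v⁆ ∈ hφ.kernelOn hadd := ⟨huv, hφ.map_commutator_eq_zero hadd huv⟩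
  rw [← QuotientGroup.ker_mk' (hφ.kernelOn hadd), MonoidHom.mem_ker, map_commutatorElement] at hmem
  exact commutatorElement_eq_one_iff_commute.1 hmem

theorem map_mul_of_additiveOn_commutator (hφ : IsHomogeneousQuasimorphism φ)
    (hadd : AdditiveOn φ (commutator E)) (x y : E) : φ (x * y) = φ x + φ y := by
  obtain ⟨ψ, hψ, hψφ⟩ := hφ.exists_quotient (hφ.kernelOn hadd) fun _ hx ↦ hx.2
  have hcomm := hφ.commute_mk_kernelOn hadd
    (Subgroup.commutator_mem_commutator (Subgroup.mem_top x) (Subgroup.mem_top y))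
  simpa only [← QuotientGroup.mk_mul, hψφ] using hψ.map_mul_of_commute hcomm

end IsHomogeneousQuasimorphism

/-- The product `x * (t * x * t⁻¹) * ⋯ * (t ^ (n - 1) * x * (t ^ (n - 1))⁻¹)` of the first `n`
conjugates of `x` by powers of `t`. -/
def conjProd (t x : E) : ℕ → E
  | 0 => 1
  | n + 1 => x * (t * conjProd t x n * t⁻¹)

theorem commute_conj_conjProd {t a b : E}
    (hab : ∀ i : ℕ, 1 ≤ i → Commute (t ^ i * a * (t ^ i)⁻¹) b) (n : ℕ) {i : ℕ} (hi : 1 ≤ i) :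
    Commute (t ^ i * conjProd t a n * (t ^ i)⁻¹) b := by
  induction n generalizing i with
  | zero => simp [conjProd]
  | succ n ih =>
    have hsucc : t ^ i * conjProd t a (n + 1) * (t ^ i)⁻¹ =
        t ^ i * a * (t ^ i)⁻¹ * (t ^ (i + 1) * conjProd t a n * (t ^ (i + 1))⁻¹) := by
      simp only [conjProd, pow_succ]
      group
    rw [hsucc]
    exact (hab i hi).mul_left (ih (by lia))

theorem conjProd_mul {t a b : E} (hab : ∀ i : ℕ, 1 ≤ i → Commute (t ^ i * a * (t ^ i)⁻¹) b)
    (n : ℕ) : conjProd t (a * b) n = conjProd t a n * conjProd t b n := by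
  induction n with
  | zero => simp [conjProd]
  | succ n ih =>
    have hcomm : t * conjProd t a n * t⁻¹ * b = b * (t * conjProd t a n * t⁻¹) := by
      simpa using (commute_conj_conjProd hab n le_rfl).eq
    calc
      conjProd t (a * b) (n + 1)
        = a * (b * (t * conjProd t a n * t⁻¹)) * (t * conjProd t b n * t⁻¹) := by
          rw [conjProd, ih]
          group
      _ = conjProd t a (n + 1) * conjProd t b (n + 1) := by
          rw [← hcomm]
          simp only [conjProd]
          group

namespace IsHomogeneousQuasimorphism

theorem map_conjProd (hφ : IsHomogeneousQuasimorphism φ) {t a : E}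
    (ha : ∀ i : ℕ, 1 ≤ i → Commute (t ^ i * a * (t ^ i)⁻¹) a) (n : ℕ) :
    φ (conjProd t a n) = n • φ a := by
  induction n with
  | zero => simp [conjProd, hφ.map_one]
  | succ n ih =>
    have hcomm : Commute (t * conjProd t a n * t⁻¹) a := by
      simpa using commute_conj_conjProd ha n le_rfl
    rw [conjProd, hφ.map_mul_of_commute hcomm.symm, hφ.map_conj, ih, succ_nsmul']

-- `a ↦ conjProd t a n` is multiplicative on `H` and multiplies the values of `φ` by `n`, so the
-- defect of `φ` on `H` is at most `D / n` for every `n`.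
theorem additiveOn_of_commute_conj (hφ : IsHomogeneousQuasimorphism φ) {H : Subgroup E} {t : E}
    (hH : ∀ i : ℕ, 1 ≤ i → ∀ a ∈ H, ∀ b ∈ H, Commute (t ^ i * a * (t ^ i)⁻¹) b) :
    AdditiveOn φ H := by
  intro x hx y hy
  obtain ⟨D, hD⟩ := hφ.isQuasimorphism
  have hmap (a : E) (ha : a ∈ H) (n : ℕ) : φ (conjProd t a n) = n • φ a :=
    hφ.map_conjProd (fun i hi ↦ hH i hi a ha a ha) n
  suffices φ (x * y) - φ x - φ y = 0 by linarith
  refine eq_zero_of_forall_abs_nsmul_le (C := D) fun n ↦ ?_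
  rw [smul_sub, smul_sub, ← hmap _ (H.mul_mem hx hy), ← hmap x hx, ← hmap y hy,
    conjProd_mul fun i hi ↦ hH i hi x hx y hy]
  exact hD _ _

theorem additiveOn_of_commutator_conj_mem (hφ : IsHomogeneousQuasimorphism φ) {M H : Subgroup E}
    [M.Normal] (hadd : AdditiveOn φ M) {t : E}
    (hH : ∀ i : ℕ, 1 ≤ i → ∀ a ∈ H, ∀ b ∈ H, ⁅t ^ i * a * (t ^ i)⁻¹, b⁆ ∈ M) :
    AdditiveOn φ H := by
  intro x hx y hy
  obtain ⟨ψ, hψ, hψφ⟩ := hφ.exists_quotient (hφ.kernelOn hadd) fun _ hx ↦ hx.2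
  let π := QuotientGroup.mk' (hφ.kernelOn hadd)
  have hquot : AdditiveOn ψ (H.map π) := by
    refine hψ.additiveOn_of_commute_conj (t := π t) fun i hi ↦ ?_
    rintro _ ⟨a, ha, rfl⟩ _ ⟨b, hb, rfl⟩
    simpa [π] using hφ.commute_mk_kernelOn hadd (hH i hi a ha b hb)
  have h := hquot (Subgroup.mem_map_of_mem π hx) (Subgroup.mem_map_of_mem π hy)
  rw [← map_mul] at h
  simpa only [π, QuotientGroup.mk'_apply, hψφ] using h

end IsHomogeneousQuasimorphism

end Quasimorphism

/-! ### The central extension of a bounded cocycle -/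

section CentralExtension

variable {G : Type*} [Group G] {ω : G → G → ℝ}

theorem IsBounded2Cocycle.map_one_left (hω : IsBounded2Cocycle ω) (g : G) : ω 1 g = ω 1 1 := by
  have h := hω.2 1 1 g
  simp only [one_mul] at h
  linarith

/-- The central extension of `G` by `ℝ` defined by the cocycle `ω`, with underlying set `ℝ × G`.
The cocycle property is a parameter of the type because the group law depends on it. -/
@[ext]
structure CentralExtension (hω : IsBounded2Cocycle ω) where
  fiber : ℝ
  base : G

namespace CentralExtension

variable {hω : IsBounded2Cocycle ω}

noncomputable instance : Mul (CentralExtension hω) :=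
  ⟨fun x y ↦ ⟨x.fiber + y.fiber + ω x.base y.base, x.base * y.base⟩⟩

-- The cocycle is not assumed to be normalized, whence the corrections by `ω 1 1`.
noncomputable instance : One (CentralExtension hω) :=
  ⟨⟨-ω 1 1, 1⟩⟩

noncomputable instance : Inv (CentralExtension hω) :=
  ⟨fun x ↦ ⟨-x.fiber - ω x.base⁻¹ x.base - ω 1 1, x.base⁻¹⟩⟩

@[simp]
theorem base_mul (x y : CentralExtension hω) : (x * y).base = x.base * y.base :=
  rfl

@[simp]
theorem fiber_mul (x y : CentralExtension hω) :
    (x * y).fiber = x.fiber + y.fiber + ω x.base y.base :=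
  rfl

@[simp]
theorem base_one : (1 : CentralExtension hω).base = 1 :=
  rfl

@[simp]
theorem fiber_one : (1 : CentralExtension hω).fiber = -ω 1 1 :=
  rfl

@[simp]
theorem base_inv (x : CentralExtension hω) : x⁻¹.base = x.base⁻¹ :=
  rfl

@[simp]
theorem fiber_inv (x : CentralExtension hω) :
    x⁻¹.fiber = -x.fiber - ω x.base⁻¹ x.base - ω 1 1 :=
  rfl

noncomputable instance : Group (CentralExtension hω) :=
  Group.ofLeftAxioms
    (fun x y z ↦ by
      have h := hω.2 x.base y.base z.base
      ext
      · simp only [fiber_mul, base_mul]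
        linarith
      · exact mul_assoc _ _ _)
    (fun x ↦ by ext <;> simp [hω.map_one_left])
    (fun x ↦ by
      ext
      · simp only [fiber_mul, fiber_inv, base_inv, fiber_one]
        ring
      · simp)

/-- The projection of the central extension onto `G`. -/
def proj (hω : IsBounded2Cocycle ω) : CentralExtension hω →* G where
  toFun := base
  map_one' := rfl
  map_mul' _ _ := rfl

theorem isQuasimorphism_fiber : IsQuasimorphism (fiber : CentralExtension hω → ℝ) := by
  obtain ⟨C, hC⟩ := hω.1
  exact ⟨C, fun x y ↦ by simpa [add_sub_right_comm] using hC x.base y.base⟩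

variable {φ : CentralExtension hω → ℝ} {C : ℝ}

-- A bounded primitive of `ω` on `K` corrects `fiber` to a homomorphism at bounded distance from
-- `φ`, which is then equal to `φ`.
theorem additiveOn_comap_proj (hφ : IsHomogeneousQuasimorphism φ) (hC : ∀ x, |φ x - x.fiber| ≤ C)
    {K : Subgroup G} (hK : Is2BoundedlyAcyclic K) : AdditiveOn φ (K.comap (proj hω)) := by
  obtain ⟨ψ, ⟨B, hB⟩, hψ⟩ := hK (fun g h ↦ ω g h)
    ⟨hω.1.imp fun _ h g₁ g₂ ↦ h g₁ g₂, fun g₁ g₂ g₃ ↦ hω.2 g₁ g₂ g₃⟩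
  let lift (x : K.comap (proj hω)) : K := ⟨x.1.base, x.2⟩
  let χ (x : K.comap (proj hω)) : ℝ := x.1.fiber + ψ (lift x)
  have hχ (x y) : χ (x * y) = χ x + χ y := by
    have h := hψ (lift x) (lift y)
    simp only [lift, χ, Subgroup.coe_mul, fiber_mul, base_mul] at h ⊢
    change _ + ψ (lift x * lift y) = _
    linarith
  have heq : φ ∘ Subtype.val = χ :=
    (hφ.comp (K.comap (proj hω)).subtype).eq_of_abs_sub_le (.of_map_mul hχ) (C := C + B) fun x ↦ by
      have hφx := abs_le.1 (hC x.1)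
      have hψx := abs_le.1 (hB (lift x))
      simp only [Function.comp_apply, χ, abs_le]
      constructor <;> linarith
  intro a ha b hb
  simpa [← heq] using hχ ⟨a, ha⟩ ⟨b, hb⟩

/-- The inclusion of `ℝ` as a central subgroup. -/
noncomputable def incl (hω : IsBounded2Cocycle ω) : Multiplicative ℝ →* CentralExtension hω where
  toFun r := ⟨r.toAdd - ω 1 1, 1⟩
  map_one' := by ext <;> simp
  map_mul' r s := by
    ext
    · simp only [toAdd_mul, fiber_mul]
      ring
    · simp

theorem incl_mul_mk_zero (g h : G) :
    incl hω (.ofAdd (ω g h)) * ⟨0, g * h⟩ = ⟨0, g⟩ * ⟨0, h⟩ := by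
  ext <;> simp [incl, hω.map_one_left]

theorem map_incl (hadd : ∀ x y, φ (x * y) = φ x + φ y) (hC : ∀ x, |φ x - x.fiber| ≤ C)
    (r : Multiplicative ℝ) : φ (incl hω r) = r.toAdd := by
  have hincl := (IsHomogeneousQuasimorphism.of_map_mul hadd).comp (incl hω)
  refine congrFun (hincl.eq_of_abs_sub_le (C := C + |ω 1 1|)
    (.of_map_mul (φ := Multiplicative.toAdd) fun _ _ ↦ rfl) fun s ↦ ?_) r
  calc
    |φ (incl hω s) - s.toAdd| = |(φ (incl hω s) - (incl hω s).fiber) + -ω 1 1| := by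
      change _ = |φ (incl hω s) - (s.toAdd - ω 1 1) + -ω 1 1|
      congr 1
      ring
    _ ≤ C + |ω 1 1| := (abs_add_le _ _).trans (by simpa using hC _)

theorem isCoboundaryOfBounded (hadd : ∀ x y, φ (x * y) = φ x + φ y)
    (hC : ∀ x, |φ x - x.fiber| ≤ C) : IsCoboundaryOfBounded ω := by
  refine ⟨fun g ↦ φ ⟨0, g⟩, ⟨C, fun g ↦ by simpa using hC ⟨0, g⟩⟩, fun g h ↦ ?_⟩
  have hmul : ω g h + φ ⟨0, g * h⟩ = φ ⟨0, g⟩ + φ ⟨0, h⟩ := by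
    rw [← hadd, ← incl_mul_mk_zero, hadd, map_incl hadd hC, toAdd_ofAdd]
  linarith

end CentralExtension

theorem Is2BoundedlyAcyclic.of_subsingleton [Subsingleton G] : Is2BoundedlyAcyclic G :=
  fun ω _ ↦ ⟨fun _ ↦ ω 1 1, ⟨|ω 1 1|, fun _ ↦ le_rfl⟩, fun g h ↦ by
    simp [Subsingleton.elim g 1, Subsingleton.elim h 1]⟩

end CentralExtension

/-! ### Order-preserving actions -/

section FixingSubgroup

variable {E X : Type*} [Group E] [MulAction E X] {S T : Set X} {a b g : E}

theorem subsingleton_fixingSubgroup_univ [FaithfulSMul E X] :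
    Subsingleton (fixingSubgroup E (univ : Set X)) :=
  ⟨fun a b ↦ Subtype.ext <| FaithfulSMul.eq_of_smul_eq_smul fun t : X ↦
    (a.2 ⟨t, mem_univ t⟩).trans (b.2 ⟨t, mem_univ t⟩).symm⟩

theorem conj_mem_fixingSubgroup (hST : ∀ t ∈ T, g⁻¹ • t ∈ S) (ha : a ∈ fixingSubgroup E S) :
    g * a * g⁻¹ ∈ fixingSubgroup E T := by
  rw [mem_fixingSubgroup_iff] at ha ⊢
  intro t ht
  rw [mul_smul, mul_smul, ha _ (hST t ht), smul_inv_smul]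

theorem commutator_mem_fixingSubgroup_union (ha : a ∈ fixingSubgroup E S)
    (hb : b ∈ fixingSubgroup E T) (haT : ∀ t ∈ T, a⁻¹ • t ∈ T) (hbS : ∀ t ∈ S, b⁻¹ • t ∈ S) :
    ⁅a, b⁆ ∈ fixingSubgroup E (S ∪ T) := by
  have ha' := inv_mem ha
  have hb' := inv_mem hb
  rw [mem_fixingSubgroup_iff] at ha hb ha' hb' ⊢
  simp only [commutatorElement_def, mul_smul]
  rintro t (ht | ht)
  · rw [ha' _ (hbS t ht), smul_inv_smul, ha t ht]
  · rw [hb' t ht, hb _ (haT t ht), smul_inv_smul]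

/-- The subgroup of elements acting trivially near `l`, that is, whose germ along the filter `l`
is the identity. -/
def germFixer (E : Type*) {X : Type*} [Group E] [MulAction E X] (l : Filter X) : Subgroup E where
  carrier := {e | ∀ᶠ t in l, e • t = t}
  one_mem' := .of_forall (one_smul E)
  mul_mem' ha hb := by
    filter_upwards [ha, hb] with t hat hbt
    rw [mul_smul, hbt, hat]
  inv_mem' ha := by
    filter_upwards [ha] with t hat
    rw [inv_smul_eq_iff, hat]

theorem mem_germFixer {l : Filter X} : a ∈ germFixer E l ↔ ∀ᶠ t in l, a • t = t :=
  Iff.rfl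

theorem eventually_mem_fixedPoints [Group.FG E] {l : Filter X} (h : ∀ e, e ∈ germFixer E l) :
    ∀ᶠ t in l, t ∈ fixedPoints E X := by
  obtain ⟨S, hS, hfin⟩ := Group.fg_iff.1 ‹Group.FG E›
  filter_upwards [hfin.eventually_all.2 fun e _ ↦ h e] with t ht e
  have hle : Subgroup.closure S ≤ stabilizer E t := (Subgroup.closure_le _).2 ht
  exact hle (hS ▸ Subgroup.mem_top e)

theorem eventually_mem_fixingSubgroup_uIcc [LinearOrder X] [TopologicalSpace X] [OrderTopology X]
    {s : X} (ha : a ∈ germFixer E (𝓝 s)) : ∀ᶠ c in 𝓝 s, a ∈ fixingSubgroup E (uIcc s c) := by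
  simp only [mem_fixingSubgroup_iff]
  exact ((tendsto_const_nhds (x := s)).uIcc tendsto_id).eventually ha.smallSets

end FixingSubgroup

section Preorder

variable {E X : Type*} [Group E] [Preorder X] [MulAction E X]

/-- The subgroup of the commutator subgroup consisting of elements that act trivially on
`[s, ∞)`. -/
def derivedBelow (E : Type*) [Group E] [MulAction E X] (s : X) : Subgroup E :=
  commutator E ⊓ fixingSubgroup E (Ici s)

variable [CovariantClass E X HSMul.hSMul LE.le] {g : E} {p s t : X}

theorem smul_le_iff_le_inv_smul : g • s ≤ t ↔ s ≤ g⁻¹ • t :=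
  ⟨fun h ↦ by simpa using smul_mono_right g⁻¹ h, fun h ↦ by simpa using smul_mono_right g h⟩

theorem le_smul_iff_of_mem_fixedPoints (hp : p ∈ fixedPoints E X) (g : E) : p ≤ g • t ↔ p ≤ t := by
  rw [← inv_inv g, ← smul_le_iff_le_inv_smul, hp]

theorem normal_derivedBelow (hs : s ∈ fixedPoints E X) : (derivedBelow E s).Normal := by
  have hIci : (fixingSubgroup E (Ici s)).Normal :=
    ⟨fun _ ha g ↦ conj_mem_fixingSubgroup
      (fun _ ↦ (le_smul_iff_of_mem_fixedPoints hs g⁻¹).2) ha⟩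
  exact Subgroup.normal_inf_normal _ _

end Preorder

section LinearOrder

variable {E X : Type*} [Group E] [LinearOrder X] [MulAction E X] {a b : E} {c d s : X}

theorem mem_derivedBelow_of_mem_Icc (ha : a ∈ derivedBelow E d)
    (haI : a ∈ fixingSubgroup E (Icc c d)) : a ∈ derivedBelow E c := by
  have haU : a ∈ fixingSubgroup E (Icc c d ∪ Ici d) := by
    rw [fixingSubgroup_union]
    exact ⟨haI, ha.2⟩
  exact ⟨ha.1, fixingSubgroup_antitone E X Ici_subset_Icc_union_Ici haU⟩

theorem eventually_mem_derivedBelow [TopologicalSpace X] [OrderTopology X]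
    (ha : a ∈ derivedBelow E s) (hgerm : a ∈ germFixer E (𝓝 s)) :
    ∀ᶠ p in 𝓝 s, a ∈ derivedBelow E p := by
  filter_upwards [eventually_mem_fixingSubgroup_uIcc hgerm] with p hp
  exact mem_derivedBelow_of_mem_Icc ha (fixingSubgroup_antitone E X Icc_subset_uIcc' hp)

variable [CovariantClass E X HSMul.hSMul LE.le]

theorem isClosed_fixedPoints_of_covariantClass [TopologicalSpace X] [OrderTopology X]
    [DenselyOrdered X] : IsClosed (fixedPoints E X) := by
  simp only [fixedPoints, ofPred_forall]
  exact isClosed_iInter fun e ↦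
    isClosed_eq ((smul_mono_right e).continuous_of_surjective (MulAction.surjective e))
      continuous_id

theorem commutator_mem_derivedBelow (hs : s ∈ fixedPoints E X) (hsd : s ≤ d)
    (ha : a ∈ fixingSubgroup E (Icc s d)) (hb : b ∈ fixingSubgroup E (Ici d)) :
    ⁅a, b⁆ ∈ derivedBelow E s := by
  have had : a • d = d := (mem_fixingSubgroup_iff E).1 ha d ⟨hsd, le_rfl⟩
  have hbd : b • d = d := (mem_fixingSubgroup_iff E).1 hb d self_mem_Ici
  refine ⟨Subgroup.commutator_mem_commutator (Subgroup.mem_top a) (Subgroup.mem_top b),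
    fixingSubgroup_antitone E X Ici_subset_Icc_union_Ici
      (commutator_mem_fixingSubgroup_union ha hb (fun t ht ↦ ?_) fun t ht ↦ ?_)⟩
  · rw [mem_Ici, ← smul_le_iff_le_inv_smul, had]
    exact ht
  · refine ⟨(le_smul_iff_of_mem_fixedPoints hs _).2 ht.1, ?_⟩
    rw [smul_le_iff_le_inv_smul, inv_inv, hbd]
    exact ht.2

end LinearOrder

section Gap

variable {E X : Type*} [Group E] [ConditionallyCompleteLinearOrder X] [MulAction E X]
  [CovariantClass E X HSMul.hSMul LE.le] {φ : E → ℝ} {c d s s' : X}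

-- Otherwise the supremum of the orbit of `c` is a fixed point in `[c, d]`.
theorem exists_lt_smul (h : ∀ p ∈ Icc c d, p ∉ fixedPoints E X) : ∃ t : E, d < t • c := by
  by_contra! hle
  have hbdd : BddAbove (range fun t : E ↦ t • c) := ⟨d, forall_mem_range.2 hle⟩
  have hsup (g : E) : ⨆ t : E, t • c ≤ g • ⨆ t : E, t • c :=
    ciSup_le fun t ↦ by
      rw [← inv_inv g, ← smul_le_iff_le_inv_smul, smul_smul]
      exact le_ciSup hbdd (g⁻¹ * t)
  refine h (⨆ t : E, t • c) ⟨by simpa using le_ciSup hbdd 1, ciSup_le hle⟩ fun g ↦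
    (smul_le_iff_le_inv_smul.2 (hsup g⁻¹)).antisymm (hsup g)

theorem exists_lt_pow_smul (hcd : c ≤ d) (h : ∀ p ∈ Icc c d, p ∉ fixedPoints E X) :
    ∃ t : E, ∀ i : ℕ, 1 ≤ i → d < t ^ i • c := by
  obtain ⟨t, ht⟩ := exists_lt_smul h
  refine ⟨t, fun i hi ↦ ht.trans_le ?_⟩
  obtain ⟨i, rfl⟩ := Nat.exists_eq_add_of_le' hi
  rw [pow_succ', mul_smul]
  exact smul_mono_right t (le_pow_smul (hcd.trans ht.le) i)

theorem IsHomogeneousQuasimorphism.additiveOn_inf_fixingSubgroup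
    (hφ : IsHomogeneousQuasimorphism φ) (hs : s ∈ fixedPoints E X)
    (hadd : AdditiveOn φ (derivedBelow E s)) (hsc : s ≤ c) (hcd : c ≤ d)
    (h : ∀ p ∈ Icc c d, p ∉ fixedPoints E X) :
    AdditiveOn φ (fixingSubgroup E (Icc s c) ⊓ fixingSubgroup E (Ici d)) := by
  obtain ⟨t, ht⟩ := exists_lt_pow_smul hcd h
  have := normal_derivedBelow hs
  refine hφ.additiveOn_of_commutator_conj_mem hadd (t := t) fun i hi a ha b hb ↦
    commutator_mem_derivedBelow hs (hsc.trans hcd) (conj_mem_fixingSubgroup (fun p hp ↦ ?_) ha.1)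
      hb.2
  refine ⟨(le_smul_iff_of_mem_fixedPoints hs _).2 hp.1, ?_⟩
  rw [smul_le_iff_le_inv_smul, inv_inv]
  exact hp.2.trans (ht i hi).le

theorem IsHomogeneousQuasimorphism.additiveOn_derivedBelow_of_gap [TopologicalSpace X]
    [OrderTopology X] [DenselyOrdered X] (hφ : IsHomogeneousQuasimorphism φ)
    (hs : s ∈ fixedPoints E X) (hss' : s < s') (hgap : ∀ p ∈ Ioo s s', p ∉ fixedPoints E X)
    (hgerm : commutator E ≤ germFixer E (𝓝 s)) (hgerm' : commutator E ≤ germFixer E (𝓝 s'))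
    (hadd : AdditiveOn φ (derivedBelow E s)) : AdditiveOn φ (derivedBelow E s') := by
  intro x hx y hy
  have hright {a : E} (ha : a ∈ derivedBelow E s') :
      ∀ᶠ c in 𝓝[>] s, a ∈ fixingSubgroup E (uIcc s c) :=
    (eventually_mem_fixingSubgroup_uIcc (hgerm ha.1)).filter_mono nhdsWithin_le_nhds
  have hleft {a : E} (ha : a ∈ derivedBelow E s') :
      ∀ᶠ d in 𝓝[<] s', a ∈ derivedBelow E d :=
    (eventually_mem_derivedBelow ha (hgerm' ha.1)).filter_mono nhdsWithin_le_nhds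
  have := nhdsGT_neBot_of_exists_gt ⟨s', hss'⟩
  obtain ⟨c, hxc, hyc, hc⟩ :=
    ((hright hx).and ((hright hy).and (Ioo_mem_nhdsGT hss'))).exists
  have := nhdsLT_neBot_of_exists_lt ⟨s, hss'⟩
  obtain ⟨d, hxd, hyd, hd⟩ :=
    ((hleft hx).and ((hleft hy).and (Ioo_mem_nhdsLT hc.2))).exists
  have hIcc {a : E} (ha : a ∈ fixingSubgroup E (uIcc s c)) : a ∈ fixingSubgroup E (Icc s c) :=
    fixingSubgroup_antitone E X Icc_subset_uIcc ha
  exact hφ.additiveOn_inf_fixingSubgroup hs hadd hc.1.le hd.1.le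
    (fun p hp ↦ hgap p ⟨hc.1.trans_le hp.1, hp.2.trans_lt hd.2⟩)
    ⟨hIcc hxc, hxd.2⟩ ⟨hIcc hyc, hyd.2⟩

end Gap

/-- The properties of a group of piecewise linear homeomorphisms of the line with bounded support
on which the argument depends, for an action on an ordered space: it preserves the order, germs at
a common fixed point commute, the fixed points of an element accumulate from the right only where
it is locally the identity, and every element is the identity near both ends. -/
class PLLikeAction (G X : Type*) [Group G] [LinearOrder X] [TopologicalSpace X] [MulAction G X] :
    Prop extends CovariantClass G X HSMul.hSMul LE.le where
  eventually_smul_comm {g h : G} {s : X} (hg : g • s = s) (hh : h • s = s) :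
    ∀ᶠ t in 𝓝 s, g • h • t = h • g • t
  mem_germFixer_nhdsGT {g : G} {s : X} (h : ∃ᶠ t in 𝓝[>] s, g • t = t) : g ∈ germFixer G (𝓝[>] s)
  mem_germFixer_atBot (g : G) : g ∈ germFixer G (atBot : Filter X)
  mem_germFixer_atTop (g : G) : g ∈ germFixer G (atTop : Filter X)

namespace PLLikeAction

section LinearOrder

variable {G X : Type*} [Group G] [LinearOrder X] [TopologicalSpace X] [MulAction G X]
  [PLLikeAction G X]

theorem of_smul_eq {F : Type*} [Group F] [MulAction F X] (f : F → G)
    (hf : ∀ (x : F) (p : X), x • p = f x • p) : PLLikeAction F X where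
  elim x p q hpq := by
    simpa only [hf] using smul_mono_right (f x) hpq
  eventually_smul_comm hg hh := by
    simp only [hf] at hg hh ⊢
    exact eventually_smul_comm hg hh
  mem_germFixer_nhdsGT h := by
    simp only [mem_germFixer, hf] at h ⊢
    exact mem_germFixer_nhdsGT h
  mem_germFixer_atBot x := by
    simpa only [mem_germFixer, hf] using mem_germFixer_atBot (f x)
  mem_germFixer_atTop x := by
    simpa only [mem_germFixer, hf] using mem_germFixer_atTop (f x)

theorem commutator_le_germFixer {s : X} (hs : s ∈ fixedPoints G X) :
    commutator G ≤ germFixer G (𝓝 s) := by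
  rw [commutator_eq_closure, Subgroup.closure_le]
  rintro _ ⟨g, h, rfl⟩
  filter_upwards [eventually_smul_comm (hs g⁻¹) (hs h⁻¹)] with t ht
  simp only [commutatorElement_def, mul_smul]
  rw [ht, smul_inv_smul, smul_inv_smul]

theorem exists_Iic_union_Ici_subset_fixedPoints [Group.FG G] [Nonempty X] :
    ∃ a b : X, a ≤ b ∧ Iic a ∪ Ici b ⊆ fixedPoints G X := by
  obtain ⟨a, ha⟩ :=
    eventually_atBot.1 (eventually_mem_fixedPoints (mem_germFixer_atBot (X := X) (G := G)))
  obtain ⟨b, hb⟩ :=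
    eventually_atTop.1 (eventually_mem_fixedPoints (mem_germFixer_atTop (X := X) (G := G)))
  exact ⟨a, max a b, le_max_left a b,
    union_subset (fun t ↦ ha t) fun t ht ↦ hb t ((le_max_right a b).trans ht)⟩

end LinearOrder

variable {G X : Type*} [Group G] [ConditionallyCompleteLinearOrder X] [TopologicalSpace X]
  [OrderTopology X] [DenselyOrdered X] [MulAction G X] [PLLikeAction G X] {φ : G → ℝ} {b s : X}

theorem mem_of_mem_closure_additiveOn
    (hs : s ∈ closure {p ∈ fixedPoints G X | AdditiveOn φ (derivedBelow G p)}) :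
    s ∈ {p ∈ fixedPoints G X | AdditiveOn φ (derivedBelow G p)} := by
  have hsfix : s ∈ fixedPoints G X :=
    closure_minimal (sep_subset _ _) isClosed_fixedPoints_of_covariantClass hs
  have hgerm := commutator_le_germFixer hsfix
  refine ⟨hsfix, fun x hx y hy ↦ ?_⟩
  obtain ⟨p, ⟨-, hp⟩, hxp, hyp⟩ := ((mem_closure_iff_frequently.1 hs).and_eventually
    ((eventually_mem_derivedBelow hx (hgerm hx.1)).and
      (eventually_mem_derivedBelow hy (hgerm hy.1)))).exists
  exact hp hxp hyp

theorem exists_Icc_subset_fixedPoints [Group.FG G] (hs : s ∈ fixedPoints G X) (hsb : s < b)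
    (h : ∃ᶠ t in 𝓝[>] s, t ∈ fixedPoints G X) : ∃ p ∈ Ioc s b, Icc s p ⊆ fixedPoints G X := by
  have hfix : ∀ᶠ t in 𝓝[>] s, t ∈ fixedPoints G X :=
    eventually_mem_fixedPoints fun g ↦ mem_germFixer_nhdsGT (h.mono fun t ht ↦ ht g)
  obtain ⟨c, hc, hsc⟩ := (mem_nhdsGT_iff_exists_mem_Ioc_Ioo_subset hsb).1 hfix
  obtain ⟨p, hsp, hpc⟩ := exists_between hc.1
  refine ⟨p, ⟨hsp, hpc.le.trans hc.2⟩, fun t ht ↦ ?_⟩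
  rcases ht.1.eq_or_lt with rfl | hst
  · exact hs
  · exact hsc ⟨hst, ht.2.trans_lt hpc⟩

theorem exists_gap (hb : b ∈ fixedPoints G X) (hsb : s < b)
    (h : ∀ᶠ t in 𝓝[>] s, t ∉ fixedPoints G X) :
    ∃ s' ∈ Ioc s b, s' ∈ fixedPoints G X ∧ ∀ p ∈ Ioo s s', p ∉ fixedPoints G X := by
  obtain ⟨c, hc, hsc⟩ := (mem_nhdsGT_iff_exists_mem_Ioc_Ioo_subset hsb).1 h
  have hbdd : BddBelow (fixedPoints G X ∩ Ici c) := bddBelow_Ici.mono inter_subset_right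
  have hmem := (isClosed_fixedPoints_of_covariantClass.inter isClosed_Ici).csInf_mem
    ⟨b, hb, hc.2⟩ hbdd
  refine ⟨_, ⟨hc.1.trans_le hmem.2, csInf_le hbdd ⟨hb, hc.2⟩⟩, hmem.1, fun p hp hpfix ↦ ?_⟩
  rcases lt_or_ge p c with hpc | hcp
  · exact hsc ⟨hp.1, hpc⟩ hpfix
  · exact hp.2.not_ge (csInf_le hbdd ⟨hpfix, hcp⟩)

theorem exists_gt_additiveOn_derivedBelow [Group.FG G] (hφ : IsHomogeneousQuasimorphism φ)
    (hs : s ∈ fixedPoints G X) (hadd : AdditiveOn φ (derivedBelow G s)) (hb : b ∈ fixedPoints G X)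
    (hsb : s < b) :
    ∃ p ∈ Ioc s b, p ∈ fixedPoints G X ∧ AdditiveOn φ (derivedBelow G p) := by
  by_cases hfreq : ∃ᶠ t in 𝓝[>] s, t ∈ fixedPoints G X
  · obtain ⟨p, hp, hsp⟩ := exists_Icc_subset_fixedPoints hs hsb hfreq
    refine ⟨p, hp, hsp ⟨hp.1.le, le_rfl⟩, hadd.mono fun a ha ↦ mem_derivedBelow_of_mem_Icc ha ?_⟩
    exact (mem_fixingSubgroup_iff G).2 fun t ht ↦ hsp ht a
  · obtain ⟨p, hp, hpfix, hgap⟩ := exists_gap hb hsb (not_frequently.1 hfreq)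
    exact ⟨p, hp, hpfix, hφ.additiveOn_derivedBelow_of_gap hs hp.1 hgap
      (commutator_le_germFixer hs) (commutator_le_germFixer hpfix) hadd⟩

-- Sweep from left to right through the fixed points `p` for which `φ` is additive on
-- `derivedBelow G p`, starting where this group acts trivially and ending where it is everything.
theorem map_mul_of_fg [Nonempty X] [Group.FG G] (hφ : IsHomogeneousQuasimorphism φ)
    (hker : AdditiveOn φ (fixingSubgroup G (univ : Set X))) (x y : G) :
    φ (x * y) = φ x + φ y := by
  obtain ⟨a, b, hab, hsub⟩ := exists_Iic_union_Ici_subset_fixedPoints (G := G) (X := X)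
  have ha : a ∈ fixedPoints G X := hsub (.inl self_mem_Iic)
  have hb : b ∈ fixedPoints G X := hsub (.inr self_mem_Ici)
  have hadda : AdditiveOn φ (derivedBelow G a) := hker.mono fun g hg ↦
    (mem_fixingSubgroup_iff G).2 fun t _ ↦ (le_total t a).elim (fun ht ↦ hsub (.inl ht) g)
      fun ht ↦ (mem_fixingSubgroup_iff G).1 hg.2 t ht
  let S : Set X := {p ∈ fixedPoints G X | AdditiveOn φ (derivedBelow G p)}
  have hclosed : IsClosed (S ∩ Icc a b) :=
    (isClosed_of_closure_subset fun _ ↦ mem_of_mem_closure_additiveOn).inter isClosed_Icc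
  have hbS : b ∈ S := hclosed.mem_of_ge_of_forall_exists_gt ⟨ha, hadda⟩ hab fun s hs ↦ by
    obtain ⟨p, hp, hpS⟩ := exists_gt_additiveOn_derivedBelow hφ hs.1.1 hs.1.2 hb hs.2.2
    exact ⟨p, hpS, hp⟩
  refine hφ.map_mul_of_additiveOn_commutator (hbS.2.mono fun g hg ↦ ⟨hg, ?_⟩) x y
  exact (mem_fixingSubgroup_iff G).2 fun t ht ↦ hsub (.inr ht) g

theorem map_mul [Nonempty X] (hφ : IsHomogeneousQuasimorphism φ)
    (hker : AdditiveOn φ (fixingSubgroup G (univ : Set X))) (x y : G) :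
    φ (x * y) = φ x + φ y := by
  let H := Subgroup.closure {x, y}
  have : Group.FG H := Group.closure_finite_fg {x, y}
  have : PLLikeAction H X := .of_smul_eq ((↑) : H → G) fun _ _ ↦ rfl
  have hkerH : AdditiveOn (φ ∘ H.subtype) (fixingSubgroup H (univ : Set X)) := fun a ha b hb ↦
    hker ((mem_fixingSubgroup_iff G).2 ((mem_fixingSubgroup_iff H).1 ha))
      ((mem_fixingSubgroup_iff G).2 ((mem_fixingSubgroup_iff H).1 hb))
  exact map_mul_of_fg (hφ.comp H.subtype) hkerH ⟨x, Subgroup.subset_closure (by simp)⟩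
    ⟨y, Subgroup.subset_closure (by simp)⟩

end PLLikeAction

theorem subgroup_of_PL_is_two_boundedly_acyclic_general {G X : Type*} [Group G]
    [ConditionallyCompleteLinearOrder X] [TopologicalSpace X] [OrderTopology X] [DenselyOrdered X]
    [Nonempty X] [MulAction G X] [PLLikeAction G X]
    (hker : Is2BoundedlyAcyclic (fixingSubgroup G (univ : Set X))) : Is2BoundedlyAcyclic G := by
  intro ω hω
  obtain ⟨φ, hφ, C, hC⟩ :=
    (CentralExtension.isQuasimorphism_fiber (hω := hω)).exists_isHomogeneousQuasimorphism
  let _ : MulAction (CentralExtension hω) X := .compHom X (CentralExtension.proj hω)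
  have : PLLikeAction (CentralExtension hω) X :=
    .of_smul_eq (CentralExtension.proj hω) fun _ _ ↦ rfl
  have hadd : AdditiveOn φ (fixingSubgroup (CentralExtension hω) (univ : Set X)) :=
    CentralExtension.additiveOn_comap_proj hφ hC hker
  exact CentralExtension.isCoboundaryOfBounded (PLLikeAction.map_mul hφ hadd) hC

/-! ### Piecewise linear homeomorphisms -/

section PiecewiseLinear

/-- The germ of `f` at `s` along `l` is affine; in practice `l` is a one-sided neighbourhood
filter of `s`. -/
def HasAffineGerm (f : ℝ → ℝ) (l : Filter ℝ) (s : ℝ) : Prop :=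
  ∃ c, ∀ᶠ t in l, f t = f s + c * (t - s)

variable {f g : ℝ → ℝ} {l : Filter ℝ} {s : ℝ}

namespace HasAffineGerm

theorem of_forall_mem {A : Set ℝ} (hA : A ∈ l) (hs : s ∈ A) {c d : ℝ}
    (h : ∀ t ∈ A, f t = c * t + d) : HasAffineGerm f l s := by
  refine ⟨c, mem_of_superset hA fun t ht ↦ ?_⟩
  rw [mem_ofPred_eq, h t ht, h s hs]
  ring

theorem eventually_comm (hf : HasAffineGerm f l s) (hg : HasAffineGerm g l s) (hfs : f s = s)
    (hgs : g s = s) (hfl : Tendsto f l l) (hgl : Tendsto g l l) :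
    ∀ᶠ t in l, f (g t) = g (f t) := by
  obtain ⟨c, hc⟩ := hf
  obtain ⟨d, hd⟩ := hg
  filter_upwards [hc, hd, hgl.eventually hc, hfl.eventually hd] with t hft hgt hfgt hgft
  rw [hfgt, hgft, hft, hgt, hfs, hgs]
  ring

theorem eventually_eq_self (hf : HasAffineGerm f (𝓝[≥] s) s) (hcont : Continuous f)
    (h : ∃ᶠ t in 𝓝[>] s, f t = t) : ∀ᶠ t in 𝓝[>] s, f t = t := by
  have hfs : f s = s :=
    (isClosed_eq hcont continuous_id).mem_of_frequently_of_tendsto h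
      (tendsto_id.mono_left nhdsWithin_le_nhds)
  obtain ⟨c, hc⟩ := hf
  have hc' := hc.filter_mono (nhdsWithin_mono s Ioi_subset_Ici_self)
  obtain ⟨t, htfix, ht, hst⟩ := (h.and_eventually (hc'.and self_mem_nhdsWithin)).exists
  have hc1 : c = 1 := by
    refine mul_right_cancel₀ (sub_ne_zero.2 (ne_of_gt hst)) ?_
    linarith
  filter_upwards [hc'] with u hu
  rw [hu, hfs, hc1]
  ring

end HasAffineGerm

theorem exists_castSucc_and_not_succ {m : ℕ} {P : Fin (m + 1) → Prop} (hzero : P 0)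
    (hlast : ¬P (Fin.last m)) : ∃ i : Fin m, P i.castSucc ∧ ¬P i.succ := by
  by_contra! h
  exact hlast (Fin.induction hzero h (Fin.last m))

namespace InPL01

variable {f : ℝ ≃o ℝ}

theorem apply_eq_self (hf : InPL01 f) {t : ℝ} (ht : t ∉ Ioo 0 1) : f t = t := by
  have hclosure : closure (Icc (0 : ℝ) 1)ᶜ ⊆ {t | f t = t} :=
    closure_minimal hf.1 (isClosed_eq f.continuous continuous_id)
  rw [closure_compl, interior_Icc] at hclosure
  exact hclosure ht

theorem hasAffineGerm_of_compl_Ioo_mem (hf : InPL01 f) (hs : s ∉ Ioo 0 1)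
    (hl : (Ioo (0 : ℝ) 1)ᶜ ∈ l) : HasAffineGerm f l s :=
  .of_forall_mem hl hs (c := 1) (d := 0) fun t ht ↦ by simp [hf.apply_eq_self ht]

theorem hasAffineGerm_nhdsGE (hf : InPL01 f) (s : ℝ) : HasAffineGerm f (𝓝[≥] s) s := by
  obtain ⟨m, x, hzero, hlast, -, hx⟩ := id hf.2
  rcases lt_or_ge s 0 with hs | hs
  · exact hf.hasAffineGerm_of_compl_Ioo_mem (fun h ↦ h.1.not_gt hs) <| mem_nhdsWithin_of_mem_nhds <|
      mem_of_superset (Iio_mem_nhds hs) fun t ht h ↦ h.1.not_gt ht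
  rcases lt_or_ge s 1 with hs' | hs'
  · obtain ⟨i, hi, hi'⟩ := exists_castSucc_and_not_succ (P := fun i ↦ x i ≤ s) (hzero.trans_le hs)
      (by simpa [hlast])
    obtain ⟨c, d, hcd⟩ := hx i
    have hmem : s ∈ Ico (x i.castSucc) (x i.succ) := ⟨hi, not_le.1 hi'⟩
    exact .of_forall_mem (Icc_mem_nhdsGE_of_mem hmem) (Ico_subset_Icc_self hmem) hcd
  · exact hf.hasAffineGerm_of_compl_Ioo_mem (fun h ↦ h.2.not_ge hs') <|
      mem_of_superset self_mem_nhdsWithin fun t ht h ↦ (hs'.trans ht).not_gt h.2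

theorem hasAffineGerm_nhdsLE (hf : InPL01 f) (s : ℝ) : HasAffineGerm f (𝓝[≤] s) s := by
  obtain ⟨m, x, hzero, hlast, -, hx⟩ := id hf.2
  rcases lt_or_ge 1 s with hs | hs
  · exact hf.hasAffineGerm_of_compl_Ioo_mem (fun h ↦ h.2.not_gt hs) <| mem_nhdsWithin_of_mem_nhds <|
      mem_of_superset (Ioi_mem_nhds hs) fun t ht h ↦ h.2.not_gt ht
  rcases lt_or_ge 0 s with hs' | hs'
  · obtain ⟨i, hi, hi'⟩ := exists_castSucc_and_not_succ (P := fun i ↦ x i < s) (hzero.trans_lt hs')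
      (by simpa [hlast])
    obtain ⟨c, d, hcd⟩ := hx i
    have hmem : s ∈ Ioc (x i.castSucc) (x i.succ) := ⟨hi, not_lt.1 hi'⟩
    exact .of_forall_mem (Icc_mem_nhdsLE_of_mem hmem) (Ioc_subset_Icc_self hmem) hcd
  · exact hf.hasAffineGerm_of_compl_Ioo_mem (fun h ↦ h.1.not_ge hs') <|
      mem_of_superset self_mem_nhdsWithin fun t ht h ↦ (le_trans ht hs').not_gt h.1

theorem eventually_comm {g : ℝ ≃o ℝ} (hf : InPL01 f) (hg : InPL01 g) (hfs : f s = s)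
    (hgs : g s = s) : ∀ᶠ t in 𝓝 s, f (g t) = g (f t) := by
  have htendsto {A : Set ℝ} (k : ℝ ≃o ℝ) (hk : k s = s) (hA : MapsTo k A A) :
      Tendsto k (𝓝[A] s) (𝓝[A] s) := by
    simpa only [hk] using (k.continuous.continuousWithinAt (x := s)).tendsto_nhdsWithin hA
  have hright (k : ℝ ≃o ℝ) (hk : k s = s) : Tendsto k (𝓝[≥] s) (𝓝[≥] s) :=
    htendsto k hk fun _ ht ↦ hk.ge.trans (k.monotone ht)
  have hleft (k : ℝ ≃o ℝ) (hk : k s = s) : Tendsto k (𝓝[≤] s) (𝓝[≤] s) :=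
    htendsto k hk fun _ ht ↦ (k.monotone ht).trans hk.le
  rw [← nhdsLE_sup_nhdsGE, eventually_sup]
  exact ⟨(hf.hasAffineGerm_nhdsLE s).eventually_comm (hg.hasAffineGerm_nhdsLE s) hfs hgs
      (hleft f hfs) (hleft g hgs),
    (hf.hasAffineGerm_nhdsGE s).eventually_comm (hg.hasAffineGerm_nhdsGE s) hfs hgs
      (hright f hfs) (hright g hgs)⟩

end InPL01

theorem PLLikeAction.of_forall_inPL01 {G : Subgroup (ℝ ≃o ℝ)} (hG : ∀ f ∈ G, InPL01 f) :
    PLLikeAction G ℝ where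
  elim g _ _ h := g.1.monotone h
  eventually_smul_comm {g h _} hg hh := (hG g g.2).eventually_comm (hG h h.2) hg hh
  mem_germFixer_nhdsGT {g s} h :=
    ((hG g g.2).hasAffineGerm_nhdsGE s).eventually_eq_self g.1.continuous h
  mem_germFixer_atBot g :=
    (eventually_le_atBot 0).mono fun _ ht ↦ (hG g g.2).apply_eq_self fun h ↦ h.1.not_ge ht
  mem_germFixer_atTop g :=
    (eventually_ge_atTop 1).mono fun _ ht ↦ (hG g g.2).apply_eq_self fun h ↦ h.2.not_ge ht

end PiecewiseLinear

/-- Every subgroup of `PL⁺([0,1])` is 2-boundedly acyclic. -/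
theorem subgroup_of_PL_is_two_boundedly_acyclic (G : Subgroup (ℝ ≃o ℝ))
    (hG : ∀ f ∈ G, InPL01 f) :
    Is2BoundedlyAcyclic ↥G := by
  have := PLLikeAction.of_forall_inPL01 hG
  have := subsingleton_fixingSubgroup_univ (E := G) (X := ℝ)
  exact subgroup_of_PL_is_two_boundedly_acyclic_general (X := ℝ) .of_subsingleton
end

section
/- A quasi-periodic labelling is not periodic: if ρ is a quasi-periodic labelling, then there is no nonzero p ∈ ½ℤ such that ρ(x + p) = ρ(x) for all x ∈ ½ℤ. -/
/-! ### Letters, labellings and quasi-periodicity -/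

/-- The four letters `a, b, a⁻¹, b⁻¹`. -/
inductive Letter : Type
  | a : Letter
  | b : Letter
  | A : Letter  -- `a⁻¹`
  | B : Letter  -- `b⁻¹`
  deriving DecidableEq

/-- The formal inverse of a letter. -/
def Letter.inv : Letter → Letter
  | .a => .A
  | .A => .a
  | .b => .B
  | .B => .b

/-- We encode the set of half-integers `½ℤ` by `ℤ` via `m ↦ m / 2`; integer points
correspond to even indices and proper half-integer points to odd indices.
A labelling assigns `a^{±1}` to integer points and `b^{±1}` to half-integer points. -/
def IsLabelling (ρ : ℤ → Letter) : Prop :=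
  ∀ m : ℤ, (Even m → ρ m = Letter.a ∨ ρ m = Letter.A) ∧
    (Odd m → ρ m = Letter.b ∨ ρ m = Letter.B)

/-- The word of the labelling `ρ` along the block `{k, k+1, …, k+n}` (in the
half-integer encoding, the block of size `n+1` starting at `k/2`). -/
def blockWord (ρ : ℤ → Letter) (k : ℤ) (n : ℕ) : List Letter :=
  (List.range (n + 1)).map fun i => ρ (k + i)

/-- The formal inverse of a word: reverse the word and invert each letter. -/
def wordInv (w : List Letter) : List Letter :=
  (w.map Letter.inv).reverse

/-- A labelling is quasi-periodic if (1) every subword of the labelling appears as a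
subword (string of consecutive letters) of every sufficiently large block, and (2) the
formal inverse of every subword of the labelling is again a subword of the labelling. -/
def IsQuasiPeriodic (ρ : ℤ → Letter) : Prop :=
  IsLabelling ρ ∧
    (∀ (k : ℤ) (n : ℕ), ∃ N : ℕ, ∀ (k' : ℤ) (n' : ℕ), N ≤ n' + 1 →
      (blockWord ρ k n) <:+: (blockWord ρ k' n')) ∧
    (∀ (k : ℤ) (n : ℕ), ∃ k' : ℤ, blockWord ρ k' n = wordInv (blockWord ρ k n))

/-!
Periodicity spreads a formal inversion of one sufficiently long word to a reflection
`ρ (c - m) = (ρ m)⁻¹` valid for all `m`. Reflection preserves the kind of letter (`a^{±1}` or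
`b^{±1}`), so `c` is even, and the letter at its fixed point `c / 2` equals its own inverse.
-/

open Function Set

theorem eq_of_periodic_of_eqOn_Ico {α β : Type*} [AddCommGroup α] [LinearOrder α]
    [IsOrderedAddMonoid α] [Archimedean α] {f g : α → β} {p a : α} (hf : Periodic f p)
    (hg : Periodic g p) (hp : p ≠ 0) (h : EqOn f g (Ico a (a + |p|))) : f = g := by
  have h_pair : Periodic (fun x ↦ (f x, g x)) |p| := by
    have h_period : Periodic (fun x ↦ (f x, g x)) p := fun x ↦ Prod.ext (hf x) (hg x)
    rcases abs_choice p with hp_abs | hp_abs <;> rw [hp_abs]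
    exacts [h_period, h_period.neg]
  funext x
  obtain ⟨y, hy, hxy⟩ := h_pair.exists_mem_Ico (abs_pos.mpr hp) x a
  obtain ⟨hfx, hgx⟩ := Prod.ext_iff.mp hxy
  exact hfx.trans ((h hy).trans hgx.symm)

theorem Letter.inv_ne_self (x : Letter) : x.inv ≠ x := by
  cases x <;> decide

theorem IsLabelling.even_iff {ρ : ℤ → Letter} (hρ : IsLabelling ρ) {m : ℤ} :
    Even m ↔ ρ m = Letter.a ∨ ρ m = Letter.A := by
  refine ⟨(hρ m).1, fun h_letter ↦ Int.not_odd_iff_even.mp fun h_odd ↦ ?_⟩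
  rcases (hρ m).2 h_odd with h | h <;> simp [h] at h_letter

theorem IsLabelling.even_iff_of_eq_inv {ρ : ℤ → Letter} (hρ : IsLabelling ρ) {i j : ℤ}
    (h : ρ i = (ρ j).inv) : Even i ↔ Even j := by
  rw [hρ.even_iff, hρ.even_iff, h]
  cases ρ j <;> simp [Letter.inv]

-- In `blockWord` the index `i` is an integer: the list `List.range (n + 1)` is itself coerced to
-- `List ℤ`, through the monad structure of lists.
theorem blockWord_eq_map (ρ : ℤ → Letter) (k : ℤ) (n : ℕ) :
    blockWord ρ k n = (List.range (n + 1)).map fun i : ℕ ↦ ρ (k + i) := by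
  simp [blockWord, ← List.map_eq_flatMap]

theorem getElem?_blockWord (ρ : ℤ → Letter) (k : ℤ) {n i : ℕ} (hi : i ≤ n) :
    (blockWord ρ k n)[i]? = some (ρ (k + i)) := by
  simp [blockWord_eq_map, Nat.lt_succ_of_le hi]

theorem getElem?_wordInv_blockWord (ρ : ℤ → Letter) (k : ℤ) {n i : ℕ} (hi : i ≤ n) :
    (wordInv (blockWord ρ k n))[i]? = some (ρ (k + n - i)).inv := by
  simp [wordInv, blockWord_eq_map, Nat.lt_succ_of_le hi, Nat.cast_sub hi, add_sub_assoc]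

theorem eq_inv_of_blockWord_eq_wordInv {ρ : ℤ → Letter} {k k' : ℤ} {n : ℕ}
    (h : blockWord ρ k' n = wordInv (blockWord ρ k n)) {m : ℤ} (hm : m ∈ Icc k (k + n)) :
    ρ (k + k' + n - m) = (ρ m).inv := by
  obtain ⟨hkm, hmn⟩ := hm
  obtain ⟨i, hi⟩ := Int.eq_ofNat_of_zero_le (sub_nonneg.mpr hmn)
  have hin : i ≤ n := by omega
  have h_letter := congrArg (·[i]?) h
  simp only [getElem?_blockWord ρ k' hin, getElem?_wordInv_blockWord ρ k hin,
    Option.some.injEq] at h_letter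
  convert h_letter using 3 <;> omega

theorem reflection_eq_inv_of_periodic {ρ : ℤ → Letter} {p k k' : ℤ} {n : ℕ}
    (hper : Periodic ρ p) (hp : p ≠ 0) (hn : |p| ≤ n + 1)
    (h : blockWord ρ k' n = wordInv (blockWord ρ k n)) (m : ℤ) :
    ρ (k + k' + n - m) = (ρ m).inv := by
  have h_block : EqOn (fun m ↦ ρ (k + k' + n - m)) (Letter.inv ∘ ρ) (Ico k (k + |p|)) :=
    fun m hm ↦ eq_inv_of_blockWord_eq_wordInv h ⟨hm.1, by linarith [Int.add_one_le_iff.mpr hm.2]⟩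
  exact congrFun
    (eq_of_periodic_of_eqOn_Ico (hper.const_sub _) (hper.comp Letter.inv) hp h_block) m

theorem quasiPeriodic_not_periodic_general {ρ : ℤ → Letter} {p k k' : ℤ} {n : ℕ}
    (hρ : IsLabelling ρ) (hp : p ≠ 0) (hn : |p| ≤ n + 1)
    (h : blockWord ρ k' n = wordInv (blockWord ρ k n)) : ¬ Periodic ρ p := by
  intro hper
  have h_reflect := reflection_eq_inv_of_periodic hper hp hn h
  have h_even : Even (k + k' + n) := by
    simpa only [sub_zero, Even.zero, iff_true] using hρ.even_iff_of_eq_inv (h_reflect 0)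
  obtain ⟨d, hd⟩ := h_even
  have h_fixed : ρ d = (ρ d).inv := by
    simpa only [hd, add_sub_cancel_right] using h_reflect d
  exact (ρ d).inv_ne_self h_fixed.symm

/-- A quasi-periodic labelling is not periodic: there is no nonzero
`p ∈ ½ℤ` (encoded as a nonzero integer in our encoding of `½ℤ` by `ℤ`) such that
`ρ(x + p) = ρ(x)` for all `x`. -/
theorem quasiPeriodic_not_periodic (ρ : ℤ → Letter) (hρ : IsQuasiPeriodic ρ) :
    ¬ ∃ p : ℤ, p ≠ 0 ∧ ∀ m : ℤ, ρ (m + p) = ρ m := by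
  rintro ⟨p, hp, hper⟩
  obtain ⟨k', h⟩ := hρ.2.2 0 p.natAbs
  exact quasiPeriodic_not_periodic_general hρ.1 hp (by simp) h hper
end

section
/- Let F be Thompson's group and let H be the subgroup of F consisting of elements whose slopes at 0 and 1 coincide. Then: (i) H is generated by three elements; (ii) the commutator subgroup H' of H is simple; and (iii) H' consists precisely of the elements of F whose support has closure contained in the open interval (0,1); in particular H' equals the commutator subgroup F' of F. -/
/-! ### Thompson's group `F` and the subgroup `H`

Orientation-preserving homeomorphisms of `[0,1]` are realised as order-automorphisms
of `ℝ` that are the identity outside `[0,1]`; orientation-preserving homeomorphisms of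
the line are order-automorphisms of `ℝ`. -/

/-- A dyadic rational real number, i.e. an element of `ℤ[1/2]`. -/
def IsDyadic (x : ℝ) : Prop :=
  ∃ (a : ℤ) (b : ℕ), x = (a : ℝ) / 2 ^ b

/-- Membership in Thompson's group `F`: the identity outside `[0,1]`, and on `[0,1]`
piecewise linear with breakpoints in `ℤ[1/2]` and slopes integer powers of `2`. -/
def InThompsonF (f : ℝ ≃o ℝ) : Prop :=
  (∀ x : ℝ, x ∉ Set.Icc (0 : ℝ) 1 → f x = x) ∧
    ∃ (m : ℕ) (x : Fin (m + 1) → ℝ), x 0 = 0 ∧ x (Fin.last m) = 1 ∧ StrictMono x ∧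
      (∀ i, IsDyadic (x i)) ∧
      ∀ i : Fin m, ∃ (k : ℤ) (c : ℝ),
        ∀ t ∈ Set.Icc (x i.castSucc) (x i.succ), f t = 2 ^ k * t + c

/-- Membership in the subgroup `H ≤ F` of elements whose slopes at `0` and `1`
coincide. -/
def InH (f : ℝ ≃o ℝ) : Prop :=
  InThompsonF f ∧
    ∃ (k : ℤ) (ε : ℝ), 0 < ε ∧ (∀ t ∈ Set.Icc (0 : ℝ) ε, f t = 2 ^ k * t) ∧
      ∀ t ∈ Set.Icc (1 - ε) (1 : ℝ), f t = 1 + 2 ^ k * (t - 1)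

/-! ### The generators of `G_ρ` -/

/-- `ζ` is the homeomorphism of `ℝ` which on each `[n, n+1]` is the conjugate of `ν`
(a homeomorphism of `[0,1]`) by the orientation-preserving isometry `[n,n+1] → [0,1]`
if `ρ(n + ½) = b`, and by the orientation-reversing isometry if `ρ(n + ½) = b⁻¹`.
(In the encoding of `½ℤ` by `ℤ`, the point `n + ½` has index `2n + 1`.) -/
def IsZeta (ρ : ℤ → Letter) (ν ζ : ℝ ≃o ℝ) : Prop :=
  ∀ n : ℤ, ∀ x ∈ Set.Icc (n : ℝ) (n + 1),
    (ρ (2 * n + 1) = Letter.b → ζ x = n + ν (x - n)) ∧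
    (ρ (2 * n + 1) = Letter.B → ζ x = (n + 1) - ν ((n + 1) - x))

/-- `χ` is the homeomorphism of `ℝ` which on each `[n-½, n+½]` is the conjugate of `ν`
by the orientation-preserving isometry `[n-½, n+½] → [0,1]` if `ρ(n) = a`, and by the
orientation-reversing isometry if `ρ(n) = a⁻¹`. -/
def IsChi (ρ : ℤ → Letter) (ν χ : ℝ ≃o ℝ) : Prop :=
  ∀ n : ℤ, ∀ x ∈ Set.Icc ((n : ℝ) - 1/2) ((n : ℝ) + 1/2),
    (ρ (2 * n) = Letter.a → χ x = ((n : ℝ) - 1/2) + ν (x - ((n : ℝ) - 1/2))) ∧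
    (ρ (2 * n) = Letter.A → χ x = ((n : ℝ) + 1/2) - ν (((n : ℝ) + 1/2) - x))

/-! The slopes at the endpoints are homomorphisms on `F`, and the elements of `F` with both slopes
`1` are those whose support has closure in `(0, 1)`; they form a subgroup `F_c`, and
`[F, F] ≤ F_c ≤ H ≤ F`.

Generation: an element of `F` supported in a dyadic interval `I` maps one binary subdivision of `I`
piecewise affinely onto another. Rotating trees turns every subdivision into a right comb, so the
element is a product of the rotations of `I` and of the right half of `I` and their inverses. An
element of `H` of slope `2` at the endpoints that attracts `(0, 1)` to the middle of `I` has a power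
conjugating a given element of `F_c` into the group generated by these two rotations, and every
element of `H` is the product of an element of `F_c` and a power of the attracting element.

Perfectness: the pentagon relation expresses the square of a rotation as a product of three of its
conjugates, so a rotation lies in the commutator subgroup of any group that contains it and the
conjugating elements. Hence `F_c = [F_c, F_c]`, and therefore `[H, H] = F_c = [F, F]`.

Simplicity (Higman): a normal subgroup containing `g` with `U` and `g U` disjoint contains `⁅f, h⁆`
for all `f` and `h` supported in `U`, and any two elements of `F_c` can be conjugated
simultaneously into having support in a prescribed open subinterval of `(0, 1)`. -/

open Set Filter Topology
open AffineMap (lineMap)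
open scoped commutatorElement Pointwise BinaryTree

/-! ### Piecewise linear homeomorphisms of the line -/

/-- The pointwise maximum of two order automorphisms; its inverse is the pointwise minimum of the
inverses. -/
def supIso {α : Type*} [LinearOrder α] (f g : α ≃o α) : α ≃o α where
  toFun t := f t ⊔ g t
  invFun t := f.symm t ⊓ g.symm t
  left_inv t := by
    rcases le_total (f t) (g t) with h | h
    · simpa [h] using f.le_symm_apply.2 h
    · simpa [h] using g.le_symm_apply.2 h
  right_inv t := by
    rcases le_total (f.symm t) (g.symm t) with h | h
    · simpa [h] using g.le_symm_apply.1 h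
    · simpa [h] using f.le_symm_apply.1 h
  map_rel_iff' {s t} := by
    refine ⟨fun h => ?_, fun h => sup_le_sup (f.monotone h) (g.monotone h)⟩
    by_contra! hlt
    exact h.not_gt (max_lt_max (f.strictMono hlt) (g.strictMono hlt))

/-- The pointwise minimum of two order automorphisms. -/
def infIso {α : Type*} [LinearOrder α] (f g : α ≃o α) : α ≃o α :=
  (supIso f.symm g.symm).symm

/-- The homeomorphism `t ↦ c * t + d` of the line. -/
noncomputable def affineIso (c d : ℝ) (hc : 0 < c) : ℝ ≃o ℝ :=
  (OrderIso.mulLeft₀ c hc).trans (OrderIso.addRight d)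

/-- The left half of the interval with endpoints `I.1` and `I.2`. -/
noncomputable def lowerHalf (I : ℝ × ℝ) : ℝ × ℝ := (I.1, (I.1 + I.2) / 2)

/-- The right half of the interval with endpoints `I.1` and `I.2`. -/
noncomputable def upperHalf (I : ℝ × ℝ) : ℝ × ℝ := ((I.1 + I.2) / 2, I.2)

/-- The basic rotation of the interval `I`, which is given by its pair of endpoints: it maps the
first quarter, the second quarter and the second half of `I` affinely onto the first half, the third
quarter and the last quarter, and it fixes every point outside `I`. -/
noncomputable def rot (I : ℝ × ℝ) : ℝ ≃o ℝ :=
  supIso 1 (infIso (affineIso 2 (-I.1) two_pos)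
    (infIso (affineIso 1 ((I.2 - I.1) / 4) one_pos) (affineIso (1 / 2) (I.2 / 2) one_half_pos)))

section Rotation

variable {I : ℝ × ℝ} {t : ℝ}

theorem rot_apply (I : ℝ × ℝ) (t : ℝ) : rot I t =
    max t (min (2 * t - I.1) (min (t + (I.2 - I.1) / 4) ((t + I.2) / 2))) := by
  change max t (min (2 * t + -I.1) (min (1 * t + (I.2 - I.1) / 4) (1 / 2 * t + I.2 / 2))) = _
  ring_nf

theorem rot_of_le_left (h : t ≤ I.1) : rot I t = t := by
  grind [rot_apply]

theorem rot_of_right_le (h : I.2 ≤ t) : rot I t = t := by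
  grind [rot_apply]

theorem rot_of_notMem (h : t ∉ Ioo I.1 I.2) : rot I t = t := by
  grind [rot_apply]

theorem rot_first_quarter (h : t ∈ Icc I.1 (I.1 + (I.2 - I.1) / 4)) : rot I t = 2 * t - I.1 := by
  grind [rot_apply]

theorem rot_second_quarter (h : t ∈ Icc (I.1 + (I.2 - I.1) / 4) ((I.1 + I.2) / 2)) :
    rot I t = t + (I.2 - I.1) / 4 := by
  grind [rot_apply]

theorem rot_second_half (h : t ∈ Icc ((I.1 + I.2) / 2) I.2) : rot I t = (t + I.2) / 2 := by
  grind [rot_apply]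

theorem lt_rot (h : t ∈ Ioo I.1 I.2) : t < rot I t := by
  grind [rot_apply]

theorem rot_mem_Icc (h : t ∈ Icc I.1 I.2) : rot I t ∈ Icc I.1 I.2 := by
  grind [rot_apply]

theorem rot_mul_rot (hI : I.1 ≤ I.2) :
    rot I * rot I = rot (upperHalf I) * rot I * rot (lowerHalf I) := by
  ext t
  have hfirst := rot_apply I t
  have hsecond := rot_apply I (rot I t)
  have hlower := rot_apply (lowerHalf I) t
  have hmiddle := rot_apply I (rot (lowerHalf I) t)
  have hupper := rot_apply (upperHalf I) (rot I (rot (lowerHalf I) t))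
  simp only [RelIso.mul_apply]
  grind (splits := 20) [lowerHalf, upperHalf]

end Rotation

/-! ### Affine pieces -/

/-- The order automorphism `g` restricts to the affine bijection of the interval `[I.1, I.2]` onto
the interval `[J.1, J.2]`. Intervals are encoded by their pairs of endpoints. -/
def MapsAffinely (g : ℝ ≃o ℝ) (I J : ℝ × ℝ) : Prop :=
  ∀ s ∈ Icc (0 : ℝ) 1, g (lineMap I.1 I.2 s) = lineMap J.1 J.2 s

theorem exists_lineMap_eq {a b t : ℝ} (ht : t ∈ Icc a b) :
    ∃ s ∈ Icc (0 : ℝ) 1, lineMap a b s = t := by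
  rwa [← segment_eq_Icc (ht.1.trans ht.2), segment_eq_image_lineMap] at ht

namespace MapsAffinely

variable {g h : ℝ ≃o ℝ} {I J K : ℝ × ℝ}

theorem mul (hh : MapsAffinely h J K) (hg : MapsAffinely g I J) : MapsAffinely (h * g) I K :=
  fun s hs => by rw [RelIso.mul_apply, hg s hs, hh s hs]

theorem inv (hg : MapsAffinely g I J) : MapsAffinely g⁻¹ J I :=
  fun s hs => by rw [← hg s hs, RelIso.inv_apply_self]

theorem of_eqOn {c d : ℝ} (hI : I.1 ≤ I.2) (hg : ∀ t ∈ Icc I.1 I.2, g t = c * t + d)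
    (hJ₁ : c * I.1 + d = J.1) (hJ₂ : c * I.2 + d = J.2) : MapsAffinely g I J := by
  intro s hs
  rw [hg _ (by simpa [segment_eq_Icc hI] using lineMap_mem_segment ℝ I.1 I.2 hs), ← hJ₁, ← hJ₂]
  simp only [AffineMap.lineMap_apply_ring']
  ring

theorem of_eqOn_id (hI : I.1 ≤ I.2) (hg : EqOn g id (Icc I.1 I.2)) : MapsAffinely g I I :=
  .of_eqOn (c := 1) (d := 0) hI (by simpa [EqOn] using hg) (by ring) (by ring)

theorem map_fst (hg : MapsAffinely g I J) : g I.1 = J.1 := by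
  simpa using hg 0 (by simp)

theorem map_snd (hg : MapsAffinely g I J) : g I.2 = J.2 := by
  simpa using hg 1 (by simp)

theorem apply_eq_self (hg : MapsAffinely g I I) {t : ℝ} (ht : t ∈ Icc I.1 I.2) : g t = t := by
  obtain ⟨s, hs, rfl⟩ := exists_lineMap_eq ht
  exact hg s hs

theorem restrict (hg : MapsAffinely g I J) {u v : ℝ} (hu : u ∈ Icc (0 : ℝ) 1)
    (hv : v ∈ Icc (0 : ℝ) 1) :
    MapsAffinely g (lineMap I.1 I.2 u, lineMap I.1 I.2 v)
      (lineMap J.1 J.2 u, lineMap J.1 J.2 v) := by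
  intro s hs
  have hmem : lineMap u v s ∈ Icc (0 : ℝ) 1 := (convex_Icc 0 1).lineMap_mem hu hv hs
  simp only [← AffineMap.apply_lineMap]
  exact hg _ hmem

theorem lowerHalf (hg : MapsAffinely g I J) : MapsAffinely g (lowerHalf I) (lowerHalf J) := by
  convert hg.restrict (u := 0) (v := 1 / 2) (by norm_num) (by norm_num) using 2 <;>
    simp only [_root_.lowerHalf, AffineMap.lineMap_apply_ring'] <;> ring

theorem upperHalf (hg : MapsAffinely g I J) : MapsAffinely g (upperHalf I) (upperHalf J) := by
  convert hg.restrict (u := 1 / 2) (v := 1) (by norm_num) (by norm_num) using 2 <;>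
    simp only [_root_.upperHalf, AffineMap.lineMap_apply_ring'] <;> ring

end MapsAffinely

/-! ### Rotations and affine maps -/

section

variable {I J : ℝ × ℝ} {k : ℝ ≃o ℝ}

theorem rot_lineMap (hI : I.1 ≤ I.2) (s : ℝ) :
    rot I (lineMap I.1 I.2 s) = lineMap I.1 I.2 (rot (0, 1) s) := by
  have hmono : Monotone (lineMap I.1 I.2 : ℝ → ℝ) := fun s t hst => by
    simp only [AffineMap.lineMap_apply_ring']
    gcongr
  simp only [rot_apply, hmono.map_max, hmono.map_min]
  simp only [AffineMap.lineMap_apply_ring']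
  ring_nf

theorem conj_rot (hI : I.1 < I.2) (hk : MapsAffinely k I J) : k * rot I * k⁻¹ = rot J := by
  have hJ : J.1 < J.2 := by simpa only [← hk.map_fst, ← hk.map_snd] using k.strictMono hI
  rw [mul_inv_eq_iff_eq_mul]
  ext t
  rw [RelIso.mul_apply, RelIso.mul_apply]
  by_cases ht : t ∈ Icc I.1 I.2
  · obtain ⟨s, hs, rfl⟩ := exists_lineMap_eq ht
    rw [rot_lineMap hI.le, hk _ (rot_mem_Icc (I := (0, 1)) hs), hk s hs, rot_lineMap hJ.le]
  · rw [rot_of_notMem (notMem_subset Ioo_subset_Icc_self ht),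
      rot_of_notMem (notMem_subset Ioo_subset_Icc_self ?_)]
    simpa only [← hk.map_fst, ← hk.map_snd, mem_Icc, OrderIso.le_iff_le] using ht

theorem mapsAffinely_rot_lowerHalf_lowerHalf (hI : I.1 ≤ I.2) :
    MapsAffinely (rot I) (lowerHalf (lowerHalf I)) (lowerHalf I) := by
  refine .of_eqOn (c := 2) (d := -I.1) ?_ (fun t ht => ?_) ?_ ?_ <;> simp only [lowerHalf] at *
  · linarith
  · rw [rot_first_quarter (by convert ht using 2; ring)]; ring
  all_goals ring

theorem mapsAffinely_rot_upperHalf_lowerHalf (hI : I.1 ≤ I.2) :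
    MapsAffinely (rot I) (upperHalf (lowerHalf I)) (lowerHalf (upperHalf I)) := by
  refine .of_eqOn (c := 1) (d := (I.2 - I.1) / 4) ?_ (fun t ht => ?_) ?_ ?_ <;>
    simp only [lowerHalf, upperHalf] at *
  · linarith
  · rw [rot_second_quarter (by convert ht using 2; ring)]; ring
  all_goals ring

theorem mapsAffinely_rot_upperHalf (hI : I.1 ≤ I.2) :
    MapsAffinely (rot I) (upperHalf I) (upperHalf (upperHalf I)) := by
  refine .of_eqOn (c := 1 / 2) (d := I.2 / 2) ?_ (fun t ht => ?_) ?_ ?_ <;>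
    simp only [upperHalf] at *
  · linarith
  · rw [rot_second_half ht]; ring
  all_goals ring

end

/-- In an abelian quotient the hypothesis on `x` reads `x ^ 2 = x ^ 3`. -/
theorem mem_commutator_of_mul_self_eq {G : Type*} [Group G] {K : Subgroup G} {x u v : G}
    (hx : x ∈ K) (hu : u ∈ K) (hv : v ∈ K)
    (h : x * x = (v * x * v⁻¹) * x * (u * x * u⁻¹)) : x ∈ ⁅K, K⁆ := by
  have hvx := Subgroup.commutator_mem_commutator hv hx
  have hconj := Subgroup.commutator_mem_commutator (inv_mem (mul_mem hx hx))
    (Subgroup.commutator_le_self K hvx)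
  have hx' : x⁻¹ = ⁅(x * x)⁻¹, ⁅v, x⁆⁆ * ⁅v, x⁆ * ⁅u, x⁆ := calc
    x⁻¹ = (x * x)⁻¹ * ((v * x * v⁻¹) * x * (u * x * u⁻¹)) * x⁻¹ := by rw [← h]; group
    _ = ⁅(x * x)⁻¹, ⁅v, x⁆⁆ * ⁅v, x⁆ * ⁅u, x⁆ := by simp only [commutatorElement_def]; group
  rw [← inv_mem_iff, hx']
  exact mul_mem (mul_mem hconj hvx) (Subgroup.commutator_mem_commutator hu hx)

theorem rot_mem_commutator {G : Subgroup (ℝ ≃o ℝ)} {I : ℝ × ℝ} (hI : I.1 < I.2)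
    (hG : rot I ∈ G) {u v : ℝ ≃o ℝ} (hu : u ∈ G) (hv : v ∈ G)
    (hlower : MapsAffinely u I (lowerHalf I)) (hupper : MapsAffinely v I (upperHalf I)) :
    rot I ∈ ⁅G, G⁆ := by
  refine mem_commutator_of_mul_self_eq hG hu hv ?_
  rw [conj_rot hI hlower, conj_rot hI hupper]
  exact rot_mul_rot hI.le

/-! ### Binary subdivisions of intervals -/

/-- The intervals of the subdivision of `I` encoded by a binary tree: a node halves the interval and
a leaf keeps it. -/
noncomputable def pieces (I : ℝ × ℝ) : BinaryTree Unit → List (ℝ × ℝ)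
  | .nil => [I]
  | .node _ l r => pieces (lowerHalf I) l ++ pieces (upperHalf I) r

/-- The binary tree with `n` nodes all of whose left subtrees are leaves. -/
def rightComb : ℕ → BinaryTree Unit
  | 0 => .nil
  | n + 1 => .nil △ rightComb n

theorem length_pieces (I : ℝ × ℝ) (T : BinaryTree Unit) : (pieces I T).length = T.numLeaves := by
  induction T using BinaryTree.unitRecOn generalizing I with
  | base => rfl
  | ind l r hl hr => simp [pieces, hl, hr, BinaryTree.numLeaves]

section Pieces

variable {I J : ℝ × ℝ} {g h : ℝ ≃o ℝ} {L M N : List (ℝ × ℝ)} {T : BinaryTree Unit}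

theorem forall₂_mapsAffinely_mul (hh : List.Forall₂ (MapsAffinely h) M N)
    (hg : List.Forall₂ (MapsAffinely g) L M) : List.Forall₂ (MapsAffinely (h * g)) L N := by
  induction hg generalizing N with
  | nil => cases hh; exact .nil
  | cons hg _ ih =>
    obtain _ | ⟨hh, hh'⟩ := hh
    exact .cons (hh.mul hg) (ih hh')

theorem forall₂_mapsAffinely_inv (hg : List.Forall₂ (MapsAffinely g) L M) :
    List.Forall₂ (MapsAffinely g⁻¹) M L :=
  (hg.imp fun _ _ => MapsAffinely.inv).flip

theorem MapsAffinely.pieces (hg : MapsAffinely g I J) :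
    List.Forall₂ (MapsAffinely g) (pieces I T) (pieces J T) := by
  induction T using BinaryTree.unitRecOn generalizing I J with
  | base => exact .cons hg .nil
  | ind l r hl hr => exact List.rel_append (hl hg.lowerHalf) (hr hg.upperHalf)

theorem apply_eq_self_of_forall₂_pieces
    (hg : List.Forall₂ (MapsAffinely g) (pieces I T) (pieces I T)) {t : ℝ} (ht : t ∈ Icc I.1 I.2) :
    g t = t := by
  rw [List.forall₂_same] at hg
  induction T using BinaryTree.unitRecOn generalizing I with
  | base => exact (hg I (List.mem_singleton_self I)).apply_eq_self ht
  | ind l r hl hr =>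
    rcases le_total t ((I.1 + I.2) / 2) with hmid | hmid
    · exact hl (fun K hK => hg K (List.mem_append_left _ hK)) ⟨ht.1, hmid⟩
    · exact hr (fun K hK => hg K (List.mem_append_right _ hK)) ⟨hmid, ht.2⟩

end Pieces

/-- The subgroup generated by the rotations of an interval `I` and of its iterated right halves. -/
noncomputable def spineGroup (I : ℝ × ℝ) : Subgroup (ℝ ≃o ℝ) :=
  Subgroup.closure (range fun n : ℕ => rot (upperHalf^[n] I))

section Spine

variable {I : ℝ × ℝ} {g : ℝ ≃o ℝ}

theorem rot_mem_spineGroup (I : ℝ × ℝ) : rot I ∈ spineGroup I :=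
  Subgroup.subset_closure ⟨0, rfl⟩

theorem spineGroup_upperHalf_le (I : ℝ × ℝ) : spineGroup (upperHalf I) ≤ spineGroup I :=
  Subgroup.closure_mono (range_subset_iff.2 fun n => ⟨n + 1, rfl⟩)

theorem mapsAffinely_rot_iterate_upperHalf (hI : I.1 ≤ I.2) (n : ℕ) :
    MapsAffinely (rot I) (upperHalf^[n + 1] I) (upperHalf^[n + 2] I) := by
  induction n with
  | zero => exact mapsAffinely_rot_upperHalf hI
  | succ n ih => simpa only [Function.iterate_succ_apply'] using ih.upperHalf

theorem iterate_upperHalf_fst_lt_snd (hI : I.1 < I.2) (n : ℕ) :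
    (upperHalf^[n] I).1 < (upperHalf^[n] I).2 := by
  induction n with
  | zero => exact hI
  | succ n ih =>
    rw [Function.iterate_succ_apply']
    simp only [upperHalf] at ih ⊢
    linarith

theorem spineGroup_eq_closure (hI : I.1 < I.2) :
    spineGroup I = Subgroup.closure {rot I, rot (upperHalf I)} := by
  have hmem : ∀ n : ℕ, rot (upperHalf^[n] I) ∈ Subgroup.closure {rot I, rot (upperHalf I)} := by
    have hrot : rot I ∈ Subgroup.closure {rot I, rot (upperHalf I)} :=
      Subgroup.subset_closure (by simp)
    have hsucc : ∀ n : ℕ,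
        rot (upperHalf^[n + 1] I) ∈ Subgroup.closure {rot I, rot (upperHalf I)} := by
      intro n
      induction n with
      | zero => exact Subgroup.subset_closure (by simp)
      | succ n ih =>
        rw [← conj_rot (iterate_upperHalf_fst_lt_snd hI _)
          (mapsAffinely_rot_iterate_upperHalf hI.le n)]
        exact mul_mem (mul_mem hrot ih) (inv_mem hrot)
    rintro (_ | n)
    exacts [hrot, hsucc n]
  refine le_antisymm ((Subgroup.closure_le _).2 (range_subset_iff.2 hmem))
    (Subgroup.closure_mono ?_)
  rintro _ (rfl | rfl)
  exacts [⟨0, rfl⟩, ⟨1, rfl⟩]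

theorem spineGroup_le_fixingSubgroup (hI : I.1 < I.2) :
    spineGroup I ≤ fixingSubgroup (ℝ ≃o ℝ) (Ioo I.1 I.2)ᶜ := by
  have hsub : ∀ n : ℕ, Ioo (upperHalf^[n] I).1 (upperHalf^[n] I).2 ⊆ Ioo I.1 I.2 := by
    intro n
    induction n with
    | zero => exact subset_rfl
    | succ n ih =>
      refine subset_trans (Ioo_subset_Ioo ?_ ?_) ih <;> rw [Function.iterate_succ_apply']
      · have := iterate_upperHalf_fst_lt_snd hI n
        simp only [upperHalf]
        linarith
      · rfl
  refine (Subgroup.closure_le _).2 (range_subset_iff.2 fun n => ?_)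
  exact (mem_fixingSubgroup_iff _).2 fun t ht => rot_of_notMem (notMem_subset (hsub n) ht)

/-- Rotating repeatedly at the root turns the left subtree into a leaf. -/
theorem exists_mem_spineGroup_forall₂_nil_node (hI : I.1 ≤ I.2) (l r : BinaryTree Unit) :
    ∃ g ∈ spineGroup I, ∃ r' : BinaryTree Unit,
      List.Forall₂ (MapsAffinely g) (pieces I (l △ r)) (pieces I (.nil △ r')) := by
  induction l using BinaryTree.unitRecOn generalizing r with
  | base => exact ⟨1, one_mem _, r, List.forall₂_same.2 fun _ _ _ _ => rfl⟩
  | ind x y hx _ =>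
    obtain ⟨g, hg, r', hgr⟩ := hx (y △ r)
    refine ⟨g * rot I, mul_mem hg (rot_mem_spineGroup I), r', forall₂_mapsAffinely_mul hgr ?_⟩
    simp only [pieces, List.append_assoc]
    exact List.rel_append (mapsAffinely_rot_lowerHalf_lowerHalf hI).pieces
      (List.rel_append (mapsAffinely_rot_upperHalf_lowerHalf hI).pieces
        (mapsAffinely_rot_upperHalf hI).pieces)

theorem exists_mem_spineGroup_forall₂_rightComb (hI : I.1 < I.2) (T : BinaryTree Unit) :
    ∃ g ∈ spineGroup I,
      List.Forall₂ (MapsAffinely g) (pieces I T) (pieces I (rightComb T.numNodes)) := by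
  generalize hn : T.numNodes = n
  induction n generalizing I T with
  | zero =>
    obtain rfl : T = .nil := by cases T <;> simp_all
    exact ⟨1, one_mem _, List.forall₂_same.2 fun _ _ _ _ => rfl⟩
  | succ n ih =>
    obtain _ | ⟨⟨⟩, l, r⟩ := T
    · simp at hn
    obtain ⟨g, hg, r', hgr⟩ := exists_mem_spineGroup_forall₂_nil_node hI.le l r
    have hr' : r'.numNodes = n := by
      have := hgr.length_eq
      simp only [length_pieces, BinaryTree.numLeaves_eq_numNodes_succ] at this
      simp only [BinaryTree.numNodes] at this hn
      omega
    have hI' : (upperHalf I).1 < (upperHalf I).2 := iterate_upperHalf_fst_lt_snd hI 1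
    obtain ⟨k, hk, hkr⟩ := ih hI' r' hr'
    refine ⟨k * g, mul_mem (spineGroup_upperHalf_le I hk) hg, forall₂_mapsAffinely_mul ?_ hgr⟩
    refine .cons (.of_eqOn_id (by simp only [lowerHalf]; linarith) fun t ht => ?_) hkr
    exact (mem_fixingSubgroup_iff _).1 (spineGroup_le_fixingSubgroup hI' hk) t
      fun ht' => ht'.1.not_ge ht.2

theorem mem_spineGroup_of_forall₂_pieces {f : ℝ ≃o ℝ} (hI : I.1 < I.2)
    (hf : f ∈ fixingSubgroup (ℝ ≃o ℝ) (Ioo I.1 I.2)ᶜ) {S T : BinaryTree Unit}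
    (hST : List.Forall₂ (MapsAffinely f) (pieces I S) (pieces I T)) : f ∈ spineGroup I := by
  have hnodes : S.numNodes = T.numNodes := by
    simpa only [length_pieces, BinaryTree.numLeaves_eq_numNodes_succ, add_left_inj]
      using hST.length_eq
  obtain ⟨g, hg, hgS⟩ := exists_mem_spineGroup_forall₂_rightComb hI S
  obtain ⟨h, hh, hhT⟩ := exists_mem_spineGroup_forall₂_rightComb hI T
  rw [hnodes] at hgS
  have hone : h⁻¹ * g * f⁻¹ = 1 := by
    ext t
    by_cases ht : t ∈ Ioo I.1 I.2
    · exact apply_eq_self_of_forall₂_pieces (forall₂_mapsAffinely_mul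
        (forall₂_mapsAffinely_mul (forall₂_mapsAffinely_inv hhT) hgS)
        (forall₂_mapsAffinely_inv hST)) (Ioo_subset_Icc_self ht)
    · have hle := spineGroup_le_fixingSubgroup hI
      have hmem := mul_mem (mul_mem (inv_mem (hle hh)) (hle hg)) (inv_mem hf)
      exact (mem_fixingSubgroup_iff _).1 hmem t ht
  rw [← mul_inv_eq_one.1 hone]
  exact mul_mem (inv_mem hh) hg

end Spine

/-! ### Dyadic intervals and dyadic piecewise linear maps -/

/-- The standard dyadic interval `[c * 2 ^ e, (c + 1) * 2 ^ e]`. -/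
noncomputable def dyadicInterval (e c : ℤ) : ℝ × ℝ := (c * 2 ^ e, (c + 1) * 2 ^ e)

theorem dyadicInterval_fst_lt_snd (e c : ℤ) : (dyadicInterval e c).1 < (dyadicInterval e c).2 := by
  simp only [dyadicInterval]
  gcongr
  exact lt_add_one _

theorem lowerHalf_dyadicInterval (e c : ℤ) :
    lowerHalf (dyadicInterval e c) = dyadicInterval (e - 1) (2 * c) := by
  ext <;> simp only [lowerHalf, dyadicInterval, zpow_sub_one₀ (two_ne_zero' ℝ)] <;>
    push_cast <;> ring

theorem upperHalf_dyadicInterval (e c : ℤ) :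
    upperHalf (dyadicInterval e c) = dyadicInterval (e - 1) (2 * c + 1) := by
  ext <;> simp only [upperHalf, dyadicInterval, zpow_sub_one₀ (two_ne_zero' ℝ)] <;>
    push_cast <;> ring

theorem mapsAffinely_dyadicInterval_iff {f : ℝ ≃o ℝ} {e c e' c' : ℤ} :
    MapsAffinely f (dyadicInterval e c) (dyadicInterval e' c') ↔
      ∀ t ∈ Icc (dyadicInterval e c).1 (dyadicInterval e c).2,
        f t = 2 ^ (e' - e) * t + (c' - c) * 2 ^ e' := by
  have hpow : (2 : ℝ) ^ (e' - e) * 2 ^ e = 2 ^ e' := by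
    rw [← zpow_add₀ two_ne_zero, sub_add_cancel]
  refine ⟨fun hf t ht => ?_, fun hf => .of_eqOn (dyadicInterval_fst_lt_snd e c).le hf ?_ ?_⟩
  · obtain ⟨s, hs, rfl⟩ := exists_lineMap_eq ht
    rw [hf s hs]
    simp only [dyadicInterval, AffineMap.lineMap_apply_ring', ← hpow]
    ring
  all_goals simp only [dyadicInterval, ← hpow]; ring

theorem MapsAffinely.exists_dyadicInterval_sub {f : ℝ ≃o ℝ} {e c e' c' : ℤ}
    (hf : MapsAffinely f (dyadicInterval e c) (dyadicInterval e' c')) (d : ℕ) (i : ℤ)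
    (hi : i / 2 ^ d = c) :
    ∃ j, MapsAffinely f (dyadicInterval (e - d) i) (dyadicInterval (e' - d) j) := by
  induction d generalizing i with
  | zero => exact ⟨c', by simpa [← hi] using hf⟩
  | succ d ih =>
    obtain ⟨j, hj⟩ := ih (i / 2) (by rw [Int.ediv_ediv_of_nonneg two_pos.le, ← pow_succ', hi])
    have hlower := hj.lowerHalf
    have hupper := hj.upperHalf
    simp only [lowerHalf_dyadicInterval, upperHalf_dyadicInterval, sub_sub] at hlower hupper
    push_cast
    rcases Int.emod_two_eq_zero_or_one i with hi | hi
    · exact ⟨2 * j, by convert hlower using 2; omega⟩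
    · exact ⟨2 * j + 1, by convert hupper using 2; omega⟩

theorem mem_dyadicInterval_floor (e : ℤ) (y : ℝ) :
    y ∈ Ico (dyadicInterval e ⌊y / 2 ^ e⌋).1 (dyadicInterval e ⌊y / 2 ^ e⌋).2 := by
  have h2 : (0 : ℝ) < 2 ^ e := by positivity
  exact ⟨(le_div_iff₀ h2).1 (Int.floor_le _), (div_lt_iff₀ h2).1 (Int.lt_floor_add_one _)⟩

theorem mem_dyadicInterval_ceil (e : ℤ) (y : ℝ) :
    y ∈ Ioc (dyadicInterval e (⌈y / 2 ^ e⌉ - 1)).1 (dyadicInterval e (⌈y / 2 ^ e⌉ - 1)).2 := by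
  have h2 : (0 : ℝ) < 2 ^ e := by positivity
  simp only [dyadicInterval, mem_Ioc, ← lt_div_iff₀ h2, ← div_le_iff₀ h2]
  push_cast
  exact ⟨by linarith [Int.ceil_lt_add_one (y / 2 ^ e)], by linarith [Int.le_ceil (y / 2 ^ e)]⟩

theorem ediv_eq_of_midpoint_mem {e e' c c' : ℤ} {d : ℕ} (hd : e + d = e')
    (h : ((c : ℝ) + 1 / 2) * 2 ^ e ∈ Ico (dyadicInterval e' c').1 (dyadicInterval e' c').2) :
    c / 2 ^ d = c' := by
  have hpow : (2 : ℝ) ^ e' = 2 ^ d * 2 ^ e := by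
    rw [← hd, add_comm, zpow_add₀ two_ne_zero, zpow_natCast]
  have h2 : (0 : ℝ) < 2 ^ e := by positivity
  simp only [dyadicInterval, hpow, ← mul_assoc, mem_Ico, mul_le_mul_iff_left₀ h2,
    mul_lt_mul_iff_left₀ h2] at h
  have hle : c' * 2 ^ d ≤ c := by
    have : ((c' * 2 ^ d : ℤ) : ℝ) < (c + 1 : ℤ) := by push_cast; linarith [h.1]
    exact Int.lt_add_one_iff.1 (by exact_mod_cast this)
  have hlt : c < (c' + 1) * 2 ^ d := by
    have : (c : ℝ) < ((c' + 1) * 2 ^ d : ℤ) := by push_cast; linarith [h.2]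
    exact_mod_cast this
  have h2d : (0 : ℤ) < 2 ^ d := by positivity
  exact le_antisymm (Int.lt_add_one_iff.1 ((Int.ediv_lt_iff_lt_mul h2d).2 hlt))
    ((Int.le_ediv_iff_mul_le h2d).2 hle)

/-- A homeomorphism of the line is dyadic piecewise linear if it maps all sufficiently small
standard dyadic intervals affinely onto standard dyadic intervals, with uniformly bounded slopes. -/
def IsDyadicPL (f : ℝ ≃o ℝ) : Prop :=
  ∃ z K : ℤ, ∀ e ≤ z, ∀ c, ∃ e' c',
    |e' - e| ≤ K ∧ MapsAffinely f (dyadicInterval e c) (dyadicInterval e' c')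

namespace IsDyadicPL

variable {f g : ℝ ≃o ℝ}

theorem one : IsDyadicPL 1 :=
  ⟨0, 0, fun e _ c => ⟨e, c, by simp, fun _ _ => rfl⟩⟩

theorem mul (hf : IsDyadicPL f) (hg : IsDyadicPL g) : IsDyadicPL (f * g) := by
  obtain ⟨y, K, hf⟩ := hf
  obtain ⟨z, L, hg⟩ := hg
  refine ⟨min z (y - L), K + L, fun e he c => ?_⟩
  obtain ⟨e', c', he', hgc⟩ := hg e (by omega) c
  obtain ⟨e'', c'', he'', hfc⟩ := hf e' (by grind) c'
  exact ⟨e'', c'', by grind, hfc.mul hgc⟩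

theorem inv (hf : IsDyadicPL f) : IsDyadicPL f⁻¹ := by
  obtain ⟨z, K, hf⟩ := hf
  refine ⟨z - K, K, fun e he c => ?_⟩
  set y := f⁻¹ (((c : ℝ) + 1 / 2) * 2 ^ e)
  have hy := mem_dyadicInterval_floor z y
  obtain ⟨e', c', he', hfc⟩ := hf z le_rfl ⌊y / 2 ^ z⌋
  have hfy : f y ∈ Ico (dyadicInterval e' c').1 (dyadicInterval e' c').2 := by
    rw [← hfc.map_fst, ← hfc.map_snd]
    exact ⟨f.monotone hy.1, f.strictMono hy.2⟩
  obtain ⟨d, hd⟩ := Int.le.dest (show e ≤ e' by grind)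
  obtain ⟨j, hj⟩ := hfc.inv.exists_dyadicInterval_sub d c
    (ediv_eq_of_midpoint_mem hd (by simpa only [y, RelIso.apply_inv_self] using hfy))
  exact ⟨z - d, j, by grind, by convert hj using 2; omega⟩

end IsDyadicPL

theorem isDyadic_zero : IsDyadic 0 := ⟨0, 0, by simp⟩

theorem isDyadic_zpow (k : ℤ) : IsDyadic (2 ^ k) := by
  obtain ⟨n, rfl | rfl⟩ := k.eq_nat_or_neg
  exacts [⟨2 ^ n, 0, by simp⟩, ⟨1, n, by simp⟩]

namespace IsDyadic

variable {x y : ℝ}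

theorem neg (hx : IsDyadic x) : IsDyadic (-x) := by
  obtain ⟨a, b, rfl⟩ := hx
  exact ⟨-a, b, by push_cast; ring⟩

theorem add (hx : IsDyadic x) (hy : IsDyadic y) : IsDyadic (x + y) := by
  obtain ⟨a, b, rfl⟩ := hx
  obtain ⟨c, d, rfl⟩ := hy
  exact ⟨a * 2 ^ d + c * 2 ^ b, b + d, by push_cast; rw [pow_add]; field_simp⟩

theorem sub (hx : IsDyadic x) (hy : IsDyadic y) : IsDyadic (x - y) :=
  sub_eq_add_neg x y ▸ hx.add hy.neg

theorem mul (hx : IsDyadic x) (hy : IsDyadic y) : IsDyadic (x * y) := by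
  obtain ⟨a, b, rfl⟩ := hx
  obtain ⟨c, d, rfl⟩ := hy
  exact ⟨a * c, b + d, by push_cast; rw [pow_add]; field_simp⟩

end IsDyadic

theorem IsDyadic.eventually_exists_eq {x : ℝ} (hx : IsDyadic x) :
    ∀ᶠ e : ℤ in atBot, ∃ m : ℤ, x = m * 2 ^ e := by
  obtain ⟨a, b, rfl⟩ := hx
  filter_upwards [eventually_le_atBot (-(b : ℤ))] with e he
  obtain ⟨d, hd⟩ := Int.le.dest he
  refine ⟨a * 2 ^ d, ?_⟩
  push_cast
  rw [mul_assoc, ← zpow_natCast (2 : ℝ) d, ← zpow_add₀ two_ne_zero, show (d : ℤ) + e = -b by omega,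
    zpow_neg, zpow_natCast, div_eq_mul_inv]

theorem IsDyadic.eventually_le_or_le {x : ℝ} (hx : IsDyadic x) :
    ∀ᶠ e in atBot, ∀ c, x ≤ (dyadicInterval e c).1 ∨ (dyadicInterval e c).2 ≤ x := by
  filter_upwards [hx.eventually_exists_eq] with e ⟨m, hm⟩ c
  have h2 : (0 : ℝ) < 2 ^ e := by positivity
  simp only [hm, dyadicInterval, mul_le_mul_iff_left₀ h2]
  exact_mod_cast le_or_gt m c

theorem isDyadicPL_of_finite {f : ℝ ≃o ℝ} {P : Set (ℤ × ℝ)} (hP : P.Finite)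
    (hdyadic : ∀ p ∈ P, IsDyadic p.2)
    (hf : ∀ᶠ e in atBot, ∀ c, ∃ p ∈ P, ∀ t ∈ Icc (dyadicInterval e c).1 (dyadicInterval e c).2,
      f t = 2 ^ p.1 * t + p.2) : IsDyadicPL f := by
  obtain ⟨K, hK⟩ := (hP.image fun p => |p.1|).bddAbove
  have hm : ∀ᶠ e : ℤ in atBot, ∀ p ∈ P, ∃ m : ℤ, p.2 = m * 2 ^ (e + p.1) :=
    (eventually_all_finite hP).2 fun p hp =>
      (tendsto_atBot_add_const_right _ p.1 tendsto_id).eventually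
        (hdyadic p hp).eventually_exists_eq
  obtain ⟨z, hz⟩ := eventually_atBot.1 (hf.and hm)
  refine ⟨z, K, fun e he c => ?_⟩
  obtain ⟨p, hp, hfp⟩ := (hz e he).1 c
  obtain ⟨m, hm⟩ := (hz e he).2 p hp
  refine ⟨e + p.1, c + m, by simpa using hK (mem_image_of_mem _ hp),
    mapsAffinely_dyadicInterval_iff.2 fun t ht => ?_⟩
  rw [hfp t ht, hm]
  simp

theorem isDyadicPL_rot {I : ℝ × ℝ} (h₁ : IsDyadic I.1) (h₂ : IsDyadic I.2) :
    IsDyadicPL (rot I) := by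
  have hquarter : IsDyadic ((I.2 - I.1) / 4) := by
    convert (h₂.sub h₁).mul (isDyadic_zpow (-2)) using 1
    norm_num [div_eq_mul_inv]
  have hhalf {x : ℝ} (hx : IsDyadic x) : IsDyadic (x / 2) := by
    convert hx.mul (isDyadic_zpow (-1)) using 1
    norm_num [div_eq_mul_inv]
  refine isDyadicPL_of_finite (P := {(0, 0), (1, -I.1), (0, (I.2 - I.1) / 4), (-1, I.2 / 2)})
    (toFinite _) ?_ ?_
  · rintro p (rfl | rfl | rfl | rfl)
    exacts [isDyadic_zero, h₁.neg, hquarter, hhalf h₂]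
  filter_upwards [h₁.eventually_le_or_le, (h₁.add hquarter).eventually_le_or_le,
    (hhalf (h₁.add h₂)).eventually_le_or_le, h₂.eventually_le_or_le] with e ha hq hm hb c
  by_cases hout : (dyadicInterval e c).2 ≤ I.1 ∨ I.2 ≤ (dyadicInterval e c).1
  · refine ⟨(0, 0), by simp, fun t ht => ?_⟩
    simpa using rot_of_notMem fun ht' => by grind
  · specialize ha c; specialize hq c; specialize hm c; specialize hb c
    rcases hq with hq | hq
    · rcases hm with hm | hm
      · refine ⟨(-1, I.2 / 2), by simp, fun t ht => ?_⟩
        rw [rot_second_half (by grind), zpow_neg_one]; ring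
      · refine ⟨(0, (I.2 - I.1) / 4), by simp, fun t ht => ?_⟩
        rw [rot_second_quarter (by grind), zpow_zero, one_mul]
    · refine ⟨(1, -I.1), by simp, fun t ht => ?_⟩
      rw [rot_first_quarter (by grind), zpow_one, sub_eq_add_neg]

/-! ### Thompson's group as a subgroup of the homeomorphisms of the line -/

/-- Thompson's group `F`: the dyadic piecewise linear homeomorphisms of the line that fix every
point outside `(0, 1)`. -/
def thompsonF : Subgroup (ℝ ≃o ℝ) where
  carrier := {f | IsDyadicPL f ∧ f ∈ fixingSubgroup (ℝ ≃o ℝ) (Ioo (0 : ℝ) 1)ᶜ}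
  one_mem' := ⟨.one, one_mem _⟩
  mul_mem' hf hg := ⟨hf.1.mul hg.1, mul_mem hf.2 hg.2⟩
  inv_mem' hf := ⟨hf.1.inv, inv_mem hf.2⟩

theorem mem_fixingSubgroup_compl_Ioo_iff {f : ℝ ≃o ℝ} {a b : ℝ} :
    f ∈ fixingSubgroup (ℝ ≃o ℝ) (Ioo a b)ᶜ ↔ ∀ t, t ∉ Icc a b → f t = t := by
  rw [mem_fixingSubgroup_iff, ← interior_Icc, ← closure_compl]
  exact ⟨fun h t ht => h t (subset_closure ht),
    fun h => EqOn.closure (f := f) (g := id) h f.continuous continuous_id⟩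

theorem fixingSubgroup_compl_Ioo_mono {a b c d : ℝ} (hca : c ≤ a) (hbd : b ≤ d) :
    fixingSubgroup (ℝ ≃o ℝ) (Ioo a b)ᶜ ≤ fixingSubgroup (ℝ ≃o ℝ) (Ioo c d)ᶜ :=
  fixingSubgroup_antitone _ _ (compl_subset_compl.2 (Ioo_subset_Ioo hca hbd))

theorem rot_mem_fixingSubgroup (I : ℝ × ℝ) :
    rot I ∈ fixingSubgroup (ℝ ≃o ℝ) (Ioo I.1 I.2)ᶜ :=
  (mem_fixingSubgroup_iff _).2 fun _ ht => rot_of_notMem ht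

theorem rot_mem_thompsonF {I : ℝ × ℝ} (h₁ : IsDyadic I.1) (h₂ : IsDyadic I.2) (h₀ : 0 ≤ I.1)
    (h₁' : I.2 ≤ 1) : rot I ∈ thompsonF :=
  ⟨isDyadicPL_rot h₁ h₂, fixingSubgroup_compl_Ioo_mono h₀ h₁' (rot_mem_fixingSubgroup I)⟩

theorem inThompsonF_of_mem {f : ℝ ≃o ℝ} (hf : f ∈ thompsonF) : InThompsonF f := by
  obtain ⟨⟨z, _, hz⟩, hfix⟩ := hf
  set n := (-z).toNat
  refine ⟨mem_fixingSubgroup_compl_Ioo_iff.1 hfix, 2 ^ n, fun i => i / 2 ^ n, by simp, by simp,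
    fun i j hij => by dsimp only; gcongr; exact hij, fun i => ⟨i, n, by simp⟩, fun i => ?_⟩
  obtain ⟨e', c', -, hfi⟩ := hz (-n) (by omega) i
  refine ⟨_, _, fun t ht => mapsAffinely_dyadicInterval_iff.1 hfi t ?_⟩
  simpa [dyadicInterval, div_eq_mul_inv] using ht

theorem exists_le_and_le_succ_of_forall {α : Type*} [Preorder α] {m : ℕ} {x : Fin (m + 1) → α}
    {l r : α} (h : ∀ i, x i ≤ l ∨ r ≤ x i) (h₀ : x 0 ≤ l) :
    x (Fin.last m) ≤ l ∨ ∃ i : Fin m, x i.castSucc ≤ l ∧ r ≤ x i.succ := by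
  suffices ∀ i, x i ≤ l ∨ ∃ i : Fin m, x i.castSucc ≤ l ∧ r ≤ x i.succ from this _
  intro i
  induction i using Fin.induction with
  | zero => exact .inl h₀
  | succ i ih => exact ih.elim (fun hi => (h i.succ).imp_right fun hr => ⟨i, hi, hr⟩) .inr

theorem isDyadic_apply_of_pieces {f : ℝ → ℝ} {m : ℕ} {x : Fin (m + 1) → ℝ} {k : Fin m → ℤ}
    {c : Fin m → ℝ} (hx : Monotone x) (hdyadic : ∀ i, IsDyadic (x i)) (h₀ : IsDyadic (f (x 0)))
    (hf : ∀ i : Fin m, ∀ t ∈ Icc (x i.castSucc) (x i.succ), f t = 2 ^ k i * t + c i)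
    (i : Fin (m + 1)) : IsDyadic (f (x i)) := by
  induction i using Fin.induction with
  | zero => exact h₀
  | succ i ih =>
    have hi := hx i.castSucc_lt_succ.le
    rw [show f (x i.succ) = f (x i.castSucc) + 2 ^ k i * (x i.succ - x i.castSucc) by
      rw [hf i _ (right_mem_Icc.2 hi), hf i _ (left_mem_Icc.2 hi)]; ring]
    exact ih.add ((isDyadic_zpow _).mul ((hdyadic _).sub (hdyadic _)))

theorem InThompsonF.isDyadicPL {f : ℝ ≃o ℝ} (hf : InThompsonF f) : IsDyadicPL f := by
  obtain ⟨hfix, m, x, hx₀, hx₁, hx, hdyadic, hpiece⟩ := hf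
  rw [← mem_fixingSubgroup_compl_Ioo_iff, mem_fixingSubgroup_iff] at hfix
  choose k c hkc using hpiece
  have hf₀ : f 0 = 0 := hfix 0 (by simp)
  have hfdyadic := isDyadic_apply_of_pieces hx.monotone hdyadic
    (by simpa only [hx₀, hf₀] using isDyadic_zero) hkc
  refine isDyadicPL_of_finite (P := insert (0, 0) (range fun i => (k i, c i))) (toFinite _) ?_ ?_
  · rintro _ (rfl | ⟨i, rfl⟩)
    · exact isDyadic_zero
    · have hi := hkc i _ (left_mem_Icc.2 (hx i.castSucc_lt_succ).le)
      change IsDyadic (c i)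
      rw [eq_sub_of_add_eq' hi.symm]
      exact (hfdyadic _).sub ((isDyadic_zpow _).mul (hdyadic _))
  filter_upwards [eventually_all.2 fun i => (hdyadic i).eventually_le_or_le] with e he d
  have hout (h : ∀ t ∈ Icc (dyadicInterval e d).1 (dyadicInterval e d).2, t ∉ Ioo (0 : ℝ) 1) :
      ∃ p ∈ insert (0, 0) (range fun i => (k i, c i)),
        ∀ t ∈ Icc (dyadicInterval e d).1 (dyadicInterval e d).2, f t = 2 ^ p.1 * t + p.2 :=
    ⟨(0, 0), .inl rfl, fun t ht => by simpa using hfix t (h t ht)⟩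
  rcases he 0 d with h₀ | h₀
  · rcases exists_le_and_le_succ_of_forall (he · d) h₀ with h₁ | ⟨i, hl, hr⟩
    · exact hout fun t ht ht' => by grind
    · exact ⟨(k i, c i), .inr ⟨i, rfl⟩, fun t ht => hkc i t ⟨hl.trans ht.1, ht.2.trans hr⟩⟩
  · exact hout fun t ht ht' => by grind

theorem mem_thompsonF {f : ℝ ≃o ℝ} : f ∈ thompsonF ↔ InThompsonF f :=
  ⟨inThompsonF_of_mem, fun hf => ⟨hf.isDyadicPL, mem_fixingSubgroup_compl_Ioo_iff.2 hf.1⟩⟩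

/-! ### Elements supported in a dyadic interval -/

theorem dyadicInterval_fst_inj {e c c' : ℤ} :
    (dyadicInterval e c).1 = (dyadicInterval e c').1 ↔ c = c' := by
  simp [dyadicInterval, zpow_ne_zero]

theorem dyadicInterval_snd (e c : ℤ) : (dyadicInterval e c).2 = (dyadicInterval e c).1 + 2 ^ e := by
  simp only [dyadicInterval]
  ring

theorem le_of_dyadicInterval_fst_eq_odd {e c e' c' : ℤ}
    (h : (dyadicInterval e c).1 = (dyadicInterval e' (2 * c' + 1)).1) : e ≤ e' := by
  by_contra! hlt
  obtain ⟨d, rfl⟩ := Int.le.dest (Int.add_one_le_iff.2 hlt)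
  have h2 : (2 : ℝ) ^ e' ≠ 0 := by positivity
  have hpow : (2 : ℝ) ^ (e' + 1 + d) = 2 * 2 ^ d * 2 ^ e' := by
    rw [zpow_add₀ two_ne_zero, zpow_add₀ two_ne_zero, zpow_one, zpow_natCast]; ring
  simp only [dyadicInterval, hpow, ← mul_assoc, mul_left_inj' h2] at h
  have hodd : c * 2 * 2 ^ d = 2 * c' + 1 := by exact_mod_cast h
  have : c * 2 * 2 ^ d = 2 * (c * 2 ^ d) := by ring
  omega

theorem exists_pieces_eq_map_range' {z : ℤ} {e c : ℕ → ℤ} (hz : ∀ i, z ≤ e i)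
    (hadj : ∀ i, (dyadicInterval (e i) (c i)).2 = (dyadicInterval (e (i + 1)) (c (i + 1))).1)
    {E C : ℤ} {j : ℕ} (hle : e j ≤ E)
    (hj : (dyadicInterval (e j) (c j)).1 = (dyadicInterval E C).1) :
    ∃ S n, pieces (dyadicInterval E C) S =
        (List.range' j n).map (fun i => dyadicInterval (e i) (c i)) ∧
      (dyadicInterval (e (j + n)) (c (j + n))).1 = (dyadicInterval E C).2 := by
  obtain ⟨d, hd⟩ := Int.le.dest ((hz j).trans hle)
  induction d generalizing E C j with
  | zero =>
    obtain rfl : e j = E := le_antisymm hle (by simpa [← hd] using hz j)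
    obtain rfl := dyadicInterval_fst_inj.1 hj
    exact ⟨.nil, 1, rfl, (hadj j).symm⟩
  | succ d ih =>
    rcases hle.eq_or_lt with rfl | hlt
    · obtain rfl := dyadicInterval_fst_inj.1 hj
      exact ⟨.nil, 1, rfl, (hadj j).symm⟩
    have hmid : (dyadicInterval (E - 1) (2 * C)).2 = (dyadicInterval (E - 1) (2 * C + 1)).1 := by
      simp [dyadicInterval]
    obtain ⟨S, n, hS, hn⟩ := ih (j := j) (E := E - 1) (C := 2 * C) (by omega)
      (by rw [hj, ← lowerHalf_dyadicInterval]; rfl) (by omega)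
    obtain ⟨T, m, hT, hm⟩ := ih (j := j + n) (E := E - 1) (C := 2 * C + 1)
      (le_of_dyadicInterval_fst_eq_odd (hn.trans hmid)) (hn.trans hmid) (by omega)
    refine ⟨S △ T, n + m, ?_, ?_⟩
    · rw [pieces, lowerHalf_dyadicInterval, upperHalf_dyadicInterval, hS, hT, ← List.map_append,
        List.range'_append_1]
    · rw [← add_assoc, hm, ← upperHalf_dyadicInterval]; rfl

theorem exists_forall₂_pieces_of_adjacent {f : ℝ ≃o ℝ} {z z' : ℤ} {e c e' c' : ℕ → ℤ}
    (hz : ∀ i, z ≤ e i) (hz' : ∀ i, z' ≤ e' i)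
    (hadj : ∀ i, (dyadicInterval (e i) (c i)).2 = (dyadicInterval (e (i + 1)) (c (i + 1))).1)
    (hf : ∀ i, MapsAffinely f (dyadicInterval (e i) (c i)) (dyadicInterval (e' i) (c' i)))
    {E C : ℤ} (hle : e 0 ≤ E) (hfst : (dyadicInterval (e 0) (c 0)).1 = (dyadicInterval E C).1)
    (h₁ : f (dyadicInterval E C).1 = (dyadicInterval E C).1)
    (h₂ : f (dyadicInterval E C).2 = (dyadicInterval E C).2) :
    ∃ S T, List.Forall₂ (MapsAffinely f) (pieces (dyadicInterval E C) S)
      (pieces (dyadicInterval E C) T) := by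
  have hadj' (i : ℕ) : (dyadicInterval (e' i) (c' i)).2 =
      (dyadicInterval (e' (i + 1)) (c' (i + 1))).1 := by
    rw [← (hf i).map_snd, ← (hf (i + 1)).map_fst, hadj]
  have hfst' : (dyadicInterval (e' 0) (c' 0)).1 = (dyadicInterval E C).1 := by
    rw [← (hf 0).map_fst, hfst, h₁]
  have hle' : e' 0 ≤ E := by
    have hsnd : (dyadicInterval (e' 0) (c' 0)).2 ≤ (dyadicInterval E C).2 := by
      rw [← (hf 0).map_snd, ← h₂, f.le_iff_le, dyadicInterval_snd, dyadicInterval_snd, hfst]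
      gcongr
      exact one_le_two
    rwa [dyadicInterval_snd, dyadicInterval_snd, hfst', add_le_add_iff_left,
      zpow_le_zpow_iff_right₀ one_lt_two] at hsnd
  obtain ⟨S, m, hS, hm⟩ := exists_pieces_eq_map_range' hz hadj hle hfst
  obtain ⟨T, n, hT, hn⟩ := exists_pieces_eq_map_range' hz' hadj' hle' hfst'
  obtain rfl : m = n := by
    have hmono : StrictMono fun i => (dyadicInterval (e i) (c i)).1 :=
      strictMono_nat_of_lt_succ fun i => hadj i ▸ dyadicInterval_fst_lt_snd (e i) (c i)
    rw [zero_add] at hm hn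
    refine hmono.injective (hm.trans (f.injective ?_))
    rw [h₂, (hf n).map_fst, hn]
  refine ⟨S, T, ?_⟩
  rw [hS, hT, List.forall₂_map_left_iff, List.forall₂_map_right_iff, List.forall₂_same]
  exact fun i _ => hf i

theorem IsDyadicPL.exists_forall₂_pieces {f : ℝ ≃o ℝ} (hf : IsDyadicPL f) {E C : ℤ}
    (h₁ : f (dyadicInterval E C).1 = (dyadicInterval E C).1)
    (h₂ : f (dyadicInterval E C).2 = (dyadicInterval E C).2) :
    ∃ S T, List.Forall₂ (MapsAffinely f) (pieces (dyadicInterval E C) S)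
      (pieces (dyadicInterval E C) T) := by
  obtain ⟨z, K, hf⟩ := hf
  obtain ⟨d, hd⟩ := Int.le.dest (min_le_left E z)
  set e := min E z
  have hpow : (2 : ℝ) ^ E = 2 ^ d * 2 ^ e := by
    rw [← hd, add_comm, zpow_add₀ two_ne_zero, zpow_natCast]
  choose e' c' he' hf' using fun i : ℕ => hf e (min_le_right E z) (C * 2 ^ d + i)
  refine exists_forall₂_pieces_of_adjacent (z := e) (z' := e - K) (e := fun _ => e)
    (fun _ => le_rfl) (fun i => by grind) (fun i => ?_) hf' (min_le_left E z) ?_ h₁ h₂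
  · simp only [dyadicInterval]; push_cast; ring
  · simp only [dyadicInterval, hpow]; push_cast; ring

theorem mem_spineGroup_dyadicInterval {f : ℝ ≃o ℝ} (hf : IsDyadicPL f) {E C : ℤ}
    (hfix : f ∈ fixingSubgroup (ℝ ≃o ℝ) (Ioo (dyadicInterval E C).1 (dyadicInterval E C).2)ᶜ) :
    f ∈ spineGroup (dyadicInterval E C) := by
  have hfix' := (mem_fixingSubgroup_iff _).1 hfix
  obtain ⟨S, T, hST⟩ := hf.exists_forall₂_pieces (hfix' _ fun h => h.1.false)
    (hfix' _ fun h => h.2.false)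
  exact mem_spineGroup_of_forall₂_pieces (dyadicInterval_fst_lt_snd E C) hfix hST

/-! ### Slopes at the endpoints -/

theorem MapsAffinely.exists_eq_zpow_mul {f : ℝ ≃o ℝ} {e c e' c' : ℤ}
    (hf : MapsAffinely f (dyadicInterval e c) (dyadicInterval e' c')) :
    ∃ k : ℤ, ∀ s ∈ Icc (dyadicInterval e c).1 (dyadicInterval e c).2,
      ∀ t ∈ Icc (dyadicInterval e c).1 (dyadicInterval e c).2, f t = f s + 2 ^ k * (t - s) := by
  rw [mapsAffinely_dyadicInterval_iff] at hf
  exact ⟨e' - e, fun s hs t ht => by rw [hf s hs, hf t ht]; ring⟩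

theorem IsDyadicPL.exists_zpow_eventually_nhdsGE {f : ℝ ≃o ℝ} (hf : IsDyadicPL f) (p : ℝ) :
    ∃ k : ℤ, ∀ᶠ t in 𝓝[≥] p, f t = f p + 2 ^ k * (t - p) := by
  obtain ⟨z, _, hz⟩ := hf
  obtain ⟨_, _, -, hpiece⟩ := hz z le_rfl ⌊p / 2 ^ z⌋
  obtain ⟨k, hk⟩ := hpiece.exists_eq_zpow_mul
  have hp := mem_dyadicInterval_floor z p
  refine ⟨k, ?_⟩
  filter_upwards [Icc_mem_nhdsGE hp.2] with t ht
  exact hk p (Ico_subset_Icc_self hp) t ⟨hp.1.trans ht.1, ht.2⟩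

theorem IsDyadicPL.exists_zpow_eventually_nhdsLE {f : ℝ ≃o ℝ} (hf : IsDyadicPL f) (p : ℝ) :
    ∃ k : ℤ, ∀ᶠ t in 𝓝[≤] p, f t = f p + 2 ^ k * (t - p) := by
  obtain ⟨z, _, hz⟩ := hf
  obtain ⟨_, _, -, hpiece⟩ := hz z le_rfl (⌈p / 2 ^ z⌉ - 1)
  obtain ⟨k, hk⟩ := hpiece.exists_eq_zpow_mul
  have hp := mem_dyadicInterval_ceil z p
  refine ⟨k, ?_⟩
  filter_upwards [Icc_mem_nhdsLE hp.1] with t ht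
  exact hk p (Ioc_subset_Icc_self hp) t ⟨ht.1, ht.2.trans hp.2⟩

theorem apply_endpoint_of_mem_thompsonF {f : ℝ ≃o ℝ} (hf : f ∈ thompsonF) {p : ℝ}
    (hp : p = 0 ∨ p = 1) : f p = p :=
  (mem_fixingSubgroup_iff _).1 hf.2 p (by grind)

theorem mapsTo_Icc_of_mem_thompsonF {f : ℝ ≃o ℝ} (hf : f ∈ thompsonF) :
    MapsTo f (Icc 0 1) (Icc 0 1) := fun _ ht =>
  ⟨apply_endpoint_of_mem_thompsonF hf (.inl rfl) ▸ f.monotone ht.1,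
    (f.monotone ht.2).trans_eq (apply_endpoint_of_mem_thompsonF hf (.inr rfl))⟩

theorem exists_zpow_eventually_of_mem_thompsonF {f : ℝ ≃o ℝ} (hf : f ∈ thompsonF) {p : ℝ}
    (hp : p = 0 ∨ p = 1) :
    ∃ k : ℤ, ∀ᶠ t in 𝓝[Icc 0 1] p, f t = p + 2 ^ k * (t - p) := by
  have hfp := apply_endpoint_of_mem_thompsonF hf hp
  rcases hp with rfl | rfl
  · simpa [hfp, nhdsWithin_Icc_eq_nhdsGE] using hf.1.exists_zpow_eventually_nhdsGE 0
  · simpa [hfp, nhdsWithin_Icc_eq_nhdsLE] using hf.1.exists_zpow_eventually_nhdsLE 1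

theorem derivWithin_Icc_eq_of_eventually {f : ℝ → ℝ} {a b p q c : ℝ} (hab : a < b)
    (hp : p ∈ Icc a b) (hf : ∀ᶠ t in 𝓝[Icc a b] p, f t = q + c * (t - p)) :
    derivWithin f (Icc a b) p = c := by
  have hline : HasDerivWithinAt (fun t => q + c * (t - p)) c (Icc a b) p := by
    simpa using (((hasDerivWithinAt_id p _).sub_const p).const_mul c).const_add q
  exact (hline.congr_of_eventuallyEq hf (hf.self_of_nhdsWithin hp)).derivWithin
    (uniqueDiffOn_Icc hab p hp)

/-- The slope at the endpoint `p` of `[0, 1]`. -/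
noncomputable def endSlope {p : ℝ} (hp : p = 0 ∨ p = 1) : thompsonF →* ℝ where
  toFun f := derivWithin (f : ℝ ≃o ℝ) (Icc 0 1) p
  map_one' := derivWithin_Icc_eq_of_eventually one_pos (by grind) (q := p) (by simp)
  map_mul' f g := by
    have hp' : p ∈ Icc (0 : ℝ) 1 := by grind
    obtain ⟨k, hk⟩ := exists_zpow_eventually_of_mem_thompsonF f.2 hp
    obtain ⟨l, hl⟩ := exists_zpow_eventually_of_mem_thompsonF g.2 hp
    have hg : Tendsto (g : ℝ ≃o ℝ) (𝓝[Icc 0 1] p) (𝓝[Icc 0 1] p) := by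
      have hcont := (g : ℝ ≃o ℝ).continuous.continuousWithinAt (s := Icc 0 1) (x := p)
      simpa only [apply_endpoint_of_mem_thompsonF g.2 hp]
        using hcont.tendsto_nhdsWithin (mapsTo_Icc_of_mem_thompsonF g.2)
    rw [derivWithin_Icc_eq_of_eventually one_pos hp' hk,
      derivWithin_Icc_eq_of_eventually one_pos hp' hl]
    refine derivWithin_Icc_eq_of_eventually one_pos hp' (q := p) ?_
    filter_upwards [hl, hg.eventually hk] with t hlt hkt
    rw [Subgroup.coe_mul, RelIso.mul_apply, hkt, hlt]
    ring

theorem endSlope_eq_iff {p : ℝ} (hp : p = 0 ∨ p = 1) {f : thompsonF} {c : ℝ} :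
    endSlope hp f = c ↔ ∀ᶠ t in 𝓝[Icc 0 1] p, (f : ℝ ≃o ℝ) t = p + c * (t - p) := by
  have hderiv {c : ℝ} (hc : ∀ᶠ t in 𝓝[Icc 0 1] p, (f : ℝ ≃o ℝ) t = p + c * (t - p)) :
      endSlope hp f = c := derivWithin_Icc_eq_of_eventually one_pos (by grind) hc
  refine ⟨?_, hderiv⟩
  obtain ⟨k, hk⟩ := exists_zpow_eventually_of_mem_thompsonF f.2 hp
  rintro rfl
  rwa [hderiv hk]

theorem exists_endSlope_eq_zpow {p : ℝ} (hp : p = 0 ∨ p = 1) (f : thompsonF) :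
    ∃ k : ℤ, endSlope hp f = 2 ^ k :=
  (exists_zpow_eventually_of_mem_thompsonF f.2 hp).imp fun _ => (endSlope_eq_iff hp).2

/-- The subgroup `H` of Thompson's group, given by the equality of the slopes at `0` and `1`. -/
noncomputable def thompsonH : Subgroup (ℝ ≃o ℝ) :=
  ((endSlope (.inl rfl)).eqLocus (endSlope (.inr rfl))).map thompsonF.subtype

theorem endSlope_zero_eq_iff {f : thompsonF} {c : ℝ} :
    endSlope (.inl rfl) f = c ↔ ∃ ε > 0, ∀ t ∈ Icc 0 ε, (f : ℝ ≃o ℝ) t = c * t := by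
  rw [endSlope_eq_iff, nhdsWithin_Icc_eq_nhdsGE one_pos, Filter.Eventually,
    mem_nhdsGE_iff_exists_Icc_subset]
  simp [subset_def]

theorem endSlope_one_eq_iff {f : thompsonF} {c : ℝ} :
    endSlope (.inr rfl) f = c ↔ ∃ ε > 0, ∀ t ∈ Icc (1 - ε) 1, (f : ℝ ≃o ℝ) t = 1 + c * (t - 1) := by
  rw [endSlope_eq_iff, nhdsWithin_Icc_eq_nhdsLE one_pos, Filter.Eventually,
    mem_nhdsLE_iff_exists_Icc_subset]
  refine ⟨fun ⟨l, hl, h⟩ => ⟨1 - l, sub_pos.2 hl, by simpa [subset_def] using h⟩,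
    fun ⟨ε, hε, h⟩ => ⟨1 - ε, sub_lt_self 1 hε, h⟩⟩

theorem mem_thompsonH_iff {f : ℝ ≃o ℝ} : f ∈ thompsonH ↔
    ∃ hf : f ∈ thompsonF, endSlope (.inl rfl) ⟨f, hf⟩ = endSlope (.inr rfl) ⟨f, hf⟩ := by
  simp only [thompsonH, Subgroup.mem_map, Subgroup.subtype_apply, Subtype.exists, exists_and_right,
    exists_eq_right]
  rfl

theorem mem_thompsonH {f : ℝ ≃o ℝ} : f ∈ thompsonH ↔ InH f := by
  rw [mem_thompsonH_iff]
  constructor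
  · rintro ⟨hf, heq⟩
    obtain ⟨k, hk⟩ := exists_endSlope_eq_zpow (.inl rfl) ⟨f, hf⟩
    obtain ⟨ε, hε, h₀⟩ := endSlope_zero_eq_iff.1 hk
    obtain ⟨δ, hδ, h₁⟩ := endSlope_one_eq_iff.1 (heq.symm.trans hk)
    exact ⟨mem_thompsonF.1 hf, k, min ε δ, lt_min hε hδ,
      fun t ht => h₀ t ⟨ht.1, ht.2.trans (min_le_left ε δ)⟩,
      fun t ht => h₁ t ⟨(sub_le_sub_left (min_le_right ε δ) 1).trans ht.1, ht.2⟩⟩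
  · rintro ⟨hf, k, ε, hε, h₀, h₁⟩
    exact ⟨mem_thompsonF.2 hf, (endSlope_zero_eq_iff.2 ⟨ε, hε, h₀⟩).trans
      (endSlope_one_eq_iff.2 ⟨ε, hε, h₁⟩).symm⟩

/-- The subgroup of Thompson's group given by the triviality of the slopes at `0` and `1`. These are
the elements with compact support in `(0, 1)`. -/
noncomputable def thompsonCompact : Subgroup (ℝ ≃o ℝ) :=
  ((endSlope (.inl rfl)).ker ⊓ (endSlope (.inr rfl)).ker).map thompsonF.subtype

theorem mem_thompsonCompact_iff {f : ℝ ≃o ℝ} : f ∈ thompsonCompact ↔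
    ∃ hf : f ∈ thompsonF, endSlope (.inl rfl) ⟨f, hf⟩ = 1 ∧ endSlope (.inr rfl) ⟨f, hf⟩ = 1 := by
  simp [thompsonCompact, MonoidHom.mem_ker]

theorem notMem_closure_support_iff {f : ℝ ≃o ℝ} {p : ℝ} :
    p ∉ closure {x | f x ≠ x} ↔ ∀ᶠ t in 𝓝 p, f t = t := by
  simp [mem_closure_iff_frequently]

theorem endSlope_eq_one_iff {p : ℝ} (hp : p = 0 ∨ p = 1) {f : thompsonF} :
    endSlope hp f = 1 ↔ ∀ᶠ t in 𝓝 p, (f : ℝ ≃o ℝ) t = t := by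
  simp only [endSlope_eq_iff, one_mul, add_sub_cancel, eventually_nhdsWithin_iff]
  refine eventually_congr (.of_forall fun t => ⟨fun h => ?_, fun h _ => h⟩)
  by_cases ht : t ∈ Icc (0 : ℝ) 1
  exacts [h ht, mem_fixingSubgroup_compl_Ioo_iff.1 f.2.2 t ht]

theorem mem_thompsonCompact {f : ℝ ≃o ℝ} :
    f ∈ thompsonCompact ↔ f ∈ thompsonF ∧ closure {x | f x ≠ x} ⊆ Ioo 0 1 := by
  simp only [mem_thompsonCompact_iff, endSlope_eq_one_iff, ← notMem_closure_support_iff,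
    exists_prop]
  refine and_congr_right fun hf => ⟨fun ⟨h₀, h₁⟩ x hx => ?_, fun h => ⟨fun h₀ => (h h₀).1.false,
    fun h₁ => (h h₁).2.false⟩⟩
  have hsub : closure {x | f x ≠ x} ⊆ Icc 0 1 := closure_minimal
    (fun t => not_imp_comm.1 (mem_fixingSubgroup_compl_Ioo_iff.1 hf.2 t)) isClosed_Icc
  exact ⟨(hsub hx).1.lt_of_ne fun h => h₀ (h ▸ hx), (hsub hx).2.lt_of_ne fun h => h₁ (h ▸ hx)⟩

theorem exists_mem_fixingSubgroup_of_mem_thompsonCompact {f : ℝ ≃o ℝ} (hf : f ∈ thompsonCompact) :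
    ∃ a b : ℝ, 0 < a ∧ a < b ∧ b < 1 ∧ f ∈ fixingSubgroup (ℝ ≃o ℝ) (Ioo a b)ᶜ := by
  obtain ⟨hF, h₀, h₁⟩ := mem_thompsonCompact_iff.1 hf
  obtain ⟨l, a, ha, hla⟩ := mem_nhds_iff_exists_Ioo_subset.1 ((endSlope_eq_one_iff _).1 h₀)
  obtain ⟨b, u, hb, hbu⟩ := mem_nhds_iff_exists_Ioo_subset.1 ((endSlope_eq_one_iff _).1 h₁)
  have hmin : min a (1 / 3) < max b (2 / 3) :=
    (min_le_right _ _).trans_lt (lt_of_lt_of_le (by norm_num) (le_max_right _ _))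
  refine ⟨min a (1 / 3), max b (2 / 3), lt_min ha.2 (by norm_num), hmin, max_lt hb.1 (by norm_num),
    mem_fixingSubgroup_compl_Ioo_iff.2 fun t ht => ?_⟩
  by_cases h01 : t ∈ Icc (0 : ℝ) 1
  · rcases lt_or_ge t (min a (1 / 3)) with hta | hta
    · exact hla ⟨ha.1.trans_le h01.1, hta.trans_le (min_le_left _ _)⟩
    · have htb : max b (2 / 3) < t := lt_of_not_ge fun h => ht ⟨hta, h⟩
      exact hbu ⟨(le_max_left _ _).trans_lt htb, h01.2.trans_lt hb.2⟩
  · exact mem_fixingSubgroup_compl_Ioo_iff.1 hF.2 t h01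

theorem mem_thompsonCompact_of_mem_fixingSubgroup {f : ℝ ≃o ℝ} {a b : ℝ} (hf : f ∈ thompsonF)
    (ha : 0 < a) (hb : b < 1) (hfix : f ∈ fixingSubgroup (ℝ ≃o ℝ) (Ioo a b)ᶜ) :
    f ∈ thompsonCompact := by
  refine mem_thompsonCompact.2 ⟨hf, (closure_minimal ?_ isClosed_Icc).trans (Icc_subset_Ioo ha hb)⟩
  exact fun t => not_imp_comm.1 (mem_fixingSubgroup_compl_Ioo_iff.1 hfix t)

theorem thompsonCompact_le_thompsonH : thompsonCompact ≤ thompsonH :=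
  Subgroup.map_mono fun _ hf => hf.1.trans hf.2.symm

theorem thompsonH_le_thompsonF : thompsonH ≤ thompsonF := Subgroup.map_subtype_le _

theorem commutator_thompsonF_le : ⁅thompsonF, thompsonF⁆ ≤ thompsonCompact := by
  have hslope {p : ℝ} (hp : p = 0 ∨ p = 1) (f g : thompsonF) : endSlope hp ⁅f, g⁆ = 1 := by
    have hf := map_mul_eq_one (endSlope hp) (mul_inv_cancel f)
    have hg := map_mul_eq_one (endSlope hp) (mul_inv_cancel g)
    simp only [commutatorElement_def, map_mul]
    rw [mul_right_comm _ _ (endSlope hp f⁻¹), hf, one_mul, hg]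
  rw [← Subgroup.map_subtype_commutator, thompsonCompact]
  exact Subgroup.map_mono (Subgroup.commutator_le.2 fun f _ g _ => ⟨hslope _ f g, hslope _ f g⟩)

/-! ### Attracting elements -/

theorem le_rot (I : ℝ × ℝ) (t : ℝ) : t ≤ rot I t := by
  rw [rot_apply]
  exact le_max_left _ _

theorem eventually_lt_rot_pow {I : ℝ × ℝ} {x y : ℝ} (hx : I.1 < x) (hy : y < I.2) :
    ∀ᶠ n : ℕ in atTop, y < (rot I ^ n) x := by
  rcases le_or_gt I.2 x with hIx | hIx
  · have hfix (n : ℕ) : (rot I ^ n) x = x :=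
      (mem_fixingSubgroup_iff _).1 (pow_mem (rot_mem_fixingSubgroup I) n) x fun h => h.2.not_ge hIx
    exact .of_forall fun n => (hfix n).symm ▸ hy.trans_le hIx
  have hmono : Monotone fun n : ℕ => (rot I ^ n) x :=
    monotone_nat_of_le_succ fun n => by rw [pow_succ', RelIso.mul_apply]; exact le_rot I _
  have hle (n : ℕ) : (rot I ^ n) x ≤ I.2 := by
    have hfix : (rot I ^ n) I.2 = I.2 :=
      (mem_fixingSubgroup_iff _).1 (pow_mem (rot_mem_fixingSubgroup I) n) _ fun h => h.2.false
    exact hfix ▸ (rot I ^ n).monotone hIx.le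
  have hlim := tendsto_atTop_ciSup hmono ⟨I.2, forall_mem_range.2 hle⟩
  set l := ⨆ n : ℕ, (rot I ^ n) x
  have hfixed : rot I l = l := by
    refine tendsto_nhds_unique ?_ ((tendsto_add_atTop_iff_nat 1).2 hlim)
    simpa only [pow_succ', RelIso.mul_apply, Function.comp_def]
      using ((rot I).continuous.tendsto l).comp hlim
  have hxl : x ≤ l := hmono.ge_of_tendsto hlim 0
  have hl : I.2 ≤ l := le_of_not_gt fun h => (lt_rot ⟨hx.trans_le hxl, h⟩).ne' hfixed
  exact hlim.eventually_const_lt (hy.trans_le hl)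

/-- A homeomorphism supported in `(a, b)` that attracts every point of `(a, b)` to `p`. -/
noncomputable def attractor (a p b : ℝ) : ℝ ≃o ℝ := rot (a, p) * (rot (p, b))⁻¹

section Attractor

theorem commute_rot (a p b : ℝ) : Commute (rot (a, p)) (rot (p, b)) := by
  ext t
  rw [RelIso.mul_apply, RelIso.mul_apply]
  rcases le_total t p with ht | ht
  · have hle : rot (a, p) t ≤ p :=
      ((rot (a, p)).monotone ht).trans_eq (rot_of_right_le le_rfl)
    rw [rot_of_le_left (I := (p, b)) ht, rot_of_le_left (I := (p, b)) hle]
  · rw [rot_of_right_le (I := (a, p)) ht,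
      rot_of_right_le (I := (a, p)) (ht.trans (le_rot (p, b) t))]

variable {a b p : ℝ}

theorem eventually_attractor_pow_mem {u v x : ℝ} (hx : x ∈ Ioo a b)
    (huv : p ∈ Ioo u v) : ∀ᶠ n : ℕ in atTop, (attractor a p b ^ n) x ∈ Ioo u v := by
  have hpow (n : ℕ) : attractor a p b ^ n = rot (a, p) ^ n * (rot (p, b) ^ n)⁻¹ := by
    rw [attractor, (commute_rot a p b).inv_right.mul_pow, inv_pow]
  have hleft {t : ℝ} (ht : p ≤ t) (n : ℕ) : (rot (a, p) ^ n) t = t :=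
    (mem_fixingSubgroup_iff _).1 (pow_mem (rot_mem_fixingSubgroup (a, p)) n) t
      fun h => h.2.not_ge ht
  have hright {t : ℝ} (ht : t ≤ p) (n : ℕ) : (rot (p, b) ^ n)⁻¹ t = t :=
    (mem_fixingSubgroup_iff _).1 (inv_mem (pow_mem (rot_mem_fixingSubgroup (p, b)) n)) t
      fun h => h.1.not_ge ht
  simp only [hpow, RelIso.mul_apply]
  rcases le_total x p with hxp | hpx
  · filter_upwards [eventually_lt_rot_pow (I := (a, p)) hx.1 huv.1] with n hn
    rw [hright hxp]
    exact ⟨hn, (((rot (a, p) ^ n).monotone hxp).trans_eq (hleft le_rfl n)).trans_lt huv.2⟩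
  · filter_upwards [eventually_lt_rot_pow (I := (p, b)) huv.2 hx.2] with n hn
    have hmem : (rot (p, b) ^ n)⁻¹ x ∈ Ico p v := by
      refine ⟨(hright le_rfl n).symm.trans_le (OrderIso.monotone _ hpx), ?_⟩
      rwa [← (rot (p, b) ^ n).lt_iff_lt, RelIso.apply_inv_self]
    rw [hleft hmem.1]
    exact ⟨huv.1.trans_le hmem.1, hmem.2⟩

theorem eventually_mapsTo_attractor_pow {u v x y : ℝ} (hx : x ∈ Ioo a b) (hy : y ∈ Ioo a b)
    (huv : p ∈ Ioo u v) : ∀ᶠ n : ℕ in atTop, MapsTo (attractor a p b ^ n) (Ioo x y) (Ioo u v) := by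
  filter_upwards [eventually_attractor_pow_mem hx huv, eventually_attractor_pow_mem hy huv]
    with n hnx hny
  exact (OrderIso.strictMono _).mapsTo_Ioo.mono_right (Ioo_subset_Ioo hnx.1.le hny.2.le)

theorem attractor_mem_thompsonF (ha : IsDyadic a) (hp : IsDyadic p) (hb : IsDyadic b)
    (h₀ : 0 ≤ a) (h₁ : b ≤ 1) (hpab : p ∈ Ioo a b) : attractor a p b ∈ thompsonF :=
  mul_mem (rot_mem_thompsonF ha hp h₀ (hpab.2.le.trans h₁))
    (inv_mem (rot_mem_thompsonF hp hb (h₀.trans hpab.1.le) h₁))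

theorem attractor_mem_fixingSubgroup (hp : p ∈ Ioo a b) :
    attractor a p b ∈ fixingSubgroup (ℝ ≃o ℝ) (Ioo a b)ᶜ :=
  mul_mem (fixingSubgroup_compl_Ioo_mono le_rfl hp.2.le (rot_mem_fixingSubgroup (a, p)))
    (inv_mem (fixingSubgroup_compl_Ioo_mono hp.1.le le_rfl (rot_mem_fixingSubgroup (p, b))))

theorem attractor_apply_near_left (hap : a ≤ p) {t : ℝ} (ht : t ∈ Icc a (a + (p - a) / 4)) :
    attractor a p b t = 2 * t - a := by
  have hfix : (rot (p, b))⁻¹ t = t := by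
    rw [← (rot (p, b)).injective.eq_iff, RelIso.apply_inv_self, rot_of_le_left]
    grind
  rw [attractor, RelIso.mul_apply, hfix, rot_first_quarter ht]

theorem attractor_apply_near_right (hpb : p ≤ b) {t : ℝ} (ht : t ∈ Icc (b - (b - p) / 4) b) :
    attractor a p b t = 2 * t - b := by
  have hinv : (rot (p, b))⁻¹ t = 2 * t - b := by
    rw [← (rot (p, b)).injective.eq_iff, RelIso.apply_inv_self, rot_second_half (by grind)]
    ring
  rw [attractor, RelIso.mul_apply, hinv, rot_of_right_le]
  grind

end Attractor

theorem exists_isDyadic_between {x y : ℝ} (hxy : x < y) : ∃ d ∈ Ioo x y, IsDyadic d := by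
  obtain ⟨n, hn⟩ := exists_pow_lt_of_lt_one (sub_pos.2 hxy) one_half_lt_one
  have hx := mem_dyadicInterval_floor (-n) x
  have hpow : (2 : ℝ) ^ (-n : ℤ) < y - x := by simpa using hn
  refine ⟨_, ⟨hx.2, ?_⟩, ⌊x / 2 ^ (-n : ℤ)⌋ + 1, n, by simp [dyadicInterval, div_eq_mul_inv]⟩
  linarith [hx.1, dyadicInterval_snd (-n) ⌊x / 2 ^ (-n : ℤ)⌋]

theorem exists_mem_thompsonCompact_mapsTo {x y u v : ℝ} (hx : 0 < x) (hxy : x < y) (hy : y < 1)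
    (hu : 0 ≤ u) (huv : u < v) (hv : v ≤ 1) :
    ∃ k ∈ thompsonCompact, MapsTo k (Ioo x y) (Ioo u v) := by
  obtain ⟨p, hp, hp'⟩ := exists_isDyadic_between huv
  obtain ⟨a, ha, ha'⟩ := exists_isDyadic_between (lt_min hx (hu.trans_lt hp.1))
  obtain ⟨b, hb, hb'⟩ := exists_isDyadic_between (max_lt hy (hp.2.trans_le hv))
  rw [mem_Ioo, lt_min_iff] at ha
  rw [mem_Ioo, max_lt_iff] at hb
  have hpab : p ∈ Ioo a b := ⟨ha.2.2, hb.1.2⟩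
  obtain ⟨n, hn⟩ := (eventually_mapsTo_attractor_pow ⟨ha.2.1, hxy.trans hb.1.1⟩
    ⟨ha.2.1.trans hxy, hb.1.1⟩ hp).exists
  exact ⟨_, pow_mem (mem_thompsonCompact_of_mem_fixingSubgroup
    (attractor_mem_thompsonF ha' hp' hb' ha.1.le hb.2.le hpab) ha.1 hb.2
    (attractor_mem_fixingSubgroup hpab)) n, hn⟩

/-! ### Higman's simplicity criterion -/

theorem conj_mem_fixingSubgroup_compl_of_mapsTo {G α : Type*} [Group G] [MulAction G α]
    {U V : Set α} {f k : G} (hf : f ∈ fixingSubgroup G Uᶜ) (hk : MapsTo (k • ·) U V) :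
    k * f * k⁻¹ ∈ fixingSubgroup G Vᶜ :=
  fixingSubgroup_antitone G α (compl_subset_compl.2 hk.image_subset)
    (conj_mem_fixingSubgroup smul_set_compl hf)

section Higman

variable {G α : Type*} [Group G] [MulAction G α] [FaithfulSMul G α]

theorem commute_of_mem_fixingSubgroup_of_disjoint {U V : Set α} (hUV : Disjoint U V) {f h : G}
    (hf : f ∈ fixingSubgroup G Uᶜ) (hh : h ∈ fixingSubgroup G Vᶜ) : Commute f h := by
  rw [mem_fixingSubgroup_iff] at hf hh
  have hmaps {W : Set α} {k : G} (hk : ∀ y ∈ Wᶜ, k • y = y) {x : α} (hx : x ∈ W) : k • x ∈ W := by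
    by_contra h
    exact h ((smul_left_cancel k (hk _ h)).symm ▸ hx)
  refine FaithfulSMul.eq_of_smul_eq_smul (α := α) fun x => ?_
  rw [mul_smul, mul_smul]
  by_cases hxU : x ∈ U
  · rw [hh x (hUV.notMem_of_mem_left hxU), hh _ (hUV.notMem_of_mem_left (hmaps hf hxU))]
  · by_cases hxV : x ∈ V
    · rw [hf x hxU, hf _ (hUV.notMem_of_mem_right (hmaps hh hxV))]
    · rw [hh x hxV, hf x hxU, hh x hxV]

theorem commutatorElement_mem_of_disjoint_smul {N : Subgroup G} [N.Normal] {g : G} (hg : g ∈ N)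
    {U : Set α} (hU : Disjoint U (g • U)) {f h : G} (hf : f ∈ fixingSubgroup G Uᶜ)
    (hh : h ∈ fixingSubgroup G Uᶜ) : ⁅f, h⁆ ∈ N := by
  have hfg : g * f⁻¹ * g⁻¹ ∈ fixingSubgroup G (g • U)ᶜ :=
    conj_mem_fixingSubgroup (smul_set_compl) (inv_mem hf)
  have hcomm : (g * f⁻¹ * g⁻¹) * h = h * (g * f⁻¹ * g⁻¹) :=
    (commute_of_mem_fixingSubgroup_of_disjoint hU hh hfg).symm.eq
  have hmem : ⁅f, g⁆ ∈ N := Subgroup.commutator_le_right ⊤ N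
    (Subgroup.commutator_mem_commutator (Subgroup.mem_top f) hg)
  -- `⁅f, g⁆` is `f` times an element commuting with `h`, so `f` and `⁅f, g⁆` have the same
  -- commutator with `h`.
  have heq : ⁅f, h⁆ = ⁅⁅f, g⁆, h⁆ := by
    have hf' : ⁅f, g⁆ = f * (g * f⁻¹ * g⁻¹) := by simp only [commutatorElement_def, mul_assoc]
    rw [commutatorElement_def ⁅f, g⁆, hf', mul_assoc f, hcomm, commutatorElement_def]
    group
  rw [heq]
  exact Subgroup.commutator_le_left N ⊤
    (Subgroup.commutator_mem_commutator hmem (Subgroup.mem_top h))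

theorem isSimpleGroup_of_forall_exists_conj_mem_fixingSubgroup [Nontrivial G]
    (hperfect : commutator G = ⊤)
    (hconj : ∀ g : G, g ≠ 1 → ∃ U : Set α, Disjoint U (g • U) ∧ ∀ f h : G, ∃ k : G,
      k * f * k⁻¹ ∈ fixingSubgroup G Uᶜ ∧ k * h * k⁻¹ ∈ fixingSubgroup G Uᶜ) :
    IsSimpleGroup G where
  eq_bot_or_eq_top_of_normal N hN := by
    refine or_iff_not_imp_left.2 fun hbot => ?_
    obtain ⟨g, hg, hg1⟩ := N.bot_or_exists_ne_one.resolve_left hbot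
    obtain ⟨U, hU, hk⟩ := hconj g hg1
    rw [eq_top_iff, ← hperfect, commutator_def, Subgroup.commutator_le]
    intro f _ h _
    obtain ⟨k, hf, hh⟩ := hk f h
    have hmem := commutatorElement_mem_of_disjoint_smul hg hU hf hh
    rwa [← conjugate_commutatorElement, hN.mem_comm_iff, inv_mul_cancel_left] at hmem

end Higman

/-! ### The commutator subgroup -/

theorem rot_mem_commutator_thompsonCompact {I : ℝ × ℝ} (hI : I.1 < I.2) (h₁ : IsDyadic I.1)
    (h₂ : IsDyadic I.2) (hleft : 0 < 2 * I.1 - I.2) (hright : 2 * I.2 - I.1 < 1) :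
    rot I ∈ ⁅thompsonCompact, thompsonCompact⁆ := by
  have hrot (J : ℝ × ℝ) (hJ₁ : IsDyadic J.1) (hJ₂ : IsDyadic J.2) (h₀ : 0 < J.1) (h₁ : J.2 < 1) :
      rot J ∈ thompsonCompact :=
    mem_thompsonCompact_of_mem_fixingSubgroup (rot_mem_thompsonF hJ₁ hJ₂ h₀.le h₁.le) h₀ h₁
      (rot_mem_fixingSubgroup J)
  have hlower := (mapsAffinely_rot_lowerHalf_lowerHalf (I := (I.1, 2 * I.2 - I.1)) (by grind)).inv
  have hupper := mapsAffinely_rot_upperHalf (I := (2 * I.1 - I.2, I.2)) (by grind)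
  have hlower_eq : lowerHalf (I.1, 2 * I.2 - I.1) = I := by ext <;> simp [lowerHalf]
  have hupper_eq : upperHalf (2 * I.1 - I.2, I.2) = I := by ext <;> simp [upperHalf]
  rw [hlower_eq] at hlower
  rw [hupper_eq] at hupper
  refine rot_mem_commutator hI (hrot I h₁ h₂ (by linarith) (by linarith))
    (inv_mem (hrot (I.1, 2 * I.2 - I.1) h₁ ?_ (by grind) (by grind)))
    (hrot (2 * I.1 - I.2, I.2) ?_ h₂ (by grind) (by grind)) hlower hupper
  · simpa only [two_mul] using (h₂.add h₂).sub h₁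
  · simpa only [two_mul] using (h₁.add h₁).sub h₂

/-- The interval `[1/2, 5/8]`, into which we compress the supports of the elements of
`thompsonCompact`. Any dyadic interval inside `(0, 1)` with room for two adjacent copies of itself
would do. -/
noncomputable def coreInterval : ℝ × ℝ := dyadicInterval (-3) 4

theorem coreInterval_eq : coreInterval = (1 / 2, 5 / 8) := by
  ext <;> norm_num [coreInterval, dyadicInterval]

theorem coreInterval_fst_lt_snd : coreInterval.1 < coreInterval.2 :=
  dyadicInterval_fst_lt_snd _ _

theorem midpoint_mem_coreInterval : 9 / 16 ∈ Ioo coreInterval.1 coreInterval.2 := by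
  norm_num [coreInterval_eq]

theorem upperHalf_coreInterval : upperHalf coreInterval = (9 / 16, 5 / 8) := by
  rw [coreInterval_eq]
  ext <;> norm_num [upperHalf]

theorem spineGroup_coreInterval_le :
    spineGroup coreInterval ≤ ⁅thompsonCompact, thompsonCompact⁆ := by
  rw [spineGroup_eq_closure coreInterval_fst_lt_snd, upperHalf_coreInterval,
    coreInterval_eq, Subgroup.closure_le, insert_subset_iff, singleton_subset_iff]
  constructor <;> refine rot_mem_commutator_thompsonCompact ?_ ?_ ?_ ?_ ?_ <;> norm_num
  · exact ⟨1, 1, by norm_num⟩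
  · exact ⟨5, 3, by norm_num⟩
  · exact ⟨9, 4, by norm_num⟩
  · exact ⟨5, 3, by norm_num⟩

theorem conj_mem_spineGroup_coreInterval {f k : ℝ ≃o ℝ} {a b : ℝ} (hf : f ∈ thompsonF)
    (hk : k ∈ thompsonF) (hfix : f ∈ fixingSubgroup (ℝ ≃o ℝ) (Ioo a b)ᶜ)
    (hmaps : MapsTo k (Ioo a b) (Ioo coreInterval.1 coreInterval.2)) :
    k * f * k⁻¹ ∈ spineGroup coreInterval :=
  mem_spineGroup_dyadicInterval (mul_mem (mul_mem hk hf) (inv_mem hk)).1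
    (conj_mem_fixingSubgroup_compl_of_mapsTo hfix hmaps)

theorem conj_mem_iff_of_mem {G : Type*} [Group G] {K : Subgroup G} {f k : G} (hk : k ∈ K) :
    k * f * k⁻¹ ∈ K ↔ f ∈ K := by
  rw [K.mul_mem_cancel_right (inv_mem hk), K.mul_mem_cancel_left hk]

theorem thompsonCompact_le_commutator :
    thompsonCompact ≤ ⁅thompsonCompact, thompsonCompact⁆ := by
  intro f hf
  obtain ⟨a, b, ha, hab, hb, hfix⟩ := exists_mem_fixingSubgroup_of_mem_thompsonCompact hf
  obtain ⟨k, hk, hmaps⟩ : ∃ k ∈ thompsonCompact,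
      MapsTo k (Ioo a b) (Ioo coreInterval.1 coreInterval.2) := by
    rw [coreInterval_eq]
    exact exists_mem_thompsonCompact_mapsTo ha hab hb (by norm_num) (by norm_num) (by norm_num)
  have hle := thompsonCompact_le_thompsonH.trans thompsonH_le_thompsonF
  have hconj := spineGroup_coreInterval_le
    (conj_mem_spineGroup_coreInterval (hle hf) (hle hk) hfix hmaps)
  have hcomm : ⁅k, f⁆ ∈ ⁅thompsonCompact, thompsonCompact⁆ :=
    Subgroup.commutator_mem_commutator hk hf
  rwa [← MulAut.conj_apply, conj_eq_commutatorElement_mul, Subgroup.mul_mem_cancel_left _ hcomm]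
    at hconj

theorem commutator_thompsonH_eq : ⁅thompsonH, thompsonH⁆ = thompsonCompact :=
  le_antisymm ((Subgroup.commutator_mono thompsonH_le_thompsonF thompsonH_le_thompsonF).trans
    commutator_thompsonF_le) (thompsonCompact_le_commutator.trans
      (Subgroup.commutator_mono thompsonCompact_le_thompsonH thompsonCompact_le_thompsonH))

theorem commutator_thompsonF_eq : ⁅thompsonF, thompsonF⁆ = thompsonCompact :=
  le_antisymm commutator_thompsonF_le (commutator_thompsonH_eq.ge.trans
    (Subgroup.commutator_mono thompsonH_le_thompsonF thompsonH_le_thompsonF))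

theorem commutator_thompsonCompact_eq_top : commutator thompsonCompact = ⊤ := by
  apply Subgroup.map_injective thompsonCompact.subtype_injective
  rw [Subgroup.map_subtype_commutator, ← MonoidHom.range_eq_map, Subgroup.range_subtype]
  exact le_antisymm (Subgroup.commutator_le_self _) thompsonCompact_le_commutator

theorem exists_Ioo_disjoint_smul {f : ℝ ≃o ℝ} (hf : f ∈ thompsonF) (hne : f ≠ 1) :
    ∃ u v : ℝ, 0 ≤ u ∧ u < v ∧ v ≤ 1 ∧ Disjoint (Ioo u v) (f • Ioo u v) := by
  obtain ⟨x, hx⟩ : ∃ x, f x ≠ x := by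
    contrapose! hne
    exact DFunLike.ext f 1 hne
  have hxI : x ∈ Icc (0 : ℝ) 1 := by
    contrapose! hx
    exact mem_fixingSubgroup_compl_Ioo_iff.1 hf.2 x hx
  have hfx := mapsTo_Icc_of_mem_thompsonF hf hxI
  have hsmul (u v : ℝ) : f • Ioo u v = Ioo (f u) (f v) := f.image_Ioo u v
  simp only [hsmul]
  rcases hx.lt_or_gt with hlt | hlt
  · exact ⟨f x, x, hfx.1, hlt, hxI.2, by rw [Set.disjoint_left]; grind⟩
  · exact ⟨x, f x, hxI.1, hlt, hfx.2, by rw [Set.disjoint_left]; grind⟩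

theorem isSimpleGroup_thompsonCompact : IsSimpleGroup thompsonCompact := by
  have hle := thompsonCompact_le_thompsonH.trans thompsonH_le_thompsonF
  have : FaithfulSMul thompsonCompact ℝ :=
    ⟨fun h => Subtype.ext (DFunLike.ext _ _ h)⟩
  have : Nontrivial thompsonCompact := by
    have hmem : rot coreInterval ∈ thompsonCompact :=
      Subgroup.commutator_le_self _ (spineGroup_coreInterval_le (rot_mem_spineGroup coreInterval))
    exact nontrivial_of_ne ⟨_, hmem⟩ 1 fun h =>
      (lt_rot midpoint_mem_coreInterval).ne' (DFunLike.congr_fun (congrArg Subtype.val h) _)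
  refine isSimpleGroup_of_forall_exists_conj_mem_fixingSubgroup (α := ℝ)
    commutator_thompsonCompact_eq_top fun g hg => ?_
  obtain ⟨u, v, hu, huv, hv, hdisj⟩ := exists_Ioo_disjoint_smul (hle g.2)
    fun h => hg (Subtype.ext h)
  refine ⟨Ioo u v, hdisj, fun f h => ?_⟩
  obtain ⟨a, b, ha, hab, hb, hf⟩ := exists_mem_fixingSubgroup_of_mem_thompsonCompact f.2
  obtain ⟨c, d, hc, -, hd, hh⟩ := exists_mem_fixingSubgroup_of_mem_thompsonCompact h.2
  obtain ⟨k, hk, hmaps⟩ := exists_mem_thompsonCompact_mapsTo (lt_min ha hc)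
    ((min_lt_of_left_lt hab).trans_le (le_max_left b d)) (max_lt hb hd) hu huv hv
  have hf' : f ∈ fixingSubgroup thompsonCompact (Ioo (min a c) (max b d))ᶜ :=
    fixingSubgroup_compl_Ioo_mono (min_le_left a c) (le_max_left b d) hf
  have hh' : h ∈ fixingSubgroup thompsonCompact (Ioo (min a c) (max b d))ᶜ :=
    fixingSubgroup_compl_Ioo_mono (min_le_right a c) (le_max_right b d) hh
  exact ⟨⟨k, hk⟩, conj_mem_fixingSubgroup_compl_of_mapsTo hf' hmaps,
    conj_mem_fixingSubgroup_compl_of_mapsTo hh' hmaps⟩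

/-! ### Three generators -/

/-- An element of `thompsonH` with slope `2` at the endpoints that attracts every point of `(0, 1)`
to the midpoint of `coreInterval`. -/
noncomputable def coreAttractor : ℝ ≃o ℝ := attractor 0 (9 / 16) 1

theorem coreAttractor_mem_thompsonF : coreAttractor ∈ thompsonF :=
  attractor_mem_thompsonF isDyadic_zero ⟨9, 4, by norm_num⟩ ⟨1, 0, by norm_num⟩ le_rfl le_rfl
    (by norm_num)

theorem endSlope_zero_coreAttractor :
    endSlope (.inl rfl) ⟨coreAttractor, coreAttractor_mem_thompsonF⟩ = 2 :=
  endSlope_zero_eq_iff.2 ⟨(9 / 16 - 0) / 4, by norm_num, fun t ht =>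
    (attractor_apply_near_left (by norm_num) (by simpa using ht)).trans (sub_zero _)⟩

theorem endSlope_one_coreAttractor :
    endSlope (.inr rfl) ⟨coreAttractor, coreAttractor_mem_thompsonF⟩ = 2 :=
  endSlope_one_eq_iff.2 ⟨(1 - 9 / 16) / 4, by norm_num, fun t ht =>
    (attractor_apply_near_right (by norm_num) ht).trans (by ring)⟩

theorem coreAttractor_mem_thompsonH : coreAttractor ∈ thompsonH :=
  mem_thompsonH_iff.2
    ⟨coreAttractor_mem_thompsonF, endSlope_zero_coreAttractor.trans endSlope_one_coreAttractor.symm⟩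

theorem thompsonCompact_le_of_coreAttractor_mem {K : Subgroup (ℝ ≃o ℝ)} (hattr : coreAttractor ∈ K)
    (hcore : spineGroup coreInterval ≤ K) : thompsonCompact ≤ K := by
  intro f hf
  obtain ⟨a, b, ha, hab, hb, hfix⟩ := exists_mem_fixingSubgroup_of_mem_thompsonCompact hf
  obtain ⟨n, hn⟩ := (eventually_mapsTo_attractor_pow ⟨ha, hab.trans hb⟩ ⟨ha.trans hab, hb⟩
    midpoint_mem_coreInterval).exists
  rw [← conj_mem_iff_of_mem (pow_mem hattr n)]
  exact hcore (conj_mem_spineGroup_coreInterval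
    (thompsonH_le_thompsonF (thompsonCompact_le_thompsonH hf))
    (pow_mem coreAttractor_mem_thompsonF n) hfix hn)

theorem exists_mul_coreAttractor_zpow_mem_thompsonCompact {f : ℝ ≃o ℝ} (hf : f ∈ thompsonH) :
    ∃ k : ℤ, f * coreAttractor ^ k ∈ thompsonCompact := by
  obtain ⟨hfF, hf⟩ := mem_thompsonH_iff.1 hf
  obtain ⟨k, hk⟩ := exists_endSlope_eq_zpow (.inl rfl) ⟨f, hfF⟩
  have hslope {p : ℝ} (hp : p = 0 ∨ p = 1) (hfp : endSlope hp ⟨f, hfF⟩ = 2 ^ k)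
      (hattr : endSlope hp ⟨coreAttractor, coreAttractor_mem_thompsonF⟩ = 2) :
      endSlope hp (⟨f, hfF⟩ * ⟨coreAttractor, coreAttractor_mem_thompsonF⟩ ^ (-k)) = 1 := by
    rw [map_mul, map_zpow, hfp, hattr, ← zpow_add₀ two_ne_zero, add_neg_cancel, zpow_zero]
  exact ⟨-k, mem_thompsonCompact_iff.2 ⟨mul_mem hfF (zpow_mem coreAttractor_mem_thompsonF _),
    hslope _ hk endSlope_zero_coreAttractor, hslope _ (hf ▸ hk) endSlope_one_coreAttractor⟩⟩

theorem closure_eq_thompsonH :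
    Subgroup.closure {coreAttractor, rot coreInterval, rot (upperHalf coreInterval)} =
      thompsonH := by
  rw [insert_eq, Subgroup.closure_union, ← Subgroup.zpowers_eq_closure,
    ← spineGroup_eq_closure coreInterval_fst_lt_snd]
  have hattr : coreAttractor ∈ Subgroup.zpowers coreAttractor ⊔ spineGroup coreInterval :=
    Subgroup.mem_sup_left (Subgroup.mem_zpowers coreAttractor)
  refine le_antisymm (sup_le (Subgroup.zpowers_le.2 coreAttractor_mem_thompsonH) ?_) fun f hf => ?_
  · exact (spineGroup_coreInterval_le.trans (Subgroup.commutator_le_self _)).trans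
      thompsonCompact_le_thompsonH
  · obtain ⟨k, hk⟩ := exists_mul_coreAttractor_zpow_mem_thompsonCompact hf
    exact (Subgroup.mul_mem_cancel_right _ (zpow_mem hattr k)).1
      (thompsonCompact_le_of_coreAttractor_mem hattr le_sup_right hk)

/-- The subgroup `H ≤ F` of elements whose slopes at `0` and `1`
coincide is generated by three elements, its commutator subgroup `H'` is simple, `H'`
consists precisely of the elements of `F` whose support has closure contained in the
open interval `(0,1)`, and `H' = F'`. -/
theorem H_three_generated_commutator_simple
    (F H : Subgroup (ℝ ≃o ℝ))
    (hF : ∀ f : ℝ ≃o ℝ, f ∈ F ↔ InThompsonF f)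
    (hH : ∀ f : ℝ ≃o ℝ, f ∈ H ↔ InH f) :
    (∃ ν₁ ν₂ ν₃ : ℝ ≃o ℝ, Subgroup.closure {ν₁, ν₂, ν₃} = H) ∧
    IsSimpleGroup ↥(commutator ↥H) ∧
    (∀ f : ℝ ≃o ℝ, f ∈ (commutator ↥H).map H.subtype ↔
      f ∈ F ∧ closure {x : ℝ | f x ≠ x} ⊆ Set.Ioo (0 : ℝ) 1) ∧
    (commutator ↥H).map H.subtype = (commutator ↥F).map F.subtype := by
  obtain rfl : F = thompsonF := Subgroup.ext fun f => (hF f).trans mem_thompsonF.symm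
  obtain rfl : H = thompsonH := Subgroup.ext fun f => (hH f).trans mem_thompsonH.symm
  have hcommH : (commutator thompsonH).map thompsonH.subtype = thompsonCompact := by
    rw [Subgroup.map_subtype_commutator, commutator_thompsonH_eq]
  have hcommF : (commutator thompsonF).map thompsonF.subtype = thompsonCompact := by
    rw [Subgroup.map_subtype_commutator, commutator_thompsonF_eq]
  refine ⟨⟨_, _, _, closure_eq_thompsonH⟩, ?_, fun f => ?_, hcommH.trans hcommF.symm⟩
  · have := isSimpleGroup_thompsonCompact
    have hequiv := (commutator thompsonH).equivMapOfInjective _ thompsonH.subtype_injective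
    rw [hcommH] at hequiv
    exact hequiv.isSimpleGroup
  · rw [hcommH, mem_thompsonCompact]
end
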